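/- arXiv:0807.1967 — 2 statements merged into one kernel-verified Lean document; each statement's English description precedes it below -/
import Mathlib

section
/- Let D ⊆ ℝ[X₁,…,Xₙ]\{0} be a multiplicatively closed set with 1 ∈ D, let E = D⁻¹ℝ[X₁,…,Xₙ], and let S ⊆ ℝ[X₁,…,Xₙ] be finite with K_S ≠ ∅. Assume there exist p ∈ D and an integer k ≥ 1 such that p ≥ 1 on K_S and k·p − (X₁²+⋯+Xₙ²) ≥ 0 on K_S. Then the closure of T_S^E in the topology of finitely open sets on E equals Pos^E(K_S). -/
/-!
The closure of the preordering `T` generated by the `gᵢ` in `E = D⁻¹ℝ[X]` is squeezed between two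
facts: `PosE` is closed, and every element `R` of `PosE` satisfies `R + ε w ∈ T` for a fixed `w` and
all `ε > 0`, so it is a limit of elements of `T` inside a two-dimensional subspace. Both facts rest
on a version of the Artin–Lang theorem, which is proved here from scratch.

*Transfer.* Call an ordered field with the intermediate value property for polynomials (`IVP`) real
closed. If two real closed fields induce the same order on a common subfield, then finitely many
polynomials in one variable over the subfield realise the same sign patterns in both
(`exists_same_signs`). The proof follows Cohen and Hörmander: the signs of `p` at the roots of other
polynomials are those of remainders of `p`, and between the roots of `p'` the polynomial `p` is
monotone. Adjoining coordinates one at a time gives `artin_lang`: a point over a real closed extension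
of `ℝ` can be replaced by a real point with the same signs of finitely many polynomials and the same
vanishing of countably many.

*Real closed points.* Every proper preordering is nonnegative under a homomorphism to a real closed
field (`exists_realClosed_point`); together with Artin–Lang this gives the Positivstellensatz
(`positivstellensatz`).

*Approximation.* The hypotheses on `p` and the Positivstellensatz yield a certificate in `T` that the
coordinates are bounded by a polynomial in `p²` (`growth_certificate`). Hence every element of
`ℝ[X][1/p]` becomes bounded by a constant after multiplication by a power of `1/p²`
(`exists_mul_pow_bounded`). On the algebra of bounded elements `T` is archimedean, and real
homomorphisms of that algebra not vanishing at `1/p²` are evaluations at points of `K`; the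
Kadison–Dubois theorem (`exists_real_hom`) then gives `exists_approximation`.

*Closedness.* In a finite-dimensional subspace all elements have a common denominator, but the
representation witnessing membership in `PosE` may need a further denominator for each term of a
convergent sequence. An ultrapower together with the countable vanishing clause of `artin_lang`
provides a single real point that avoids the zeros of all of them (`exists_common_point`), and there
the inequality passes to the limit (`isClosed_posE`).
-/

open MvPolynomial MeasureTheory

noncomputable section

/-- The Euclidean (weak) topology on a real vector space; for finite-dimensional
spaces this is the usual Euclidean topology. -/
def weakTop (V : Type*) [AddCommGroup V] [Module ℝ V] : TopologicalSpace V :=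
  ⨅ L : V →ₗ[ℝ] ℝ, TopologicalSpace.induced L inferInstance

/-- The topology of finitely open sets: `O` is open iff its intersection with every
finite-dimensional subspace `U` is open in the Euclidean topology of `U`. -/
def finTop (E : Type*) [AddCommGroup E] [Module ℝ E] : TopologicalSpace E where
  IsOpen O := ∀ U : Submodule ℝ E, FiniteDimensional ℝ U →
    @IsOpen _ (weakTop U) ((Subtype.val : U → E) ⁻¹' O)
  isOpen_univ := by
    intro U _
    letI := weakTop U
    rw [Set.preimage_univ]
    exact isOpen_univ
  isOpen_inter := by
    intro s t hs ht U hU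
    letI := weakTop U
    rw [Set.preimage_inter]
    exact (hs U hU).inter (ht U hU)
  isOpen_sUnion := by
    intro s hs U hU
    letI := weakTop U
    rw [Set.preimage_sUnion]
    exact isOpen_biUnion fun t ht => hs t ht U hU

/-- The closure of a convex cone in the finest locally convex topology, via the dual
characterization: `x` lies in the closure iff `L x ≥ 0` for every linear functional `L`
nonnegative on the cone. -/
def dualClosure {E : Type*} [AddCommGroup E] [Module ℝ E] (C : Set E) : Set E :=
  {x | ∀ L : E →ₗ[ℝ] ℝ, (∀ c ∈ C, 0 ≤ L c) → 0 ≤ L x}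

/-- The preordering generated by `g 1, …, g m` in a commutative ring: all finite sums
of elements `σ • g₁^ν₁ ⋯ g_m^ν_m` with `σ` a sum of squares and `ν ∈ {0,1}^m`. -/
def genPreordering {E : Type*} [CommRing E] {m : ℕ} (g : Fin m → E) : Set E :=
  {x | ∃ σ : (Fin m → Bool) → E, (∀ ν, IsSumSq (σ ν)) ∧
    x = ∑ ν : Fin m → Bool, σ ν * ∏ j, (if ν j then g j else 1)}

/-- The basic closed semialgebraic set determined by `g 1, …, g m`. -/
def KS {n m : ℕ} (g : Fin m → MvPolynomial (Fin n) ℝ) : Set (Fin n → ℝ) :=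
  {x | ∀ i, 0 ≤ eval x (g i)}

/-- The real zero set of a polynomial. -/
def Zset {n : ℕ} (d : MvPolynomial (Fin n) ℝ) : Set (Fin n → ℝ) :=
  {x | eval x d = 0}

/-- `Pos^E(𝒳)`: elements of the localization having a representation `f/d` with
`f·d ≥ 0 pointwise on 𝒳`. -/
def PosE {n : ℕ} (D : Submonoid (MvPolynomial (Fin n) ℝ)) (X : Set (Fin n → ℝ)) :
    Set (Localization D) :=
  {R | ∃ (f : MvPolynomial (Fin n) ℝ) (d : D), R = Localization.mk f d ∧
    ∀ x ∈ X, 0 ≤ eval x f * eval x (d : MvPolynomial (Fin n) ℝ)}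

namespace FinTopAux

/-! ### Polynomials over fields with the intermediate value property -/

/-- The intermediate value property for polynomials. For an ordered field it is equivalent to being
real closed, and it is the only form in which real closedness is used below. -/
def IVP (R : Type*) [Field R] [LinearOrder R] : Prop :=
  ∀ (p : Polynomial R) (a b : R), a < b → p.eval a < 0 → 0 < p.eval b →
    ∃ c, a < c ∧ c < b ∧ p.eval c = 0

section OneField

variable {R : Type*} [Field R] [LinearOrder R] [IsStrictOrderedRing R]

lemma IVP.exists_root (h : IVP R) {p : Polynomial R} {a b : R} (hab : a < b)
    (hp : p.eval a * p.eval b < 0) : ∃ c, a < c ∧ c < b ∧ p.eval c = 0 := by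
  rcases mul_neg_iff.1 hp with ⟨h1, h2⟩ | ⟨h1, h2⟩
  · obtain ⟨c, hc⟩ := h (-p) a b hab (by simpa using h1) (by simpa using h2)
    exact ⟨c, by simpa using hc⟩
  · exact h p a b hab h1 h2

lemma IVP.sign_eq (h : IVP R) {p : Polynomial R} {a b : R} (hab : a ≤ b)
    (hp : ∀ c, a ≤ c → c ≤ b → p.eval c ≠ 0) :
    SignType.sign (p.eval a) = SignType.sign (p.eval b) := by
  rcases hab.eq_or_lt with rfl | hlt
  · rfl
  have ha := hp a le_rfl hab
  have hb := hp b hab le_rfl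
  by_contra hne
  have : p.eval a * p.eval b < 0 := by
    rcases lt_or_gt_of_ne ha with ha | ha <;> rcases lt_or_gt_of_ne hb with hb | hb
    · simp [sign_neg ha, sign_neg hb] at hne
    · exact mul_neg_of_neg_of_pos ha hb
    · exact mul_neg_of_pos_of_neg ha hb
    · simp [sign_pos ha, sign_pos hb] at hne
  obtain ⟨c, h1, h2, h3⟩ := h.exists_root hlt this
  exact hp c h1.le h2.le h3

lemma IVP.rolle (h : IVP R) {p : Polynomial R} {a b : R} (hab : a < b)
    (ha : p.eval a = 0) (hb : p.eval b = 0) :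
    ∃ c, a < c ∧ c < b ∧ p.derivative.eval c = 0 := by
  classical
  by_cases hp : p = 0
  · exact ⟨(a + b) / 2, by linarith, by linarith, by simp [hp]⟩
  -- shrink the interval until `b` is the first root after `a`
  set S := p.roots.toFinset.filter (fun x => a < x) with hS
  have hbS : b ∈ S := by simp [hS, hp, hb, hab]
  set b' := S.min' ⟨b, hbS⟩ with hb'
  have hb'S : b' ∈ S := S.min'_mem _
  have hb'b : b' ≤ b := S.min'_le _ hbS
  obtain ⟨hb'root, hab'⟩ : p.eval b' = 0 ∧ a < b' := by
    have := hb'S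
    simp only [hS, Finset.mem_filter, Multiset.mem_toFinset, Polynomial.mem_roots hp] at this
    exact ⟨this.1, this.2⟩
  have hno : ∀ c, a < c → c < b' → p.eval c ≠ 0 := by
    intro c hc1 hc2 hc
    have : c ∈ S := by simp [hS, hp, hc, hc1]
    exact absurd (S.min'_le _ this) (not_le.2 hc2)
  clear_value b'
  suffices ∃ c, a < c ∧ c < b' ∧ p.derivative.eval c = 0 by
    obtain ⟨c, h1, h2, h3⟩ := this
    exact ⟨c, h1, h2.trans_le hb'b, h3⟩
  obtain ⟨q, hq, hqa⟩ := Polynomial.exists_eq_pow_rootMultiplicity_mul_and_not_dvd p hp a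
  have hq0 : q ≠ 0 := by rintro rfl; simp at hqa
  obtain ⟨r, hr, hrb⟩ := Polynomial.exists_eq_pow_rootMultiplicity_mul_and_not_dvd q hq0 b'
  have hm : 0 < p.rootMultiplicity a := (Polynomial.rootMultiplicity_pos hp).2 ha
  rw [Polynomial.dvd_iff_isRoot, Polynomial.IsRoot.def] at hqa hrb
  have hqb : q.eval b' = 0 := by
    have := hb'root
    rw [hq] at this
    simpa [sub_eq_zero, hab'.ne'] using this
  have hn : 0 < q.rootMultiplicity b' := (Polynomial.rootMultiplicity_pos hq0).2 hqb
  obtain ⟨m, hm'⟩ : ∃ m, p.rootMultiplicity a = m + 1 := ⟨_, (Nat.succ_pred_eq_of_pos hm).symm⟩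
  obtain ⟨n, hn'⟩ : ∃ n, q.rootMultiplicity b' = n + 1 := ⟨_, (Nat.succ_pred_eq_of_pos hn).symm⟩
  rw [hm'] at hq
  rw [hn'] at hr
  have hra : r.eval a ≠ 0 := by
    intro h0; apply hqa; rw [hr]; simp [h0]
  have hsign := h.sign_eq (p := r) hab'.le (by
    intro c h1 h2 h3
    rcases h1.eq_or_lt with rfl | h1
    · exact hra h3
    rcases h2.eq_or_lt with rfl | h2
    · exact hrb h3
    · exact hno c h1 h2 (by rw [hq, hr]; simp [h3]))
  set s : Polynomial R := Polynomial.C ((m : R) + 1) * (Polynomial.X - Polynomial.C b') * r +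
    Polynomial.C ((n : R) + 1) * (Polynomial.X - Polynomial.C a) * r +
    (Polynomial.X - Polynomial.C a) * (Polynomial.X - Polynomial.C b') * r.derivative with hs
  have hder : p.derivative =
      (Polynomial.X - Polynomial.C a) ^ m * (Polynomial.X - Polynomial.C b') ^ n * s := by
    rw [hq, hr, hs]
    simp only [Polynomial.derivative_mul, Polynomial.derivative_X_sub_C_pow]
    simp only [map_add, Polynomial.C_1, map_natCast, Nat.add_sub_cancel, Nat.cast_add,
      Nat.cast_one]
    ring
  have hneg : s.eval a * s.eval b' < 0 := by
    have e1 : s.eval a = ((m : R) + 1) * (a - b') * r.eval a := by simp [hs]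
    have e2 : s.eval b' = ((n : R) + 1) * (b' - a) * r.eval b' := by simp [hs]
    have hpos : 0 < r.eval a * r.eval b' := by
      rcases lt_or_gt_of_ne hra with h1 | h1
      · rw [sign_neg h1] at hsign
        exact mul_pos_of_neg_of_neg h1 (sign_eq_neg_one_iff.1 hsign.symm)
      · rw [sign_pos h1] at hsign
        exact mul_pos h1 (sign_eq_one_iff.1 hsign.symm)
    rw [e1, e2]
    have h3 : 0 < ((m : R) + 1) * ((n : R) + 1) * ((b' - a) * (b' - a)) *
        (r.eval a * r.eval b') := by
      have := sub_pos.2 hab'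
      positivity
    nlinarith [h3]
  obtain ⟨c, h1, h2, h3⟩ := h.exists_root hab' hneg
  exact ⟨c, h1, h2, by rw [hder]; simp [h3]⟩

lemma IVP.mvt (h : IVP R) (p : Polynomial R) {a b : R} (hab : a < b) :
    ∃ c, a < c ∧ c < b ∧ p.eval b - p.eval a = p.derivative.eval c * (b - a) := by
  obtain ⟨c, h1, h2, h3⟩ := h.rolle (p := (p - Polynomial.C (p.eval a)) * Polynomial.C (b - a) -
    Polynomial.C (p.eval b - p.eval a) * (Polynomial.X - Polynomial.C a)) hab (by simp)
    (by simp)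
  refine ⟨c, h1, h2, ?_⟩
  simp [Polynomial.derivative_mul] at h3
  linarith

lemma IVP.lt_of_deriv_pos (h : IVP R) {p : Polynomial R} {a b : R} (hab : a < b)
    (hp : ∀ c, a < c → c < b → 0 < p.derivative.eval c) : p.eval a < p.eval b := by
  obtain ⟨c, h1, h2, h3⟩ := h.mvt p hab
  have := mul_pos (hp c h1 h2) (sub_pos.2 hab)
  linarith

/-- A nonconstant polynomial with positive leading coefficient tends to infinity. The degree is
`n + 1`, and the induction on `n` divides out the variable. -/
lemma exists_large (n : ℕ) : ∀ (p : Polynomial R), p.natDegree = n + 1 → 0 < p.leadingCoeff →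
    ∀ A : R, ∃ M, ∀ y, M ≤ y → A ≤ p.eval y := by
  induction n with
  | zero =>
    intro p hp hl A
    obtain ⟨u, hu, v, rfl⟩ := Polynomial.natDegree_eq_one.1 hp
    have hl' : 0 < u := by
      rw [Polynomial.leadingCoeff_linear hu] at hl; exact hl
    refine ⟨(A - v) / u, fun y hy => ?_⟩
    rw [div_le_iff₀ hl'] at hy
    simp; linarith
  | succ n ih =>
    intro p hp hl A
    have hdeg : p.divX.natDegree = n + 1 := by rw [Polynomial.natDegree_divX_eq_natDegree_tsub_one, hp]; rfl
    have hlc : p.divX.leadingCoeff = p.leadingCoeff := by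
      rw [Polynomial.leadingCoeff, Polynomial.leadingCoeff, hdeg, hp, Polynomial.coeff_divX]
    obtain ⟨M, hM⟩ := ih p.divX hdeg (by rwa [hlc]) 1
    refine ⟨max (max M 0) (A - p.coeff 0), fun y hy => ?_⟩
    have h1 := hM y ((le_max_left _ _).trans ((le_max_left _ _).trans hy))
    have h2 : 0 ≤ y := (le_max_right _ _).trans ((le_max_left _ _).trans hy)
    have h3 : A - p.coeff 0 ≤ y := (le_max_right _ _).trans hy
    have h4 : p.eval y = p.divX.eval y * y + p.coeff 0 := by
      conv_lhs => rw [← Polynomial.divX_mul_X_add p]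
      simp
    rw [h4]
    nlinarith

/-- A nonconstant polynomial is unbounded to the right of every point. -/
lemma exists_upper (p : Polynomial R) (hp : p.natDegree ≠ 0) (m A : R) :
    ∃ y, m < y ∧ (A < p.eval y ∨ p.eval y < -A) := by
  obtain ⟨n, hn⟩ := Nat.exists_eq_succ_of_ne_zero hp
  have hp0 : p ≠ 0 := by rintro rfl; simp at hp
  rcases lt_or_gt_of_ne (Polynomial.leadingCoeff_ne_zero.2 hp0) with hl | hl
  · obtain ⟨M, hM⟩ := exists_large n (-p) (by simpa using hn) (by simpa using hl) (A + 1)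
    have := hM (max M (m + 1)) (le_max_left _ _)
    simp only [Polynomial.eval_neg] at this
    exact ⟨max M (m + 1), lt_of_lt_of_le (by linarith) (le_max_right _ _), Or.inr (by linarith)⟩
  · obtain ⟨M, hM⟩ := exists_large n p (by simpa using hn) hl (A + 1)
    have := hM (max M (m + 1)) (le_max_left _ _)
    exact ⟨max M (m + 1), lt_of_lt_of_le (by linarith) (le_max_right _ _), Or.inl (by linarith)⟩

/-- The open interval with optional end points `lo`, `hi`. -/
def gap (lo hi : Option R) : Set R := {y | (∀ l ∈ lo, l < y) ∧ ∀ u ∈ hi, y < u}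

lemma gap_convex {lo hi : Option R} {a b c : R} (ha : a ∈ gap lo hi) (hb : b ∈ gap lo hi)
    (h1 : a ≤ c) (h2 : c ≤ b) : c ∈ gap lo hi :=
  ⟨fun l hl => (ha.1 l hl).trans_le h1, fun u hu => h2.trans_lt (hb.2 u hu)⟩

lemma gap_no_max {lo hi : Option R} {a : R} (ha : a ∈ gap lo hi) : ∃ b ∈ gap lo hi, a < b := by
  cases hi with
  | none => exact ⟨a + 1, ⟨fun l hl => (ha.1 l hl).trans (by linarith), by simp⟩, by linarith⟩
  | some u =>
    have := ha.2 u rfl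
    refine ⟨(a + u) / 2, ⟨fun l hl => (ha.1 l hl).trans (by linarith), ?_⟩, by linarith⟩
    rintro _ ⟨⟩
    linarith

section Mono

variable {p : Polynomial R} {lo hi : Option R}

lemma IVP.gap_strictMono (h : IVP R) (hp : ∀ y ∈ gap lo hi, 0 < p.derivative.eval y) :
    StrictMonoOn (fun y => p.eval y) (gap lo hi) := fun _ ha _ hb hab =>
  h.lt_of_deriv_pos hab fun _ h1 h2 => hp _ (gap_convex ha hb h1.le h2.le)

lemma natDegree_ne_zero_of_deriv {y : R} (hy : p.derivative.eval y ≠ 0) : p.natDegree ≠ 0 := by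
  intro h0
  rw [Polynomial.eq_C_of_natDegree_eq_zero h0] at hy
  simp at hy

/-- A polynomial that increases on a gap takes a positive value there iff it is positive at the right
end point, an absent end point imposing no condition. The next two lemmas are the analogues for
negative and zero values: the signs realised in a gap depend only on the signs at its ends. -/
lemma IVP.gap_exists_pos (h : IVP R) (hp : ∀ y ∈ gap lo hi, 0 < p.derivative.eval y)
    (hne : (gap lo hi).Nonempty) :
    (∃ y ∈ gap lo hi, 0 < p.eval y) ↔ ∀ u ∈ hi, 0 < p.eval u := by
  obtain ⟨m, hm⟩ := hne
  constructor
  · rintro ⟨y, hy, hpy⟩ u hu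
    refine hpy.trans (h.lt_of_deriv_pos (hy.2 u hu) fun c h1 h2 => hp c ?_)
    refine ⟨fun l hl => (hy.1 l hl).trans h1, fun v hv => ?_⟩
    rwa [Option.mem_unique hv hu]
  · intro hu
    by_cases hpm : 0 < p.eval m
    · exact ⟨m, hm, hpm⟩
    cases hi with
    | none =>
      obtain ⟨y, hy, hy'⟩ := exists_upper p (natDegree_ne_zero_of_deriv (hp m hm).ne') m
        (|p.eval m|)
      have hyg : y ∈ gap lo none := ⟨fun l hl => (hm.1 l hl).trans hy, by simp⟩
      have hmono : p.eval m < p.eval y := h.gap_strictMono hp hm hyg hy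
      refine ⟨y, hyg, ?_⟩
      have h1 := abs_nonneg (p.eval m)
      have h2 := neg_abs_le (p.eval m)
      rcases hy' with h3 | h3 <;> linarith
    | some u =>
      have hpu := hu u rfl
      have hmu := hm.2 u rfl
      -- a point of `[m, u)` where `p` vanishes; `p` is positive to its right
      obtain ⟨c, hc1, hc2, hc⟩ : ∃ c, m ≤ c ∧ c < u ∧ p.eval c = 0 := by
        rcases (not_lt.1 hpm).eq_or_lt with h0 | h0
        · exact ⟨m, le_rfl, hmu, h0⟩
        · obtain ⟨c, h1, h2, h3⟩ := h p m u hmu h0 hpu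
          exact ⟨c, h1.le, h2, h3⟩
      have hcg : ∀ y, c ≤ y → y < u → y ∈ gap lo (some u) := fun y h1 h2 =>
        ⟨fun l hl => (hm.1 l hl).trans_le (hc1.trans h1), by rintro _ ⟨⟩; exact h2⟩
      refine ⟨(c + u) / 2, hcg _ (by linarith) (by linarith), ?_⟩
      have : p.eval c < p.eval ((c + u) / 2) :=
        h.gap_strictMono hp (hcg c le_rfl hc2) (hcg _ (by linarith) (by linarith))
          (show c < (c + u) / 2 by linarith)
      rwa [hc] at this

lemma mem_gap_neg {y : R} :
    y ∈ gap (hi.map Neg.neg) (lo.map Neg.neg) ↔ -y ∈ gap lo hi := by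
  cases lo <;> cases hi <;> simp [gap, lt_neg, neg_lt, and_comm]

lemma IVP.gap_exists_neg (h : IVP R) (hp : ∀ y ∈ gap lo hi, 0 < p.derivative.eval y)
    (hne : (gap lo hi).Nonempty) :
    (∃ y ∈ gap lo hi, p.eval y < 0) ↔ ∀ u ∈ lo, p.eval u < 0 := by
  have key := h.gap_exists_pos (p := -(p.comp (-Polynomial.X))) (lo := hi.map Neg.neg)
    (hi := lo.map Neg.neg) (by
      intro y hy
      have := hp _ (mem_gap_neg.1 hy)
      simpa [Polynomial.derivative_comp] using this)
    (by obtain ⟨m, hm⟩ := hne; exact ⟨-m, mem_gap_neg.2 (by simpa using hm)⟩)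
  constructor
  · rintro ⟨y, hy, hpy⟩ u hu
    have := key.1 ⟨-y, mem_gap_neg.2 (by simpa using hy), by simpa using hpy⟩ (-u)
      (Option.mem_map_of_mem _ hu)
    simpa using this
  · intro hu
    obtain ⟨y, hy, hpy⟩ := key.2 (by
      intro v hv
      obtain ⟨u, hu', rfl⟩ := Option.mem_map.1 hv
      simpa using hu u hu')
    exact ⟨-y, mem_gap_neg.1 hy, by simpa using hpy⟩

lemma IVP.gap_exists_zero (h : IVP R) (hp : ∀ y ∈ gap lo hi, 0 < p.derivative.eval y)
    (hne : (gap lo hi).Nonempty) :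
    (∃ y ∈ gap lo hi, p.eval y = 0) ↔
      (∀ u ∈ lo, p.eval u < 0) ∧ ∀ u ∈ hi, 0 < p.eval u := by
  have hmono := h.gap_strictMono hp
  rw [← h.gap_exists_neg hp hne, ← h.gap_exists_pos hp hne]
  constructor
  · rintro ⟨y, hy, hpy⟩
    obtain ⟨z, hz, hyz⟩ := gap_no_max hy
    obtain ⟨w, hw, hwy⟩ : ∃ w ∈ gap lo hi, w < y := by
      obtain ⟨w, hw, hyw⟩ := gap_no_max (mem_gap_neg.2 (by simpa using hy) :
        -y ∈ gap (hi.map Neg.neg) (lo.map Neg.neg))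
      exact ⟨-w, mem_gap_neg.1 hw, by linarith⟩
    exact ⟨⟨w, hw, hpy ▸ hmono hw hy hwy⟩, ⟨z, hz, hpy ▸ hmono hy hz hyz⟩⟩
  · rintro ⟨⟨y, hy, hpy⟩, ⟨z, hz, hpz⟩⟩
    have hyz : y < z := (hmono.lt_iff_lt hy hz).1 (hpy.trans hpz)
    obtain ⟨c, h1, h2, h3⟩ := h p y z hyz hpy hpz
    exact ⟨c, gap_convex hy hz h1.le h2.le, h3⟩

/-- On a gap where `p` increases, a point with `p ≠ 0` is followed by another one of the same
sign. -/
lemma IVP.gap_next (h : IVP R) (hp : ∀ y ∈ gap lo hi, 0 < p.derivative.eval y) {y : R}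
    (hy : y ∈ gap lo hi) (hy0 : p.eval y ≠ 0) :
    ∃ z ∈ gap lo hi, y < z ∧ SignType.sign (p.eval z) = SignType.sign (p.eval y) := by
  have hmono := h.gap_strictMono hp
  obtain ⟨z, hz, hyz⟩ := gap_no_max hy
  have hlt : p.eval y < p.eval z := hmono hy hz hyz
  rcases lt_or_gt_of_ne hy0 with h0 | h0
  · by_cases hz0 : p.eval z < 0
    · exact ⟨z, hz, hyz, by rw [sign_neg h0, sign_neg hz0]⟩
    obtain ⟨c, hc1, hc2, hc⟩ : ∃ c, y < c ∧ c ≤ z ∧ p.eval c = 0 := by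
      rcases (not_lt.1 hz0).eq_or_lt with h1 | h1
      · exact ⟨z, hyz, le_rfl, h1.symm⟩
      · obtain ⟨c, h1, h2, h3⟩ := h p y z hyz h0 h1
        exact ⟨c, h1, h2.le, h3⟩
    have hw : (y + c) / 2 ∈ gap lo hi := gap_convex hy hz (by linarith) (by linarith)
    have : p.eval ((y + c) / 2) < p.eval c :=
      hmono hw (gap_convex hy hz hc1.le hc2) (show (y + c) / 2 < c by linarith)
    rw [hc] at this
    exact ⟨_, hw, by linarith, by rw [sign_neg h0, sign_neg this]⟩
  · exact ⟨z, hz, hyz, by rw [sign_pos h0, sign_pos (h0.trans hlt)]⟩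

end Mono
end OneField

/-! ### Matching of sign patterns between two ordered fields -/

/-- Values in prescribed sets can be chosen in increasing order if any two of the sets are either in
increasing position or equal without a last element. -/
lemma exists_strictMonoOn {α β : Type*} [LinearOrder α] [LinearOrder β] [Nonempty β]
    (S : Finset α) (J : α → Set β) (hne : ∀ s ∈ S, (J s).Nonempty)
    (h : ∀ s ∈ S, ∀ t ∈ S, s < t → (∀ y ∈ J s, ∀ z ∈ J t, y < z) ∨
      (J s = J t ∧ ∀ y ∈ J t, ∃ z ∈ J t, y < z)) :
    ∃ f : α → β, StrictMonoOn f S ∧ ∀ s ∈ S, f s ∈ J s := by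
  classical
  induction S using Finset.induction_on_max with
  | empty => exact ⟨fun _ => Classical.arbitrary β, by simp [StrictMonoOn], by simp⟩
  | insert a S hmax ih =>
    obtain ⟨f, hf, hfJ⟩ := ih (fun s hs => hne s (Finset.mem_insert_of_mem hs))
      (fun s hs t ht => h s (Finset.mem_insert_of_mem hs) t (Finset.mem_insert_of_mem ht))
    -- a value for `a` beyond all the previous ones
    obtain ⟨y, hyJ, hy⟩ : ∃ y ∈ J a, ∀ s ∈ S, f s < y := by
      rcases S.eq_empty_or_nonempty with rfl | hS
      · obtain ⟨y, hy⟩ := hne a (by simp)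
        exact ⟨y, hy, by simp⟩
      have htS := S.max'_mem hS
      set t := S.max' hS with ht
      have hle : ∀ s ∈ S, f s ≤ f t := fun s hs => hf.monotoneOn hs htS (S.le_max' s hs)
      rcases h t (Finset.mem_insert_of_mem htS) a (by simp) (hmax t htS) with h1 | ⟨h1, h2⟩
      · obtain ⟨y, hy⟩ := hne a (by simp)
        exact ⟨y, hy, fun s hs => (hle s hs).trans_lt (h1 _ (hfJ t htS) _ hy)⟩
      · obtain ⟨y, hy, hlt⟩ := h2 (f t) (h1 ▸ hfJ t htS)
        exact ⟨y, hy, fun s hs => (hle s hs).trans_lt hlt⟩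
    have haS : ∀ s ∈ S, s ≠ a := fun s hs => (hmax s hs).ne
    refine ⟨Function.update f a y, ?_, ?_⟩
    · intro s hs t ht hst
      simp only [Finset.coe_insert, Set.mem_insert_iff, Finset.mem_coe] at hs ht
      rcases hs with rfl | hs
      · rcases ht with rfl | ht
        · exact absurd hst (lt_irrefl _)
        · exact absurd hst (hmax t ht).not_gt
      · rcases ht with rfl | ht
        · simpa [Function.update_of_ne (haS s hs)] using hy s hs
        · simpa [Function.update_of_ne (haS s hs), Function.update_of_ne (haS t ht)] using
            hf hs ht hst
    · intro s hs
      rcases Finset.mem_insert.1 hs with rfl | hs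
      · simpa using hyJ
      · simpa [Function.update_of_ne (haS s hs)] using hfJ s hs

section TwoFields

variable {R₁ R₂ : Type*} [Field R₁] [LinearOrder R₁] [IsStrictOrderedRing R₁]
  [Field R₂] [LinearOrder R₂] [IsStrictOrderedRing R₂]

/-- The set of points of a gap where `P₂` has the sign that `P₁` has at `s`. -/
def sameSign (P₁ : Polynomial R₁) (P₂ : Polynomial R₂) (G : Set R₂) (s : R₁) : Set R₂ :=
  {y | y ∈ G ∧ SignType.sign (P₂.eval y) = SignType.sign (P₁.eval s)}

lemma sameSign_neg (P₁ : Polynomial R₁) (P₂ : Polynomial R₂) (G : Set R₂) (s : R₁) :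
    sameSign (-P₁) (-P₂) G s = sameSign P₁ P₂ G s := by
  ext y
  simp [sameSign, Left.sign_neg]

section
variable {P₁ : Polynomial R₁} {P₂ : Polynomial R₂} {lo hi : Option R₁} {f : R₁ → R₂}

/-- If `P₁` and `P₂` increase on corresponding gaps and their signs agree at the ends, then every sign
taken by `P₁` is taken by `P₂`. -/
lemma sameSign_nonempty (h₁ : IVP R₁) (h₂ : IVP R₂)
    (d₁ : ∀ y ∈ gap lo hi, 0 < P₁.derivative.eval y)
    (d₂ : ∀ y ∈ gap (lo.map f) (hi.map f), 0 < P₂.derivative.eval y)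
    (hne : (gap (lo.map f) (hi.map f)).Nonempty)
    (hlo : ∀ l ∈ lo, SignType.sign (P₂.eval (f l)) = SignType.sign (P₁.eval l))
    (hhi : ∀ l ∈ hi, SignType.sign (P₂.eval (f l)) = SignType.sign (P₁.eval l))
    {s : R₁} (hs : s ∈ gap lo hi) :
    (sameSign P₁ P₂ (gap (lo.map f) (hi.map f)) s).Nonempty := by
  have hlo' : (∀ u ∈ lo, P₁.eval u < 0) → ∀ u ∈ lo.map f, P₂.eval u < 0 := by
    intro h u hu
    obtain ⟨v, hv, rfl⟩ := Option.mem_map.1 hu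
    rw [← sign_eq_neg_one_iff, hlo v hv, sign_eq_neg_one_iff]
    exact h v hv
  have hhi' : (∀ u ∈ hi, 0 < P₁.eval u) → ∀ u ∈ hi.map f, 0 < P₂.eval u := by
    intro h u hu
    obtain ⟨v, hv, rfl⟩ := Option.mem_map.1 hu
    rw [← sign_eq_one_iff, hhi v hv, sign_eq_one_iff]
    exact h v hv
  rcases lt_trichotomy (P₁.eval s) 0 with h0 | h0 | h0
  · obtain ⟨y, hy, hy'⟩ := (h₂.gap_exists_neg d₂ hne).2
      (hlo' ((h₁.gap_exists_neg d₁ ⟨s, hs⟩).1 ⟨s, hs, h0⟩))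
    exact ⟨y, hy, by rw [sign_neg hy', sign_neg h0]⟩
  · obtain ⟨h3, h4⟩ := (h₁.gap_exists_zero d₁ ⟨s, hs⟩).1 ⟨s, hs, h0⟩
    obtain ⟨y, hy, hy'⟩ := (h₂.gap_exists_zero d₂ hne).2 ⟨hlo' h3, hhi' h4⟩
    exact ⟨y, hy, by rw [hy', h0]; simp⟩
  · obtain ⟨y, hy, hy'⟩ := (h₂.gap_exists_pos d₂ hne).2
      (hhi' ((h₁.gap_exists_pos d₁ ⟨s, hs⟩).1 ⟨s, hs, h0⟩))
    exact ⟨y, hy, by rw [sign_pos hy', sign_pos h0]⟩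

/-- The alternative needed for `exists_strictMonoOn`: different signs occur in increasing position, and
equal nonzero signs can be moved further right. -/
lemma sameSign_lt {lo₂ hi₂ : Option R₂} (h₁ : IVP R₁) (h₂ : IVP R₂)
    (d₁ : ∀ y ∈ gap lo hi, 0 < P₁.derivative.eval y)
    (d₂ : ∀ y ∈ gap lo₂ hi₂, 0 < P₂.derivative.eval y)
    {s t : R₁} (hs : s ∈ gap lo hi) (ht : t ∈ gap lo hi) (hst : s < t) :
    (∀ y ∈ sameSign P₁ P₂ (gap lo₂ hi₂) s, ∀ z ∈ sameSign P₁ P₂ (gap lo₂ hi₂) t, y < z) ∨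
      (sameSign P₁ P₂ (gap lo₂ hi₂) s = sameSign P₁ P₂ (gap lo₂ hi₂) t ∧
        ∀ y ∈ sameSign P₁ P₂ (gap lo₂ hi₂) t, ∃ z ∈ sameSign P₁ P₂ (gap lo₂ hi₂) t, y < z) := by
  have hlt : P₁.eval s < P₁.eval t := h₁.gap_strictMono d₁ hs ht hst
  have hmono := h₂.gap_strictMono d₂
  have hle : SignType.sign (P₁.eval s) ≤ SignType.sign (P₁.eval t) := SignType.sign.monotone hlt.le
  rcases hle.eq_or_lt with heq | hne
  · right
    refine ⟨by simp [sameSign, heq], ?_⟩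
    rintro y ⟨hy, hys⟩
    have h0 : P₂.eval y ≠ 0 := by
      intro h0
      rw [h0, sign_zero] at hys
      have ht0 := sign_eq_zero_iff.1 hys.symm
      have hs0 := sign_eq_zero_iff.1 (heq.trans hys.symm)
      rw [ht0, hs0] at hlt
      exact lt_irrefl _ hlt
    obtain ⟨z, hz, hyz, hsz⟩ := h₂.gap_next d₂ hy h0
    exact ⟨z, ⟨hz, hsz.trans hys⟩, hyz⟩
  · left
    rintro y ⟨hy, hys⟩ z ⟨hz, hzs⟩
    by_contra hcon
    have : P₂.eval z ≤ P₂.eval y := hmono.monotoneOn hz hy (not_lt.1 hcon)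
    have := SignType.sign.monotone this
    rw [hys, hzs] at this
    exact absurd this (not_le.2 hne)

end

/-- The end points of the component of the complement of a finite set that contains `s`. -/
lemma exists_ends (Z : Finset R₁) (s : R₁) :
    ∃ lo hi : Option R₁, (∀ l ∈ lo, l ∈ Z ∧ l < s) ∧ (∀ u ∈ hi, u ∈ Z ∧ s < u) ∧
      (∀ z ∈ Z, z < s → ∃ l ∈ lo, z ≤ l) ∧ (∀ z ∈ Z, s < z → ∃ u ∈ hi, u ≤ z) := by
  classical
  obtain ⟨lo, h1, h2⟩ : ∃ lo : Option R₁, (∀ l ∈ lo, l ∈ Z ∧ l < s) ∧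
      (∀ z ∈ Z, z < s → ∃ l ∈ lo, z ≤ l) := by
    rcases (Z.filter (· < s)).eq_empty_or_nonempty with h | h
    · refine ⟨none, by simp, fun z hz hzs => ?_⟩
      have : z ∈ Z.filter (· < s) := by simp [hz, hzs]
      simp [h] at this
    · refine ⟨some ((Z.filter (· < s)).max' h), ?_, fun z hz hzs =>
        ⟨_, rfl, Finset.le_max' _ _ (by simp [hz, hzs])⟩⟩
      rintro _ ⟨⟩
      simpa using Finset.max'_mem _ h
  obtain ⟨hi, h3, h4⟩ : ∃ hi : Option R₁, (∀ l ∈ hi, l ∈ Z ∧ s < l) ∧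
      (∀ z ∈ Z, s < z → ∃ l ∈ hi, l ≤ z) := by
    rcases (Z.filter (s < ·)).eq_empty_or_nonempty with h | h
    · refine ⟨none, by simp, fun z hz hzs => ?_⟩
      have : z ∈ Z.filter (s < ·) := by simp [hz, hzs]
      simp [h] at this
    · refine ⟨some ((Z.filter (s < ·)).min' h), ?_, fun z hz hzs =>
        ⟨_, rfl, Finset.min'_le _ _ (by simp [hz, hzs])⟩⟩
      rintro _ ⟨⟩
      simpa using Finset.min'_mem _ h
  exact ⟨lo, hi, h1, h3, h2, h4⟩

variable {K : Type*} [Field K]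

/-- The sign at `y` of a polynomial over `K`, computed in an ordered extension of `K`. -/
def sg {R : Type*} [Field R] [LinearOrder R] (φ : K →+* R) (y : R) (q : Polynomial K) :
    SignType := SignType.sign ((q.map φ).eval y)

/-- Every finite configuration of points of `R₁` is matched by one of `R₂` in the same order and
with the same signs of the polynomials in `Q`. -/
def Match (φ₁ : K →+* R₁) (φ₂ : K →+* R₂) (Q : Finset (Polynomial K)) : Prop :=
  ∀ S : Finset R₁, ∃ f : R₁ → R₂, StrictMonoOn f S ∧ ∀ s ∈ S, ∀ q ∈ Q, sg φ₂ (f s) q = sg φ₁ s q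

open Classical in
/-- The finite set of roots of the nonzero members of `B`. -/
def zeros {R : Type*} [Field R] (φ : K →+* R) (B : Finset (Polynomial K)) : Finset R :=
  (B.filter (· ≠ 0)).biUnion fun q => (q.map φ).roots.toFinset

lemma mem_zeros {R : Type*} [Field R] {φ : K →+* R} {B : Finset (Polynomial K)} {z : R} :
    z ∈ zeros φ B ↔ ∃ q ∈ B, q ≠ 0 ∧ (q.map φ).eval z = 0 := by
  simp only [zeros, Finset.mem_biUnion, Finset.mem_filter, Multiset.mem_toFinset]
  constructor
  · rintro ⟨q, ⟨h1, h2⟩, h3⟩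
    exact ⟨q, h1, h2, Polynomial.isRoot_of_mem_roots h3⟩
  · rintro ⟨q, h1, h2, h3⟩
    exact ⟨q, ⟨h1, h2⟩, (Polynomial.mem_roots (Polynomial.map_ne_zero h2)).2 h3⟩

lemma Match.mapsTo {φ₁ : K →+* R₁} {φ₂ : K →+* R₂} {B Q : Finset (Polynomial K)} (hB : B ⊆ Q)
    {S : Finset R₁} {f : R₁ → R₂} (hf : ∀ s ∈ S, ∀ q ∈ Q, sg φ₂ (f s) q = sg φ₁ s q)
    (hS : zeros φ₁ B ⊆ S) : ∀ z ∈ zeros φ₁ B, f z ∈ zeros φ₂ B := by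
  intro z hz
  obtain ⟨q, hq, hq0, hqz⟩ := mem_zeros.1 hz
  refine mem_zeros.2 ⟨q, hq, hq0, ?_⟩
  have := hf z (hS hz) q (hB hq)
  simpa [sg, hqz] using this

/-- Matching in one direction bounds the number of roots; matching in both directions shows that the
two fields have equally many roots of the polynomials in `B`. -/
lemma Match.card_le {φ₁ : K →+* R₁} {φ₂ : K →+* R₂} {B Q : Finset (Polynomial K)} (hB : B ⊆ Q)
    (h : Match φ₁ φ₂ Q) : (zeros φ₁ B).card ≤ (zeros φ₂ B).card := by
  obtain ⟨f, hf, hfs⟩ := h (zeros φ₁ B)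
  exact Finset.card_le_card_of_injOn f (Match.mapsTo hB hfs subset_rfl) hf.injOn

end TwoFields

/-! ### The transfer principle in one variable -/

section TwoFields

variable {R₁ R₂ : Type*} [Field R₁] [LinearOrder R₁] [IsStrictOrderedRing R₁]
  [Field R₂] [LinearOrder R₂] [IsStrictOrderedRing R₂] {K : Type*} [Field K]

lemma sg_neg {R : Type*} [Field R] [LinearOrder R] [IsStrictOrderedRing R] (φ : K →+* R) (y : R)
    (q : Polynomial K) : sg φ y (-q) = - sg φ y q := by
  simp [sg, Left.sign_neg]

lemma eval_map_mod {R : Type*} [Field R] (φ : K →+* R) {y : R} (p : Polynomial K)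
    {q : Polynomial K} (hq : (q.map φ).eval y = 0) :
    ((p % q).map φ).eval y = (p.map φ).eval y := by
  conv_rhs => rw [← EuclideanDomain.mod_add_div p q]
  simp [hq]

/-- The points in the same position relative to `f(Z)` as `s` is relative to `Z` form a gap. -/
lemma cell_eq_gap {Z : Finset R₁} {f : R₁ → R₂} {s : R₁} (hf : StrictMonoOn f Z) (hs : s ∉ Z)
    {lo hi : Option R₁}
    (h1 : ∀ l ∈ lo, l ∈ Z ∧ l < s) (h2 : ∀ u ∈ hi, u ∈ Z ∧ s < u)
    (h3 : ∀ z ∈ Z, z < s → ∃ l ∈ lo, z ≤ l) (h4 : ∀ z ∈ Z, s < z → ∃ u ∈ hi, u ≤ z) :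
    {y | ∀ z ∈ Z, (z < s → f z < y) ∧ (s < z → y < f z) ∧ (s = z → y = f z)} =
      gap (lo.map f) (hi.map f) := by
  ext y
  constructor
  · intro hy
    refine ⟨fun l hl => ?_, fun u hu => ?_⟩
    · obtain ⟨v, hv, rfl⟩ := Option.mem_map.1 hl
      exact (hy v (h1 v hv).1).1 (h1 v hv).2
    · obtain ⟨v, hv, rfl⟩ := Option.mem_map.1 hu
      exact (hy v (h2 v hv).1).2.1 (h2 v hv).2
  · rintro ⟨hy1, hy2⟩ z hz
    refine ⟨fun h => ?_, fun h => ?_, fun h => absurd (h ▸ hz) hs⟩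
    · obtain ⟨l, hl, hzl⟩ := h3 z hz h
      exact (hf.monotoneOn hz (h1 l hl).1 hzl).trans_lt (hy1 _ (Option.mem_map_of_mem f hl))
    · obtain ⟨l, hl, hzl⟩ := h4 z hz h
      exact (hy2 _ (Option.mem_map_of_mem f hl)).trans_le (hf.monotoneOn (h2 l hl).1 hz hzl)

/-- The inductive step of the transfer principle (the Cohen–Hörmander argument). A matching for `B` and
for the remainders of `p` modulo its members determines the sign of `p` at the roots `Z` of `B`. As
`p.derivative` lies in `B`, between consecutive roots `p` is monotone, so its possible signs there
are determined by those at the ends. -/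
lemma match_step {φ₁ : K →+* R₁} {φ₂ : K →+* R₂} (h₁ : IVP R₁) (h₂ : IVP R₂)
    (hsign : ∀ c, SignType.sign (φ₁ c) = SignType.sign (φ₂ c))
    {B Q : Finset (Polynomial K)} {p : Polynomial K} (hBQ : B ⊆ Q)
    (hp' : p.derivative ∈ B) (hmod : ∀ q ∈ B, q ≠ 0 → p % q ∈ Q)
    (hm : Match φ₁ φ₂ Q) (hm' : Match φ₂ φ₁ Q) (P : Finset (Polynomial K))
    (hP : ∀ q ∈ P, q = p ∨ q ∈ B) : Match φ₁ φ₂ P := by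
  classical
  have : CharZero K := by
    refine ⟨fun a b hab => ?_⟩
    have := congrArg φ₁ hab
    simpa using this
  intro S
  obtain ⟨Z, hZ⟩ : ∃ Z, Z = zeros φ₁ B := ⟨_, rfl⟩
  obtain ⟨f, hf, hfs⟩ := hm (S ∪ Z)
  have hfZ : StrictMonoOn f Z := hf.mono (by simp)
  have hmaps := Match.mapsTo (B := B) hBQ hfs (hZ ▸ Finset.subset_union_right)
  -- by counting, the matching maps the roots of `B` in `R₁` onto those in `R₂`
  have himg : ∀ w ∈ zeros φ₂ B, ∃ z ∈ Z, f z = w := by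
    have hsub : Z.image f ⊆ zeros φ₂ B := by
      intro w hw
      obtain ⟨z, hz, rfl⟩ := Finset.mem_image.1 hw
      exact hmaps z (hZ ▸ hz)
    have hcard : (zeros φ₂ B).card ≤ (Z.image f).card := by
      rw [Finset.card_image_of_injOn hfZ.injOn, hZ]
      exact Match.card_le hBQ hm'
    intro w hw
    rw [← Finset.eq_of_subset_of_card_le hsub hcard] at hw
    simpa using hw
  -- at a root of `q`, the polynomial `p` agrees with its remainder modulo `q`
  have hpZ : ∀ z ∈ Z, sg φ₂ (f z) p = sg φ₁ z p := by
    intro z hz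
    obtain ⟨q, hq, hq0, hqz⟩ := mem_zeros.1 (hZ ▸ hz)
    have hzS : z ∈ S ∪ Z := Finset.mem_union_right _ hz
    have hqz' : (q.map φ₂).eval (f z) = 0 := by
      have := hfs z hzS q (hBQ hq)
      simpa [sg, hqz] using this
    have := hfs z hzS _ (hmod q hq hq0)
    simpa only [sg, eval_map_mod _ p hqz, eval_map_mod _ p hqz'] using this
  obtain ⟨cell, hcell⟩ : ∃ cell : R₁ → Set R₂, ∀ s, cell s =
    {y | ∀ z ∈ Z, (z < s → f z < y) ∧ (s < z → y < f z) ∧ (s = z → y = f z)} := ⟨_, fun _ => rfl⟩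
  have hfcell : ∀ s ∈ S, f s ∈ cell s := by
    intro s hs
    rw [hcell]
    have hs' : s ∈ S ∪ Z := Finset.mem_union_left _ hs
    intro z hz
    have hz' : z ∈ S ∪ Z := Finset.mem_union_right _ hz
    exact ⟨fun h => hf hz' hs' h, fun h => hf hs' hz' h, fun h => h ▸ rfl⟩
  have hconv : ∀ s a b c, a ∈ cell s → b ∈ cell s → a ≤ c → c ≤ b → c ∈ cell s := by
    intro s a b c ha hb hac hcb
    rw [hcell] at *
    intro z hz
    exact ⟨fun h => ((ha z hz).1 h).trans_le hac, fun h => hcb.trans_lt ((hb z hz).2.1 h),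
      fun h => le_antisymm (hcb.trans ((hb z hz).2.2 h).le) (((ha z hz).2.2 h).symm.le.trans hac)⟩
  have hnoroot : ∀ s, s ∉ Z → ∀ w ∈ cell s, w ∉ zeros φ₂ B := by
    intro s hs w hw hw'
    obtain ⟨z, hz, rfl⟩ := himg w hw'
    rw [hcell] at hw
    rcases lt_trichotomy z s with h | h | h
    · exact lt_irrefl _ ((hw z hz).1 h)
    · exact hs (h ▸ hz)
    · exact lt_irrefl _ ((hw z hz).2.1 h)
  have hcellZ : ∀ s ∈ Z, ∀ y ∈ cell s, y = f s := by
    intro s hs y hy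
    rw [hcell] at hy
    exact (hy s hs).2.2 rfl
  -- on a cell every member of `B` has constant sign
  have hconst : ∀ s ∈ S, ∀ y ∈ cell s, ∀ q ∈ B, sg φ₂ y q = sg φ₁ s q := by
    intro s hs y hy q hq
    have hs' : s ∈ S ∪ Z := Finset.mem_union_left _ hs
    by_cases hsZ : s ∈ Z
    · rw [hcellZ s hsZ y hy]
      exact hfs s hs' q (hBQ hq)
    rw [← hfs s hs' q (hBQ hq)]
    by_cases hq0 : q = 0
    · simp [sg, hq0]
    have aux : ∀ c ∈ cell s, (q.map φ₂).eval c ≠ 0 := fun c hc h0 =>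
      hnoroot s hsZ c hc (mem_zeros.2 ⟨q, hq, hq0, h0⟩)
    rcases le_total y (f s) with h | h
    · exact h₂.sign_eq h fun c h3 h4 => aux c (hconv s _ _ c hy (hfcell s hs) h3 h4)
    · exact (h₂.sign_eq h fun c h3 h4 => aux c (hconv s _ _ c (hfcell s hs) hy h3 h4)).symm
  obtain ⟨J, hJ⟩ : ∃ J : R₁ → Set R₂, ∀ s, J s = {y | y ∈ cell s ∧ sg φ₂ y p = sg φ₁ s p} :=
    ⟨_, fun _ => rfl⟩
  -- the case of a constant polynomial
  have hconstp : p.derivative = 0 → ∀ s y, sg φ₂ y p = sg φ₁ s p := by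
    intro h0 s y
    rw [Polynomial.eq_C_of_derivative_eq_zero h0]
    simp [sg, hsign]
  -- up to a sign, `p` is increasing on the cell
  have hkey : ∀ s ∈ S, s ∉ Z → p.derivative ≠ 0 → ∃ (lo hi : Option R₁) (P₁ : Polynomial R₁)
      (P₂ : Polynomial R₂), (∀ l ∈ lo, l ∈ Z ∧ l < s) ∧ (∀ u ∈ hi, u ∈ Z ∧ s < u) ∧
      cell s = gap (lo.map f) (hi.map f) ∧ (∀ y ∈ gap lo hi, 0 < P₁.derivative.eval y) ∧
      (∀ y ∈ gap (lo.map f) (hi.map f), 0 < P₂.derivative.eval y) ∧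
      ∀ x y, SignType.sign (P₂.eval y) = SignType.sign (P₁.eval x) ↔ sg φ₂ y p = sg φ₁ x p := by
    intro s hs hsZ hpd
    obtain ⟨lo, hi, e1, e2, e3, e4⟩ := exists_ends Z s
    have hgap := (hcell s).trans (cell_eq_gap hfZ hsZ e1 e2 e3 e4)
    have hsgap : s ∈ gap lo hi := ⟨fun l hl => (e1 l hl).2, fun l hl => (e2 l hl).2⟩
    have hnr : ∀ y ∈ gap lo hi, (p.derivative.map φ₁).eval y ≠ 0 := by
      intro y hy h0
      have hyZ : y ∈ Z := hZ ▸ mem_zeros.2 ⟨_, hp', hpd, h0⟩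
      rcases lt_trichotomy y s with h | h | h
      · obtain ⟨l, hl, hyl⟩ := e3 y hyZ h
        exact absurd (hy.1 l hl) hyl.not_gt
      · exact hsZ (h ▸ hyZ)
      · obtain ⟨l, hl, hyl⟩ := e4 y hyZ h
        exact absurd (hy.2 l hl) hyl.not_gt
    have hc1 : ∀ y ∈ gap lo hi, sg φ₁ y p.derivative = sg φ₁ s p.derivative := by
      intro y hy
      rcases le_total y s with h | h
      · exact h₁.sign_eq h fun c h3 h4 => hnr c (gap_convex hy hsgap h3 h4)
      · exact (h₁.sign_eq h fun c h3 h4 => hnr c (gap_convex hsgap hy h3 h4)).symm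
    have hc2 : ∀ y ∈ gap (lo.map f) (hi.map f), sg φ₂ y p.derivative = sg φ₁ s p.derivative :=
      fun y hy => hconst s hs y (hgap ▸ hy) _ hp'
    rcases lt_or_gt_of_ne (hnr s hsgap) with h0 | h0
    · refine ⟨lo, hi, -(p.map φ₁), -(p.map φ₂), e1, e2, hgap, fun y hy => ?_, fun y hy => ?_, ?_⟩
      · have := hc1 y hy
        rw [sg, sg, sign_neg h0, sign_eq_neg_one_iff] at this
        simpa [Polynomial.derivative_map] using this
      · have := hc2 y hy
        rw [sg, sg, sign_neg h0, sign_eq_neg_one_iff] at this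
        simpa [Polynomial.derivative_map] using this
      · intro x y
        simp [sg, Left.sign_neg]
    · refine ⟨lo, hi, p.map φ₁, p.map φ₂, e1, e2, hgap, fun y hy => ?_, fun y hy => ?_, ?_⟩
      · have := hc1 y hy
        rw [sg, sg, sign_pos h0, sign_eq_one_iff] at this
        simpa [Polynomial.derivative_map] using this
      · have := hc2 y hy
        rw [sg, sg, sign_pos h0, sign_eq_one_iff] at this
        simpa [Polynomial.derivative_map] using this
      · intro x y
        simp [sg]
  obtain ⟨F, hF, hFJ⟩ := exists_strictMonoOn S J (by
    intro s hs
    rw [hJ]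
    by_cases hsZ : s ∈ Z
    · exact ⟨f s, hfcell s hs, hpZ s hsZ⟩
    by_cases hpd : p.derivative = 0
    · exact ⟨f s, hfcell s hs, hconstp hpd _ _⟩
    obtain ⟨lo, hi, P₁, P₂, e1, e2, hgap, d₁, d₂, hPs⟩ := hkey s hs hsZ hpd
    obtain ⟨y, hy, hys⟩ := sameSign_nonempty h₁ h₂ d₁ d₂ ⟨f s, hgap ▸ hfcell s hs⟩
      (fun l hl => (hPs _ _).2 (hpZ l (e1 l hl).1)) (fun l hl => (hPs _ _).2 (hpZ l (e2 l hl).1))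
      (s := s) ⟨fun l hl => (e1 l hl).2, fun l hl => (e2 l hl).2⟩
    exact ⟨y, hgap ▸ hy, (hPs _ _).1 hys⟩) (by
    intro s hs t ht hst
    by_cases hz : ∃ z ∈ Z, s ≤ z ∧ z ≤ t
    · left
      obtain ⟨z, hz, hsz, hzt⟩ := hz
      intro y hy w hw
      rw [hJ] at hy hw
      have hy := hy.1
      have hw := hw.1
      rw [hcell] at hy hw
      rcases hsz.eq_or_lt with h | h
      · rw [(hy z hz).2.2 h]
        exact (hw z hz).1 (h ▸ hst)
      · refine ((hy z hz).2.1 h).trans_le ?_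
        rcases hzt.eq_or_lt with h | h
        · rw [(hw z hz).2.2 h.symm]
        · exact ((hw z hz).1 h).le
    · push Not at hz
      have hcst : cell t = cell s := by
        rw [hcell, hcell]
        ext y
        refine forall₂_congr fun z hzZ => ?_
        have h := hz z hzZ
        have e1 : z < t ↔ z < s := by
          refine ⟨fun h3 => ?_, fun h3 => h3.trans hst⟩
          by_contra h4
          exact absurd (h (not_lt.1 h4)) h3.not_gt
        have e2 : t < z ↔ s < z := ⟨fun h3 => hst.trans h3, fun h3 => h h3.le⟩
        have e3 : t ≠ z := fun h3 => (h (h3 ▸ hst.le)).ne h3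
        have e4 : s ≠ z := fun h3 => by
          have := h h3.le
          exact absurd (h3 ▸ this) hst.not_gt
        simp [e1, e2, e3, e4]
      have hsZ : s ∉ Z := fun h => absurd (hz s h le_rfl) hst.not_gt
      by_cases hpd : p.derivative = 0
      · right
        refine ⟨by ext y; rw [hJ, hJ, hcst]; exact and_congr_right fun _ =>
          iff_of_true (hconstp hpd s y) (hconstp hpd t y), ?_⟩
        obtain ⟨lo, hi, e1, e2, e3, e4⟩ := exists_ends Z s
        have hgap := (hcell s).trans (cell_eq_gap hfZ hsZ e1 e2 e3 e4)
        intro y hy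
        rw [hJ, hcst, hgap] at hy
        obtain ⟨z, hz, hyz⟩ := gap_no_max hy.1
        exact ⟨z, by rw [hJ, hcst, hgap]; exact ⟨hz, hconstp hpd _ _⟩, hyz⟩
      · obtain ⟨lo, hi, P₁, P₂, e1, e2, hgap, d₁, d₂, hPs⟩ := hkey s hs hsZ hpd
        have hJs : ∀ x, cell x = gap (lo.map f) (hi.map f) →
            J x = sameSign P₁ P₂ (gap (lo.map f) (hi.map f)) x := by
          intro x hx
          rw [hJ, hx]
          simp [sameSign, hPs]
        rw [hJs s hgap, hJs t (hcst.trans hgap)]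
        exact sameSign_lt h₁ h₂ d₁ d₂ ⟨fun l hl => (e1 l hl).2, fun l hl => (e2 l hl).2⟩
          ⟨fun l hl => (e1 l hl).2.trans hst, fun l hl => hz l (e2 l hl).1 (e2 l hl).2.le⟩ hst)
  refine ⟨F, hF, fun s hs q hq => ?_⟩
  have hFs := hFJ s hs
  rw [hJ] at hFs
  rcases hP q hq with rfl | hqB
  · exact hFs.2
  · exact hconst s hs _ hFs.1 q hqB

/-- Induction on the degree, and for fixed degree on the number of polynomials of top degree: adding
one such `p` costs only polynomials of lower degree, namely its derivative and its remainders. -/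
lemma match_of_degree {φ₁ : K →+* R₁} {φ₂ : K →+* R₂} (h₁ : IVP R₁) (h₂ : IVP R₂)
    (hsign : ∀ c, SignType.sign (φ₁ c) = SignType.sign (φ₂ c)) (d : ℕ) :
    ∀ Q : Finset (Polynomial K), (∀ q ∈ Q, q.degree < d) → Match φ₁ φ₂ Q ∧ Match φ₂ φ₁ Q := by
  classical
  induction d with
  | zero =>
    intro Q hQ
    have h0 : ∀ q ∈ Q, q = 0 := fun q hq => by
      have := hQ q hq
      by_contra hq0
      exact absurd (this.trans_le (by simp [Polynomial.zero_le_degree_iff, hq0])) (lt_irrefl _)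
    constructor
    · intro S
      obtain ⟨f, hf, -⟩ := exists_strictMonoOn (β := R₂) S (fun _ => Set.univ) (by simp)
        (fun s _ t _ _ => Or.inr ⟨rfl, fun y _ => ⟨y + 1, trivial, by simp⟩⟩)
      exact ⟨f, hf, fun s hs q hq => by simp [h0 q hq, sg]⟩
    · intro S
      obtain ⟨f, hf, -⟩ := exists_strictMonoOn (β := R₁) S (fun _ => Set.univ) (by simp)
        (fun s _ t _ _ => Or.inr ⟨rfl, fun y _ => ⟨y + 1, trivial, by simp⟩⟩)
      exact ⟨f, hf, fun s hs q hq => by simp [h0 q hq, sg]⟩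
  | succ d ihd =>
    suffices H : ∀ Qtop : Finset (Polynomial K), (∀ q ∈ Qtop, q.degree < (d + 1 : ℕ)) →
        ∀ Qlow : Finset (Polynomial K), (∀ q ∈ Qlow, q.degree < d) →
        Match φ₁ φ₂ (Qlow ∪ Qtop) ∧ Match φ₂ φ₁ (Qlow ∪ Qtop) by
      intro Q hQ
      simpa using H Q hQ ∅ (by simp)
    intro Qtop
    induction Qtop using Finset.induction_on with
    | empty =>
      intro _ Qlow hlow
      simpa using ihd Qlow hlow
    | insert p Qtop hpQ ih =>
      intro htop Qlow hlow
      have hp : p.degree < (d + 1 : ℕ) := htop p (by simp)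
      have htop' : ∀ q ∈ Qtop, q.degree < (d + 1 : ℕ) := fun q hq => htop q (by simp [hq])
      have hle : ∀ q : Polynomial K, q.degree < (d + 1 : ℕ) → q.degree ≤ d := by
        intro q hq
        by_cases hq0 : q = 0
        · simp [hq0]
        rw [Polynomial.degree_eq_natDegree hq0] at hq ⊢
        exact_mod_cast Nat.lt_succ_iff.1 (by exact_mod_cast hq)
      have hpd : p.derivative.degree < d := by
        by_cases hp0 : p = 0
        · simp [hp0]
        exact (Polynomial.degree_derivative_lt hp0).trans_le (hle p hp)
      set B := insert p.derivative Qlow ∪ Qtop with hB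
      have hBdeg : ∀ q ∈ B, q.degree < (d + 1 : ℕ) := by
        intro q hq
        have : ((d : ℕ) : WithBot ℕ) < ((d + 1 : ℕ) : WithBot ℕ) := by exact_mod_cast Nat.lt_succ_self d
        rcases Finset.mem_union.1 hq with hq | hq
        · rcases Finset.mem_insert.1 hq with rfl | hq
          · exact hpd.trans this
          · exact (hlow q hq).trans this
        · exact htop' q hq
      obtain ⟨m1, m2⟩ := ih htop' (insert p.derivative Qlow ∪
          (B.filter (· ≠ 0)).image (fun q => p % q)) (by
        intro q hq
        rcases Finset.mem_union.1 hq with hq | hq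
        · rcases Finset.mem_insert.1 hq with rfl | hq
          · exact hpd
          · exact hlow q hq
        · obtain ⟨r, hr, rfl⟩ := Finset.mem_image.1 hq
          obtain ⟨hr, hr0⟩ := Finset.mem_filter.1 hr
          exact (EuclideanDomain.mod_lt p hr0 : (p % r).degree < r.degree).trans_le
            (hle r (hBdeg r hr)))
      have hBQ : B ⊆ insert p.derivative Qlow ∪
          (B.filter (· ≠ 0)).image (fun q => p % q) ∪ Qtop := by
        intro q hq
        rcases Finset.mem_union.1 hq with hq | hq
        · simp only [Finset.mem_union]; exact Or.inl (Or.inl hq)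
        · simp only [Finset.mem_union]; exact Or.inr hq
      have hmod : ∀ q ∈ B, q ≠ 0 → p % q ∈ insert p.derivative Qlow ∪
          (B.filter (· ≠ 0)).image (fun q => p % q) ∪ Qtop := by
        intro q hq hq0
        simp only [Finset.mem_union]
        exact Or.inl (Or.inr (Finset.mem_image_of_mem _ (Finset.mem_filter.2 ⟨hq, hq0⟩)))
      have hPB : ∀ q ∈ Qlow ∪ insert p Qtop, q = p ∨ q ∈ B := by
        intro q hq
        simp only [hB, Finset.mem_union, Finset.mem_insert] at hq ⊢
        tauto
      exact ⟨match_step h₁ h₂ hsign hBQ (by simp [hB]) hmod m1 m2 _ hPB,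
        match_step h₂ h₁ (fun c => (hsign c).symm) hBQ (by simp [hB]) hmod m2 m1 _ hPB⟩

/-- The transfer principle in one variable: signs of finitely many polynomials over a common
subfield at a point of `R₁` are realised at a point of `R₂`. -/
theorem exists_same_signs {φ₁ : K →+* R₁} {φ₂ : K →+* R₂} (h₁ : IVP R₁) (h₂ : IVP R₂)
    (hsign : ∀ c, SignType.sign (φ₁ c) = SignType.sign (φ₂ c)) (Q : Finset (Polynomial K))
    (y : R₁) : ∃ z : R₂, ∀ q ∈ Q, sg φ₂ z q = sg φ₁ y q := by
  obtain ⟨f, -, hf⟩ := (match_of_degree h₁ h₂ hsign ((Q.sup Polynomial.natDegree) + 1) Q (by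
    intro q hq
    refine Polynomial.degree_le_natDegree.trans_lt ?_
    exact_mod_cast Nat.lt_succ_of_le (Finset.le_sup (f := Polynomial.natDegree) hq))).1 {y}
  exact ⟨f y, fun q hq => hf y (by simp) q hq⟩

end TwoFields

/-! ### Ultrapowers of the real numbers -/

section Germs
open Filter

variable {I : Type*} {u : Ultrafilter I}

/-- Polynomials over an ultrapower act componentwise. -/
lemma germ_poly (p : Polynomial (Germ (u : Filter I) ℝ)) : ∃ P : I → Polynomial ℝ, ∀ a : I → ℝ,
    p.eval (a : Germ (u : Filter I) ℝ) = ((fun i => (P i).eval (a i) : I → ℝ) : Germ _ ℝ) := by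
  induction p using Polynomial.induction_on' with
  | add p q hp hq =>
    obtain ⟨P, hP⟩ := hp
    obtain ⟨Q, hQ⟩ := hq
    refine ⟨fun i => P i + Q i, fun a => ?_⟩
    rw [Polynomial.eval_add, hP, hQ, ← Germ.coe_add]
    congr 1
    ext i
    simp
  | monomial n c =>
    induction c using Germ.inductionOn with
    | h f =>
    refine ⟨fun i => Polynomial.monomial n (f i), fun a => ?_⟩
    rw [Polynomial.eval_monomial, ← Germ.coe_pow, ← Germ.coe_mul]
    congr 1
    ext i
    simp

lemma ivp_real : IVP ℝ := by
  intro p a b hab ha hb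
  have := intermediate_value_Ioo hab.le (p.continuous.continuousOn)
  obtain ⟨c, hc, hc0⟩ := this (Set.mem_Ioo.2 ⟨ha, hb⟩)
  exact ⟨c, hc.1, hc.2, hc0⟩

lemma ivp_germ : IVP (Germ (u : Filter I) ℝ) := by
  intro p a b hab ha hb
  induction a using Germ.inductionOn with
  | h a =>
  induction b using Germ.inductionOn with
  | h b =>
  obtain ⟨P, hP⟩ := germ_poly p
  rw [hP] at ha hb
  have ha := Germ.coe_lt.1 ha
  have hb := Germ.coe_lt.1 hb
  have hab := Germ.coe_lt.1 hab
  have : ∀ i, ∃ c, a i < b i → (P i).eval (a i) < 0 → 0 < (P i).eval (b i) →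
      a i < c ∧ c < b i ∧ (P i).eval c = 0 := by
    intro i
    by_cases h : a i < b i ∧ (P i).eval (a i) < 0 ∧ 0 < (P i).eval (b i)
    · obtain ⟨c, hc⟩ := ivp_real (P i) _ _ h.1 h.2.1 h.2.2
      exact ⟨c, fun _ _ _ => hc⟩
    · exact ⟨0, fun h1 h2 h3 => absurd ⟨h1, h2, h3⟩ h⟩
  choose c hc using this
  refine ⟨(c : Germ _ ℝ), Germ.coe_lt.2 ?_, Germ.coe_lt.2 ?_, ?_⟩
  · filter_upwards [ha, hb, hab] with i h1 h2 h3 using (hc i h3 h1 h2).1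
  · filter_upwards [ha, hb, hab] with i h1 h2 h3 using (hc i h3 h1 h2).2.1
  · rw [hP, ← Germ.coe_zero]
    refine Germ.coe_eq.2 ?_
    filter_upwards [ha, hb, hab] with i h1 h2 h3 using (hc i h3 h1 h2).2.2

lemma germ_sign (f : I → ℝ) (s : SignType) :
    SignType.sign (f : Germ (u : Filter I) ℝ) = s ↔ ∀ᶠ i in (u : Filter I), SignType.sign (f i) = s := by
  have key : ∀ s, (∀ᶠ i in (u : Filter I), SignType.sign (f i) = s) →
      SignType.sign (f : Germ (u : Filter I) ℝ) = s := by
    intro s h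
    cases s
    · have h : ∀ᶠ i in (u : Filter I), f i = 0 := h.mono fun i hi => sign_eq_zero_iff.1 hi
      exact sign_eq_zero_iff.2 (Germ.coe_eq.2 h)
    · have h : ∀ᶠ i in (u : Filter I), f i < 0 := h.mono fun i hi => sign_eq_neg_one_iff.1 hi
      exact sign_eq_neg_one_iff.2 (Germ.coe_lt.2 h)
    · have h : ∀ᶠ i in (u : Filter I), 0 < f i := h.mono fun i hi => sign_eq_one_iff.1 hi
      exact sign_eq_one_iff.2 (Germ.coe_lt.2 h)
  refine ⟨fun h => ?_, key s⟩
  have : ∃ s, ∀ᶠ i in (u : Filter I), SignType.sign (f i) = s := by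
    have h3 : ∀ᶠ i in (u : Filter I), SignType.sign (f i) = 0 ∨ SignType.sign (f i) = -1 ∨
        SignType.sign (f i) = 1 := by
      refine .of_forall fun i => ?_
      generalize SignType.sign (f i) = s
      cases s <;> simp
    rw [Ultrafilter.eventually_or, Ultrafilter.eventually_or] at h3
    rcases h3 with h | h | h
    exacts [⟨_, h⟩, ⟨_, h⟩, ⟨_, h⟩]
  obtain ⟨s', hs'⟩ := this
  rw [← h, key s' hs']
  exact hs'

/-- The ring homomorphism into an ultrapower of `ℝ` with given components. -/
def germHom {A : Type*} [Semiring A] (u : Ultrafilter I) (ψ : I → A →+* ℝ) :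
    A →+* Germ (u : Filter I) ℝ :=
  (Germ.coeRingHom (u : Filter I)).comp (RingHom.pi ψ)

lemma germHom_apply {A : Type*} [Semiring A] (ψ : I → A →+* ℝ) (a : A) :
    germHom u ψ a = ((fun i => ψ i a : I → ℝ) : Germ (u : Filter I) ℝ) := rfl

lemma germHom_eval {A : Type*} [CommRing A] (ψ : I → A →+* ℝ) (q : Polynomial A) (z : I → ℝ) :
    (q.map (germHom u ψ)).eval (z : Germ (u : Filter I) ℝ) =
      ((fun i => (q.map (ψ i)).eval (z i) : I → ℝ) : Germ (u : Filter I) ℝ) := by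
  induction q using Polynomial.induction_on' with
  | add p q hp hq =>
    rw [Polynomial.map_add, Polynomial.eval_add, hp, hq, ← Germ.coe_add]
    congr 1
    ext i
    simp
  | monomial n c =>
    rw [Polynomial.map_monomial, Polynomial.eval_monomial, germHom_apply, ← Germ.coe_pow,
      ← Germ.coe_mul]
    congr 1
    ext i
    simp

end Germs

section ArtinLang
open Filter Topology IntermediateField

lemma countable_polynomial (K : Type*) [Field K] [Countable K] : Countable (Polynomial K) := by
  rw [← Cardinal.mk_le_aleph0_iff]
  exact Polynomial.cardinalMk_le_max.trans (max_le (Cardinal.mk_le_aleph0_iff.2 ‹_›) le_rfl)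

open scoped IntermediateField.algebraAdjoinAdjoin in
/-- If `z` satisfies the same algebraic relations over `K` as `y`, then `y ↦ z` extends to `K(y)`. -/
lemma exists_lift {K R : Type*} [Field K] [Field R] [Algebra K R] [Algebra K ℝ] (y : R) (z : ℝ)
    (h : ∀ q : Polynomial K, Polynomial.aeval z q = 0 ↔ Polynomial.aeval y q = 0) :
    ∃ ψ : K⟮y⟯ →ₐ[K] ℝ, ψ (AdjoinSimple.gen K y) = z := by
  have hy : y ∈ Algebra.adjoin K {y} := Algebra.subset_adjoin rfl
  let F : Polynomial K →ₐ[K] Algebra.adjoin K {y} := Polynomial.aeval ⟨y, hy⟩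
  have hF : ∀ q, (F q : R) = Polynomial.aeval y q := fun q =>
    (Polynomial.aeval_algHom_apply (Algebra.adjoin K {y}).val (⟨y, hy⟩ : Algebra.adjoin K {y}) q).symm
  have hsurj : Function.Surjective F := by
    rintro ⟨x, hx⟩
    rw [Algebra.adjoin_singleton_eq_range_aeval] at hx
    obtain ⟨q, rfl⟩ := hx
    exact ⟨q, Subtype.ext (hF q)⟩
  have hker : ∀ q, F q = 0 ↔ Polynomial.aeval z q = 0 := by
    intro q
    rw [h, ← hF, ZeroMemClass.coe_eq_zero]
  let G : Algebra.adjoin K {y} →ₐ[K] ℝ :=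
    AlgHom.liftOfSurjective F hsurj (Polynomial.aeval z) (fun q hq => (hker q).1 hq)
  have hG : ∀ q, G (F q) = Polynomial.aeval z q := fun q =>
    AlgHom.liftOfSurjective_apply _ _ _ _ q
  have hinj : Function.Injective G := by
    refine (injective_iff_map_eq_zero G).2 fun x hx => ?_
    obtain ⟨q, rfl⟩ := hsurj x
    rw [hG] at hx
    exact (hker q).2 hx
  refine ⟨IsFractionRing.liftAlgHom (A := Algebra.adjoin K {y}) hinj, ?_⟩
  have : AdjoinSimple.gen K y = algebraMap (Algebra.adjoin K {y}) K⟮y⟯ (F Polynomial.X) := by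
    apply Subtype.ext
    simp [F]
  rw [this, IsFractionRing.liftAlgHom_apply, IsFractionRing.lift_algebraMap]
  simpa using hG Polynomial.X

end ArtinLang

/-! ### The Artin–Lang theorem -/

section ArtinLang
open Filter Topology IntermediateField

variable {R : Type*} [Field R] [LinearOrder R] [IsStrictOrderedRing R]

lemma sign_div' (a b : R) : SignType.sign (a / b) = SignType.sign (a * b) := by
  rw [div_eq_mul_inv, sign_mul, sign_mul]
  congr 1
  rcases lt_trichotomy b 0 with h | h | h
  · rw [sign_neg h, sign_neg (inv_lt_zero.2 h)]
  · simp [h]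
  · rw [sign_pos h, sign_pos (inv_pos.2 h)]

/-- One-variable specialisation: if some member of `Ψ` realises the signs of any finitely many
elements of `K`, then finitely many polynomial signs at a further point `y` of `R` are realised
as well, at a real point `z` satisfying exactly the algebraic relations of `y` over `K`.
The transfer principle is applied to `R` and an ultrapower of `ℝ`. If `y` is transcendental, `z` is
moved off the countably many real numbers algebraic over `K`. -/
lemma exists_real_point {K : Type*} [Field K] [Countable K] (hR : IVP R) (ι : K →+* R)
    (Ψ : Set (K →+* ℝ))
    (hΨ : ∀ C : Finset K, ∃ ψ ∈ Ψ, ∀ c ∈ C, SignType.sign (ψ c) = SignType.sign (ι c))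
    (y : R) (Q : Finset (Polynomial K)) :
    ∃ ψ ∈ Ψ, ∃ z : ℝ, (∀ q ∈ Q, sg ψ z q = sg ι y q) ∧
      ∀ q : Polynomial K, (q.map ψ).eval z = 0 ↔ (q.map ι).eval y = 0 := by
  classical
  choose ψ hψΨ hψ using hΨ
  have hpt : ∀ Q : Finset (Polynomial K), ∃ C, ∃ z : ℝ, ∀ q ∈ Q, sg (ψ C) z q = sg ι y q := by
    intro Q
    let u : Ultrafilter (Finset K) := Ultrafilter.of atTop
    have hu : (u : Filter (Finset K)) ≤ atTop := Ultrafilter.of_le _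
    obtain ⟨z, hz⟩ := exists_same_signs (φ₁ := ι) (φ₂ := germHom u ψ) hR ivp_germ (by
      intro c
      symm
      rw [germHom_apply, germ_sign]
      refine hu ((eventually_ge_atTop {c}).mono fun C hC => hψ C c (hC (by simp)))) Q y
    induction z using Germ.inductionOn with
    | h z =>
    have : ∀ᶠ C in (u : Filter (Finset K)), ∀ q ∈ Q, sg (ψ C) (z C) q = sg ι y q := by
      refine (eventually_all_finset Q).2 fun q hq => ?_
      have := hz q hq
      rw [sg, germHom_eval, germ_sign] at this
      exact this
    obtain ⟨C, hC⟩ := this.exists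
    exact ⟨C, z C, hC⟩
  by_cases halg : ∃ q : Polynomial K, q ≠ 0 ∧ (q.map ι).eval y = 0
  · let _ : Algebra K R := ι.toAlgebra
    have hae : ∀ q : Polynomial K, Polynomial.aeval y q = (q.map ι).eval y := fun q => by
      rw [Polynomial.aeval_def, Polynomial.eval_map]; rfl
    have hyint : IsIntegral K y := by
      obtain ⟨q, hq0, hq⟩ := halg
      exact (isAlgebraic_iff_isIntegral).1 ⟨q, hq0, by rw [hae, hq]⟩
    obtain ⟨C, z, hz⟩ := hpt (insert (minpoly K y) Q)
    refine ⟨ψ C, hψΨ C, z, fun q hq => hz q (by simp [hq]), ?_⟩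
    have hmz : ((minpoly K y).map (ψ C)).eval z = 0 := by
      have := hz (minpoly K y) (by simp)
      rw [sg, sg, ← hae, minpoly.aeval, sign_zero, sign_eq_zero_iff] at this
      exact this
    let _ : Algebra K ℝ := (ψ C).toAlgebra
    have hae' : ∀ q : Polynomial K, Polynomial.aeval z q = (q.map (ψ C)).eval z := fun q => by
      rw [Polynomial.aeval_def, Polynomial.eval_map]; rfl
    have hmin : minpoly K y = minpoly K z :=
      minpoly.eq_of_irreducible_of_monic (minpoly.irreducible hyint) (by rw [hae', hmz])
        (minpoly.monic hyint)
    intro q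
    rw [← hae, ← hae', ← minpoly.dvd_iff, ← minpoly.dvd_iff, hmin]
  · push Not at halg
    obtain ⟨C, z₀, hz₀⟩ := hpt Q
    -- signs of nonzero polynomials are stable near `z₀`
    have hev : ∀ᶠ z in 𝓝 z₀, ∀ q ∈ Q, sg (ψ C) z q = sg ι y q := by
      refine (eventually_all_finset Q).2 fun q hq => ?_
      by_cases hq0 : q = 0
      · exact .of_forall fun z => by simp [sg, hq0]
      have hne := halg q hq0
      have h0 := hz₀ q hq
      have hcont : Continuous fun z => (q.map (ψ C)).eval z := (q.map (ψ C)).continuous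
      rcases lt_or_gt_of_ne hne with h | h
      · have h' : sg ι y q = -1 := sign_neg h
        rw [h'] at h0 ⊢
        exact (hcont.continuousAt.eventually (gt_mem_nhds (sign_eq_neg_one_iff.1 h0))).mono
          fun z hz => sign_neg hz
      · have h' : sg ι y q = 1 := sign_pos h
        rw [h'] at h0 ⊢
        exact (hcont.continuousAt.eventually (lt_mem_nhds (sign_eq_one_iff.1 h0))).mono
          fun z hz => sign_pos hz
    have := countable_polynomial K
    have hcount : (⋃ q ∈ {q : Polynomial K | q ≠ 0}, {z : ℝ | (q.map (ψ C)).eval z = 0}).Countable := by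
      refine (Set.to_countable _).biUnion fun q hq => Set.Finite.countable ?_
      refine ((q.map (ψ C)).roots.toFinset.finite_toSet).subset fun z hz => ?_
      simp only [Finset.mem_coe, Multiset.mem_toFinset]
      exact (Polynomial.mem_roots (Polynomial.map_ne_zero hq)).2 hz
    obtain ⟨z, hz1, hz2⟩ := (mem_closure_iff_frequently.1
      ((hcount.dense_compl ℝ) z₀)).and_eventually hev |>.exists
    refine ⟨ψ C, hψΨ C, z, hz2, fun q => ?_⟩
    by_cases hq0 : q = 0
    · simp [hq0]
    refine iff_of_false (fun h => hz1 ?_) (halg q hq0)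
    exact Set.mem_biUnion (show q ∈ {q : Polynomial K | q ≠ 0} from hq0) h

/-- The intermediate field `K` is countable and has embeddings into `ℝ` preserving the signs of any
finitely many elements. -/
def Approx {k : Type*} [Field k] [Algebra k R] [Algebra k ℝ] (K : IntermediateField k R) : Prop :=
  Countable K ∧ ∀ C : Finset K, ∃ ψ : K →ₐ[k] ℝ, ∀ c ∈ C, SignType.sign (ψ c) =
    SignType.sign (c : R)

/-- The property `Approx` passes to simple extensions. -/
lemma approx_step {k : Type*} [Field k] [Algebra k R] [Algebra k ℝ] (hR : IVP R)
    (K : IntermediateField k R) (y : R) (hK : Approx K) :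
    Approx (K⟮y⟯.restrictScalars k) := by
  classical
  obtain ⟨hc, hψ⟩ := hK
  have hrep : ∀ x : K⟮y⟯, ∃ r s : Polynomial K,
      (x : R) = Polynomial.aeval y r / Polynomial.aeval y s := fun x =>
    (IntermediateField.mem_adjoin_simple_iff K (x : R)).1 x.2
  choose r s hrs using hrep
  refine ⟨?_, fun C => ?_⟩
  · have := countable_polynomial K
    have hinj : Function.Injective (fun x : K⟮y⟯ => (r x, s x)) := by
      intro a b hab
      have h1 : r a = r b := congrArg Prod.fst hab
      have h2 : s a = s b := congrArg Prod.snd hab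
      apply Subtype.ext
      rw [hrs a, hrs b, h1, h2]
    exact hinj.countable
  change Finset K⟮y⟯ at C
  obtain ⟨ψ', ⟨ψ, rfl⟩, z, hz, hz0⟩ := exists_real_point hR (algebraMap K R)
    (Set.range fun ψ : K →ₐ[k] ℝ => (ψ : K →+* ℝ)) (by
      intro C
      obtain ⟨ψ, h⟩ := hψ C
      exact ⟨_, ⟨ψ, rfl⟩, h⟩) y (C.image fun c => r c * s c)
  let _ : Algebra K ℝ := (ψ : K →+* ℝ).toAlgebra
  have hae : ∀ q : Polynomial K, Polynomial.aeval y q = (q.map (algebraMap K R)).eval y := fun q => by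
    rw [Polynomial.aeval_def, Polynomial.eval_map]
  have hae' : ∀ q : Polynomial K, Polynomial.aeval z q = (q.map (ψ : K →+* ℝ)).eval z := fun q => by
    rw [Polynomial.aeval_def, Polynomial.eval_map]; rfl
  obtain ⟨θ, hθ⟩ := exists_lift (K := K) y z (by
    intro q
    rw [hae, hae']
    exact hz0 q)
  have : IsScalarTower k K ℝ := IsScalarTower.of_algebraMap_eq fun c => (ψ.commutes c).symm
  refine ⟨θ.restrictScalars k, fun c hcC => ?_⟩
  change SignType.sign (θ c) = _
  have hval : ∀ q : Polynomial K, ((Polynomial.aeval (AdjoinSimple.gen K y) q : K⟮y⟯) : R) =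
      Polynomial.aeval y q := fun q =>
    (Polynomial.aeval_algHom_apply K⟮y⟯.val (AdjoinSimple.gen K y) q).symm
  have hcq : c = Polynomial.aeval (AdjoinSimple.gen K y) (r c) /
      Polynomial.aeval (AdjoinSimple.gen K y) (s c) := by
    apply Subtype.ext
    rw [hrs c]
    push_cast
    rw [hval, hval]
  have hfin := hz (r c * s c) (Finset.mem_image_of_mem _ hcC)
  have h2 : SignType.sign (c : R) = sg (algebraMap K R) y (r c * s c) := by
    rw [hrs c, sign_div', ← map_mul, hae, sg]
  have h3 : SignType.sign (θ c) = sg (ψ : K →+* ℝ) z (r c * s c) := by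
    rw [hcq, map_div₀, ← Polynomial.aeval_algHom_apply, ← Polynomial.aeval_algHom_apply, hθ]
    rw [sign_div', ← hcq, sg, ← hae', map_mul (Polynomial.aeval z)]
  rw [h2, h3]
  exact hfin

/-- A strong form of the Artin–Lang theorem over a countable subfield `k` of `ℝ`: the real point
satisfies exactly the algebraic relations of `a` over `k`. -/
theorem artin_lang_countable {k : Type*} [Field k] [Countable k] [Algebra k R] [Algebra k ℝ]
    (hR : IVP R)
    (hk : ∀ c : k, SignType.sign (algebraMap k ℝ c) = SignType.sign (algebraMap k R c))
    {σ : Type*} [Finite σ] (a : σ → R) (Q : Finset (MvPolynomial σ k)) :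
    ∃ x : σ → ℝ, (∀ q ∈ Q, SignType.sign (aeval x q) = SignType.sign (aeval a q)) ∧
      ∀ q : MvPolynomial σ k, aeval x q = 0 ↔ aeval a q = 0 := by
  classical
  have := Fintype.ofFinite σ
  have hA : Approx (IntermediateField.adjoin k ((Finset.univ.image a : Finset R) : Set R)) := by
    refine induction_on_adjoin_finset _ Approx ?_ fun K x _ hK => approx_step hR K x hK
    refine ⟨?_, fun C => ?_⟩
    · exact (botEquiv k R).injective.countable
    · refine ⟨(Algebra.ofId k ℝ).comp (botEquiv k R : (⊥ : IntermediateField k R) →ₐ[k] k),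
        fun c _ => ?_⟩
      obtain ⟨c, rfl⟩ := (botEquiv k R).symm.surjective c
      rw [botEquiv_symm, AlgHom.commutes]
      exact hk c
  set K := IntermediateField.adjoin k ((Finset.univ.image a : Finset R) : Set R) with hK
  have ha : ∀ i, a i ∈ K := fun i => subset_adjoin _ _ (by simp)
  let b : σ → K := fun i => ⟨a i, ha i⟩
  have hb : ∀ q : MvPolynomial σ k, ((aeval b q : K) : R) = aeval a q := fun q => by
    have := MvPolynomial.comp_aeval_apply (f := b) K.val q
    exact this
  obtain ⟨ψ, hψ⟩ := hA.2 (Q.image fun q => aeval b q)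
  have hx : ∀ q : MvPolynomial σ k, aeval (fun i => ψ (b i)) q = ψ (aeval b q) := fun q =>
    (MvPolynomial.comp_aeval_apply (f := b) ψ q).symm
  refine ⟨fun i => ψ (b i), fun q hq => ?_, fun q => ?_⟩
  · rw [hx, hψ _ (Finset.mem_image_of_mem _ hq), hb]
  · rw [hx, map_eq_zero_iff ψ ψ.injective, ← hb, ZeroMemClass.coe_eq_zero]

/-- The Artin–Lang theorem: a point of `Rⁿ` over a real closed extension `R` of `ℝ` can be replaced by a real
point with the same signs of finitely many polynomials, and the same vanishing behaviour for
countably many. It reduces to a countable field, generated by all the coefficients involved. -/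
theorem artin_lang (hR : IVP R) (ρ : ℝ →+* R) {n : ℕ} (a : Fin n → R)
    (Q : Finset (MvPolynomial (Fin n) ℝ)) (e : ℕ → MvPolynomial (Fin n) ℝ) :
    ∃ x : Fin n → ℝ, (∀ q ∈ Q, SignType.sign (eval x q) = SignType.sign (eval₂ ρ a q)) ∧
      ∀ j, eval x (e j) = 0 ↔ eval₂ ρ a (e j) = 0 := by
  classical
  have hρ : ∀ c : ℝ, SignType.sign c = SignType.sign (ρ c) := by
    have hpos : ∀ c : ℝ, 0 < c → 0 < ρ c := by
      intro c hc
      have : ρ c = ρ (√c) * ρ (√c) := by rw [← map_mul, Real.mul_self_sqrt hc.le]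
      rw [this]
      refine mul_self_pos.2 ?_
      rw [map_ne_zero]
      exact (Real.sqrt_pos.2 hc).ne'
    intro c
    rcases lt_trichotomy c 0 with h | h | h
    · have := hpos (-c) (by linarith)
      rw [map_neg] at this
      rw [sign_neg h, sign_neg (by linarith)]
    · simp [h]
    · rw [sign_pos h, sign_pos (hpos c h)]
  let Cf : Set ℝ := (⋃ q ∈ Q, (q.coeffs : Set ℝ)) ∪ ⋃ j, ((e j).coeffs : Set ℝ)
  have hCf : Cf.Countable := by
    refine Set.Countable.union ?_ ?_
    · exact Q.countable_toSet.biUnion fun q _ => Finset.countable_toSet _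
    · exact Set.countable_iUnion fun j => Finset.countable_toSet _
  let k : Subfield ℝ := Subfield.closure Cf
  have hkc : Countable k := by
    rw [← Cardinal.mk_le_aleph0_iff]
    exact (Subfield.cardinalMk_closure_le_max Cf).trans
      (max_le (Cardinal.mk_le_aleph0_iff.2 hCf) le_rfl)
  have hlift : ∀ q : MvPolynomial (Fin n) ℝ, (q.coeffs : Set ℝ) ⊆ Cf →
      ∃ q' : MvPolynomial (Fin n) k, q'.map k.subtype = q := by
    intro q hq
    have : q ∈ Set.range (MvPolynomial.map (σ := Fin n) k.subtype) := by
      rw [MvPolynomial.mem_range_map_iff_coeffs_subset]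
      intro c hc
      exact ⟨⟨c, Subfield.subset_closure (hq hc)⟩, rfl⟩
    exact this
  let _ : Algebra k R := (ρ.comp k.subtype).toAlgebra
  have hlQ : ∀ q : Q, ∃ q' : MvPolynomial (Fin n) k, q'.map k.subtype = q := fun q =>
    hlift q fun c hc => Or.inl (Set.mem_biUnion q.2 hc)
  have hle : ∀ j, ∃ q' : MvPolynomial (Fin n) k, q'.map k.subtype = e j := fun j =>
    hlift _ fun c hc => Or.inr (Set.mem_iUnion.2 ⟨j, hc⟩)
  choose lQ hlQ using hlQ
  choose le hle using hle
  obtain ⟨x, hx, hx0⟩ := artin_lang_countable (k := k) hR (fun c => hρ c) a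
    (Finset.univ.image lQ)
  have hev1 : ∀ q : MvPolynomial (Fin n) k, aeval x q = eval x (q.map k.subtype) := fun q => by
    rw [MvPolynomial.eval_map]; rfl
  have hev2 : ∀ q : MvPolynomial (Fin n) k, aeval a q = eval₂ ρ a (q.map k.subtype) := fun q => by
    rw [MvPolynomial.eval₂_map]; rfl
  refine ⟨x, fun q hq => ?_, fun j => ?_⟩
  · have := hx (lQ ⟨q, hq⟩) (by simp)
    rwa [hev1, hev2, hlQ] at this
  · have := hx0 (le j)
    rwa [hev1, hev2, hle] at this

end ArtinLang

/-! ### Maximal preorderings and orders defined by squares -/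

section Preorderings

variable {B : Type*} [CommRing B]

/-- The preordering `P + xP` generated by a preordering `P` and an element `x`. -/
def adj (P : Subsemiring B) (hP : ∀ x, x * x ∈ P) (x : B) : Subsemiring B where
  carrier := {z | ∃ a ∈ P, ∃ b ∈ P, z = a + x * b}
  zero_mem' := ⟨0, P.zero_mem, 0, P.zero_mem, by simp⟩
  one_mem' := ⟨1, P.one_mem, 0, P.zero_mem, by simp⟩
  add_mem' := by
    rintro _ _ ⟨a, ha, b, hb, rfl⟩ ⟨c, hc, d, hd, rfl⟩
    exact ⟨a + c, P.add_mem ha hc, b + d, P.add_mem hb hd, by ring⟩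
  mul_mem' := by
    rintro _ _ ⟨a, ha, b, hb, rfl⟩ ⟨c, hc, d, hd, rfl⟩
    exact ⟨a * c + x * x * (b * d),
      P.add_mem (P.mul_mem ha hc) (P.mul_mem (hP x) (P.mul_mem hb hd)), a * d + b * c,
      P.add_mem (P.mul_mem ha hd) (P.mul_mem hb hc), by ring⟩

lemma mem_adj {P : Subsemiring B} {hP : ∀ x, x * x ∈ P} {x z : B} :
    z ∈ adj P hP x ↔ ∃ a ∈ P, ∃ b ∈ P, z = a + x * b := Iff.rfl

lemma le_adj {P : Subsemiring B} {hP : ∀ x, x * x ∈ P} {x : B} : P ≤ adj P hP x :=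
  fun a ha => ⟨a, ha, 0, P.zero_mem, by simp⟩

lemma self_mem_adj {P : Subsemiring B} {hP : ∀ x, x * x ∈ P} {x : B} : x ∈ adj P hP x :=
  ⟨0, P.zero_mem, 1, P.one_mem, by simp⟩

/-- Every proper preordering is contained in a maximal one. -/
lemma exists_maximal_preordering (T : Subsemiring B) (hT : ∀ x, x * x ∈ T) (hT1 : -1 ∉ T) :
    ∃ P : Subsemiring B, T ≤ P ∧ -1 ∉ P ∧ ∀ x, x ∉ P → ∃ a ∈ P, ∃ b ∈ P, -1 = a + x * b := by
  obtain ⟨P, hTP, hmax⟩ := zorn_le_nonempty₀ {P : Subsemiring B | T ≤ P ∧ -1 ∉ P} (by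
    intro c hc hchain y hy
    have hdir : DirectedOn (· ≤ ·) c := hchain.directedOn
    refine ⟨sSup c, ⟨(hc hy).1.trans (le_sSup hy), fun h => ?_⟩, fun z hz => le_sSup hz⟩
    obtain ⟨s, hs, h⟩ := (Subsemiring.mem_sSup_of_directedOn ⟨y, hy⟩ hdir).1 h
    exact (hc hs).2 h) T ⟨le_rfl, hT1⟩
  have hP : ∀ x, x * x ∈ P := fun x => hTP (hT x)
  refine ⟨P, hTP, hmax.prop.2, fun x hx => ?_⟩
  by_contra hcon
  have hle : adj P hP x ≤ P := hmax.2 ⟨hTP.trans le_adj, fun h => hcon (mem_adj.1 h)⟩ le_adj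
  exact hx (hle self_mem_adj)

variable {P : Subsemiring B} (hP : ∀ x, x * x ∈ P) (hP1 : -1 ∉ P)
  (hmax : ∀ x, x ∉ P → ∃ a ∈ P, ∃ b ∈ P, -1 = a + x * b)

include hP hP1 hmax in
lemma mem_or_neg_mem (x : B) : x ∈ P ∨ -x ∈ P := by
  by_contra hcon
  push Not at hcon
  obtain ⟨a, ha, b, hb, h1⟩ := hmax x hcon.1
  obtain ⟨c, hc, d, hd, h2⟩ := hmax (-x) hcon.2
  refine hP1 ?_
  have : (-1 : B) = a + c + a * c + x * x * (b * d) := by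
    linear_combination (1 + c) * h1 + (-x * b) * h2
  rw [this]
  exact P.add_mem (P.add_mem (P.add_mem ha hc) (P.mul_mem ha hc))
    (P.mul_mem (hP x) (P.mul_mem hb hd))

/-- The support `P ∩ -P` of a maximal preordering. -/
def supp (hP : ∀ x, x * x ∈ P) (hP1 : -1 ∉ P)
    (hmax : ∀ x, x ∉ P → ∃ a ∈ P, ∃ b ∈ P, -1 = a + x * b) : Ideal B where
  carrier := {x | x ∈ P ∧ -x ∈ P}
  zero_mem' := ⟨P.zero_mem, by simp [P.zero_mem]⟩
  add_mem' := by
    rintro a b ⟨h1, h2⟩ ⟨h3, h4⟩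
    exact ⟨P.add_mem h1 h3, by rw [neg_add]; exact P.add_mem h2 h4⟩
  smul_mem' := by
    rintro c x ⟨h1, h2⟩
    rw [smul_eq_mul]
    rcases mem_or_neg_mem hP hP1 hmax c with h | h
    · exact ⟨P.mul_mem h h1, by simpa using P.mul_mem h h2⟩
    · exact ⟨by simpa using P.mul_mem h h2, by simpa using P.mul_mem h h1⟩

lemma supp_isPrime : (supp hP hP1 hmax).IsPrime := by
  have aux : ∀ x, x ∉ supp hP hP1 hmax → ∃ b a, a ∈ P ∧ x * b = 1 + a := by
    intro x hx
    by_cases h1 : x ∈ P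
    · have h2 : -x ∉ P := fun h2 => hx ⟨h1, h2⟩
      obtain ⟨a, ha, b, hb, h⟩ := hmax _ h2
      exact ⟨b, a, ha, by linear_combination h⟩
    · obtain ⟨a, ha, b, hb, h⟩ := hmax _ h1
      exact ⟨-b, a, ha, by linear_combination h⟩
  refine ⟨?_, ?_⟩
  · intro h
    have : (1 : B) ∈ supp hP hP1 hmax := h ▸ Submodule.mem_top
    exact hP1 this.2
  · intro x y hxy
    by_contra hcon
    push Not at hcon
    obtain ⟨b, a, ha, h1⟩ := aux x hcon.1
    obtain ⟨d, c, hc, h2⟩ := aux y hcon.2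
    have h3 : -((1 + a) * (1 + c)) ∈ P := by
      have := (supp hP hP1 hmax).mul_mem_left (b * d) hxy
      convert this.2 using 1
      linear_combination (y * d) * h1 + (1 + a) * h2
    refine hP1 ?_
    have : (-1 : B) = -((1 + a) * (1 + c)) + (a + c + a * c) := by ring
    rw [this]
    exact P.add_mem h3 (P.add_mem (P.add_mem ha hc) (P.mul_mem ha hc))

end Preorderings

section SquareOrder

/-- If the squares of a field are closed under addition and contain `c` or `-c` for every
`c`, but not `-1`, they are the nonnegative elements of an order. -/
lemma exists_order_of_squares (k : Type*) [Field k] (htot : ∀ c : k, IsSquare c ∨ IsSquare (-c))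
    (hadd : ∀ a b : k, IsSquare a → IsSquare b → IsSquare (a + b)) (hneg : ¬ IsSquare (-1 : k)) :
    ∃ (_ : LinearOrder k) (_ : IsStrictOrderedRing k), ∀ x : k, 0 ≤ x ↔ IsSquare x := by
  classical
  let C : RingCone k :=
    { carrier := {x | IsSquare x}
      mul_mem' := fun ha hb => IsSquare.mul ha hb
      one_mem' := IsSquare.one
      add_mem' := fun ha hb => hadd _ _ ha hb
      zero_mem' := IsSquare.zero
      eq_zero_of_mem_of_neg_mem' := by
        intro a ha hb
        by_contra h0
        refine hneg ?_
        have := IsSquare.div hb ha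
        rwa [neg_div, div_self h0] at this }
  have hmem : HasMemOrNegMem C := ⟨htot⟩
  let o : LinearOrder k := LinearOrder.mkOfAddGroupCone C
  have ho : IsOrderedRing k := IsOrderedRing.mkOfCone C
  refine ⟨o, IsOrderedRing.toIsStrictOrderedRing k, fun x => ?_⟩
  change x - 0 ∈ C ↔ _
  rw [sub_zero]
  rfl

/-- A polynomial with a sign change divides no polynomial of the form `1 + ∑ hᵢ²`. This is a descent
on the degree: with the `hᵢ` reduced modulo `q`, the cofactor of `q` has a sign change as well, has
smaller degree, and divides the same sum. -/
lemma not_dvd_one_add_sumSq {k : Type*} [Field k] [LinearOrder k] [IsStrictOrderedRing k] (a b : k)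
    (d : ℕ) : ∀ q : Polynomial k, q.natDegree = d → q.eval a * q.eval b < 0 →
    ∀ (l : List (Polynomial k)), ¬ q ∣ 1 + (l.map fun h => h * h).sum := by
  induction d using Nat.strong_induction_on with
  | _ d ih =>
  intro q hd hq l hdvd
  have hq0 : q ≠ 0 := by rintro rfl; simp at hq
  have hqdeg : q.natDegree ≠ 0 := by
    intro h0
    rw [Polynomial.eq_C_of_natDegree_eq_zero h0] at hq
    simp only [Polynomial.eval_C] at hq
    exact absurd hq (mul_self_nonneg _).not_gt
  -- replace the `hᵢ` by their remainders modulo `q`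
  have hred : ∀ l : List (Polynomial k), q ∣ (l.map fun h => h * h).sum -
      ((l.map (· % q)).map fun h => h * h).sum := by
    intro l
    induction l with
    | nil => simp
    | cons h l ihl =>
      simp only [List.map_cons, List.sum_cons]
      have h1 : q ∣ h * h - h % q * (h % q) := by
        have : q ∣ h - h % q := ⟨h / q, by linear_combination -(EuclideanDomain.mod_add_div h q)⟩
        have e : h * h - h % q * (h % q) = (h - h % q) * (h + h % q) := by ring
        rw [e]
        exact this.mul_right _
      have e2 : h * h + (l.map fun h => h * h).sum - (h % q * (h % q) +
        ((l.map (· % q)).map fun h => h * h).sum) = (h * h - h % q * (h % q)) +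
          ((l.map fun h => h * h).sum - ((l.map (· % q)).map fun h => h * h).sum) := by ring
      rw [e2]
      exact dvd_add h1 ihl
  have hdvd' : q ∣ 1 + ((l.map (· % q)).map fun h => h * h).sum := by
    have := dvd_sub hdvd (hred l)
    convert this using 1
    ring
  have hdeg : ∀ l : List (Polynomial k),
      ((l.map (· % q)).map fun h => h * h).sum.natDegree ≤ 2 * (q.natDegree - 1) := by
    intro l
    induction l with
    | nil => simp
    | cons h l ihl =>
      simp only [List.map_cons, List.sum_cons]
      refine (Polynomial.natDegree_add_le _ _).trans (max_le ?_ ihl)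
      refine Polynomial.natDegree_mul_le.trans ?_
      have := Polynomial.natDegree_mod_lt h hqdeg
      omega
  have hpos : ∀ (l : List (Polynomial k)) (x : k), 0 ≤ ((l.map fun h => h * h).sum).eval x := by
    intro l x
    induction l with
    | nil => simp
    | cons h l ihl =>
      simp only [List.map_cons, List.sum_cons, Polynomial.eval_add, Polynomial.eval_mul]
      exact add_nonneg (mul_self_nonneg _) ihl
  obtain ⟨r, hr⟩ := hdvd'
  have hS : ∀ x, 0 < q.eval x * r.eval x := by
    intro x
    rw [← Polynomial.eval_mul, ← hr, Polynomial.eval_add, Polynomial.eval_one]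
    linarith [hpos (l.map (· % q)) x]
  have hr0 : r ≠ 0 := by
    rintro rfl
    simpa using hS 0
  have hrdeg : r.natDegree < d := by
    have h1 : (q * r).natDegree = q.natDegree + r.natDegree := Polynomial.natDegree_mul hq0 hr0
    have h2 : (q * r).natDegree ≤ 2 * (q.natDegree - 1) := by
      rw [← hr]
      exact (Polynomial.natDegree_add_le _ _).trans (max_le (by simp) (hdeg l))
    omega
  refine ih _ hrdeg r rfl ?_ (l.map (· % q)) ⟨q, by rw [hr]; ring⟩
  have h1 := mul_pos (hS a) (hS b)
  have e : q.eval a * r.eval a * (q.eval b * r.eval b) =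
    (q.eval a * q.eval b) * (r.eval a * r.eval b) := by ring
  rw [e] at h1
  by_contra h2
  exact absurd (mul_nonpos_of_nonpos_of_nonneg hq.le (not_lt.1 h2)) h1.not_ge

/-- A sign change of a polynomial is inherited by one of its irreducible factors. -/
lemma exists_irreducible_factor {k : Type*} [Field k] [LinearOrder k] [IsStrictOrderedRing k]
    (a b : k) (q : Polynomial k) :
    q.eval a * q.eval b < 0 → ∃ f, Irreducible f ∧ f ∣ q ∧ f.eval a * f.eval b < 0 := by
  induction q using WfDvdMonoid.induction_on_irreducible with
  | zero => simp
  | unit u hu =>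
    intro h
    obtain ⟨c, hc, rfl⟩ := Polynomial.isUnit_iff.1 hu
    simp only [Polynomial.eval_C] at h
    exact absurd h (mul_self_nonneg _).not_gt
  | mul q i hq hi ih =>
    intro h
    by_cases h1 : i.eval a * i.eval b < 0
    · exact ⟨i, hi, dvd_mul_right _ _, h1⟩
    · obtain ⟨f, hf, hfq, hfs⟩ := ih (by
        by_contra h2
        have := mul_nonneg (not_lt.1 h1) (not_lt.1 h2)
        simp only [Polynomial.eval_mul] at h
        nlinarith)
      exact ⟨f, hf, hfq.mul_left _, hfs⟩

end SquareOrder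

/-! ### Real closures relative to a preordering -/

section RealClosure

variable {B Ω : Type*} [CommRing B] [Field Ω]

/-- The sums of elements `θ(t) x²` with `t ∈ P` and `x` in the subfield `k`. -/
def wcone (θ : B →+* Ω) (P : Subsemiring B) (k : Subfield Ω) : AddSubmonoid Ω :=
  AddSubmonoid.closure {z | ∃ t ∈ P, ∃ x ∈ k, z = θ t * (x * x)}

variable {θ : B →+* Ω} {P : Subsemiring B} {k : Subfield Ω}

lemma wcone_mono {k' : Subfield Ω} (h : k ≤ k') : wcone θ P k ≤ wcone θ P k' := by
  refine AddSubmonoid.closure_mono ?_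
  rintro z ⟨t, ht, x, hx, rfl⟩
  exact ⟨t, ht, x, h hx, rfl⟩

lemma sq_mem_wcone {x : Ω} (hx : x ∈ k) : x * x ∈ wcone θ P k :=
  AddSubmonoid.subset_closure ⟨1, P.one_mem, x, hx, by simp⟩

lemma image_mem_wcone {t : B} (ht : t ∈ P) : θ t ∈ wcone θ P k :=
  AddSubmonoid.subset_closure ⟨t, ht, 1, k.one_mem, by simp⟩

lemma wcone_mul {z w : Ω} (hz : z ∈ wcone θ P k) (hw : w ∈ wcone θ P k) :
    z * w ∈ wcone θ P k := by
  induction hz using AddSubmonoid.closure_induction with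
  | zero => simp
  | add a b _ _ ha hb => rw [add_mul]; exact add_mem ha hb
  | mem a ha =>
    obtain ⟨t, ht, x, hx, rfl⟩ := ha
    induction hw using AddSubmonoid.closure_induction with
    | zero => simp
    | add a b _ _ ha hb => rw [mul_add]; exact add_mem ha hb
    | mem b hb =>
      obtain ⟨s, hs, y, hy, rfl⟩ := hb
      refine AddSubmonoid.subset_closure ⟨t * s, P.mul_mem ht hs, x * y, k.mul_mem hx hy, ?_⟩
      rw [map_mul]
      ring

lemma wcone_le (hθ : ∀ b, θ b ∈ k) {z : Ω} (hz : z ∈ wcone θ P k) : z ∈ k := by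
  induction hz using AddSubmonoid.closure_induction with
  | zero => exact k.zero_mem
  | add a b _ _ ha hb => exact k.add_mem ha hb
  | mem a ha =>
    obtain ⟨t, ht, x, hx, rfl⟩ := ha
    exact k.mul_mem (hθ t) (k.mul_mem hx hx)

/-- Zorn: a maximal subfield over which the cone stays proper. It plays the role of a real closure. -/
lemma exists_maximal_subfield (k₀ : Subfield Ω) (h₀ : -1 ∉ wcone θ P k₀) :
    ∃ k : Subfield Ω, k₀ ≤ k ∧ -1 ∉ wcone θ P k ∧
      ∀ k' : Subfield Ω, k ≤ k' → -1 ∉ wcone θ P k' → k' ≤ k := by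
  obtain ⟨k, hk, hmax⟩ := zorn_le_nonempty₀ {k : Subfield Ω | -1 ∉ wcone θ P k} (by
    intro c hc hchain y hy
    have hdir : DirectedOn (· ≤ ·) c := hchain.directedOn
    refine ⟨sSup c, fun h => ?_, fun z hz => le_sSup hz⟩
    have key : ∀ z ∈ wcone θ P (sSup c), ∃ s ∈ c, z ∈ wcone θ P s := by
      intro z hz
      induction hz using AddSubmonoid.closure_induction with
      | zero => exact ⟨y, hy, zero_mem _⟩
      | add a b _ _ ha hb =>
        obtain ⟨s, hs, ha⟩ := ha
        obtain ⟨t, ht, hb⟩ := hb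
        obtain ⟨r, hr, hsr, htr⟩ := hdir s hs t ht
        exact ⟨r, hr, add_mem (wcone_mono hsr ha) (wcone_mono htr hb)⟩
      | mem a ha =>
        obtain ⟨t, ht, x, hx, rfl⟩ := ha
        obtain ⟨s, hs, hx⟩ := (Subfield.mem_sSup_of_directedOn ⟨y, hy⟩ hdir).1 hx
        exact ⟨s, hs, AddSubmonoid.subset_closure ⟨t, ht, x, hx, rfl⟩⟩
    obtain ⟨s, hs, h⟩ := key _ h
    exact hc hs h) k₀ h₀
  exact ⟨k, hk, hmax.prop, fun k' h1 h2 => hmax.2 h2 h1⟩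

/-- Simple algebraic extensions of a subfield, described by polynomials. -/
lemma exists_simple_ext (k : Subfield Ω) (α : Ω) {f : Polynomial k} (hf0 : f ≠ 0)
    (hf : Polynomial.aeval α f = 0) : ∃ k' : Subfield Ω, k ≤ k' ∧ α ∈ k' ∧
      ∀ x ∈ k', ∃ h : Polynomial k, x = Polynomial.aeval α h := by
  refine ⟨(IntermediateField.adjoin k {α}).toSubfield, ?_, ?_, ?_⟩
  · intro x hx
    exact (IntermediateField.adjoin k {α}).algebraMap_mem ⟨x, hx⟩
  · exact IntermediateField.mem_adjoin_simple_self k α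
  · intro x hx
    have hx : x ∈ (IntermediateField.adjoin k {α}).toSubalgebra := hx
    rw [IntermediateField.adjoin_simple_toSubalgebra_of_isAlgebraic ⟨f, hf0, hf⟩,
      Algebra.adjoin_singleton_eq_range_aeval] at hx
    obtain ⟨h, rfl⟩ := hx
    exact ⟨h, rfl⟩

section Maximal

variable [IsAlgClosed Ω] (hθ : ∀ b, θ b ∈ k) (hk : -1 ∉ wcone θ P k)
  (hmax : ∀ k' : Subfield Ω, k ≤ k' → -1 ∉ wcone θ P k' → k' ≤ k)

include hθ hk hmax in
/-- If `-c` is not in the cone, adjoining `√c` keeps the cone proper, so `√c` is already in `k`. -/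
lemma isSquare_of_neg_notMem (c : k) (hc : -(c : Ω) ∉ wcone θ P k) : IsSquare c := by
  obtain ⟨α, hα⟩ := IsAlgClosed.exists_pow_nat_eq (c : Ω) (n := 2) (by norm_num)
  have hα' : α * α = c := by rw [← hα, sq]
  suffices hmem : α ∈ k from ⟨⟨α, hmem⟩, Subtype.ext hα'.symm⟩
  by_contra hαk
  obtain ⟨k', hkk', hαk', hrep⟩ := exists_simple_ext k α
    (f := Polynomial.X ^ 2 - Polynomial.C c) (Polynomial.X_pow_sub_C_ne_zero (by norm_num) _)
    (by simp [hα, Subfield.algebraMap_ofSubfield])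
  have hlin : ∀ x ∈ k', ∃ u ∈ k, ∃ v ∈ k, x = u + v * α := by
    intro x hx
    obtain ⟨h, rfl⟩ := hrep x hx
    clear hx
    induction h using Polynomial.induction_on with
    | C a => exact ⟨a, a.2, 0, k.zero_mem, by simp [Subfield.algebraMap_ofSubfield]⟩
    | add p q hp hq =>
      obtain ⟨u, hu, v, hv, h1⟩ := hp
      obtain ⟨u', hu', v', hv', h2⟩ := hq
      exact ⟨u + u', k.add_mem hu hu', v + v', k.add_mem hv hv', by rw [map_add, h1, h2]; ring⟩
    | monomial n a ih =>
      obtain ⟨u, hu, v, hv, h1⟩ := ih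
      refine ⟨v * c, k.mul_mem hv c.2, u, hu, ?_⟩
      rw [pow_succ, ← mul_assoc, map_mul, h1, Polynomial.aeval_X, ← hα']
      ring
  -- the cone of the extension, split into its components along `1` and `α`
  have hform : ∀ z ∈ wcone θ P k', ∃ a ∈ wcone θ P k, ∃ b ∈ wcone θ P k, ∃ v ∈ k,
      z = a + c * b + v * α := by
    intro z hz
    induction hz using AddSubmonoid.closure_induction with
    | zero => exact ⟨0, zero_mem _, 0, zero_mem _, 0, k.zero_mem, by simp⟩
    | add x y _ _ hx hy =>
      obtain ⟨a, ha, b, hb, v, hv, rfl⟩ := hx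
      obtain ⟨a', ha', b', hb', v', hv', rfl⟩ := hy
      exact ⟨_, add_mem ha ha', _, add_mem hb hb', _, k.add_mem hv hv', by ring⟩
    | mem x hx =>
      obtain ⟨t, ht, y, hy, rfl⟩ := hx
      obtain ⟨u, hu, v, hv, rfl⟩ := hlin y hy
      refine ⟨θ t * (u * u), AddSubmonoid.subset_closure ⟨t, ht, u, hu, rfl⟩, θ t * (v * v),
        AddSubmonoid.subset_closure ⟨t, ht, v, hv, rfl⟩, θ t * (u * v + u * v),
        k.mul_mem (hθ t) (k.add_mem (k.mul_mem hu hv) (k.mul_mem hu hv)), ?_⟩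
      rw [← hα']
      ring
  refine hαk (hmax k' hkk' (fun h1 => ?_) hαk')
  obtain ⟨a, ha, b, hb, v, hv, h⟩ := hform _ h1
  by_cases hv0 : v = 0
  · have hb0 : b ≠ 0 := by
      rintro rfl
      refine hk ?_
      rw [h, hv0]
      simpa using ha
    refine hc ?_
    have : -(c : Ω) = (1 + a) * b * (b⁻¹ * b⁻¹) := by
      field_simp
      linear_combination h + α * hv0
    rw [this]
    refine wcone_mul (wcone_mul (add_mem ?_ ha) hb) (sq_mem_wcone (k.inv_mem (wcone_le hθ hb)))
    simpa using sq_mem_wcone (θ := θ) (P := P) k.one_mem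
  · refine hαk ?_
    have : α = (-1 - a - c * b) / v := by
      field_simp
      linear_combination -h
    rw [this]
    exact k.div_mem (k.sub_mem (k.sub_mem (k.neg_mem k.one_mem) (wcone_le hθ ha))
      (k.mul_mem c.2 (wcone_le hθ hb))) hv

include hθ hk hmax in
lemma mem_wcone_iff (c : k) : (c : Ω) ∈ wcone θ P k ↔ IsSquare c := by
  refine ⟨fun h => ?_, ?_⟩
  · by_cases hc0 : c = 0
    · exact hc0 ▸ IsSquare.zero
    refine isSquare_of_neg_notMem hθ hk hmax c fun h2 => hk ?_
    have hc0' : (c : Ω) ≠ 0 := by simpa using hc0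
    have : (-1 : Ω) = -c * c * ((c : Ω)⁻¹ * (c : Ω)⁻¹) := by field_simp
    rw [this]
    exact wcone_mul (wcone_mul h2 h) (sq_mem_wcone (k.inv_mem c.2))
  · rintro ⟨x, rfl⟩
    exact sq_mem_wcone x.2

include hθ hk hmax in
/-- A maximal subfield has the intermediate value property: a polynomial with a sign change has an
irreducible factor `f` with a sign change, and adjoining a root of `f` keeps the cone proper by
`not_dvd_one_add_sumSq`. -/
lemma exists_realClosed_order : ∃ (_ : LinearOrder k) (_ : IsStrictOrderedRing k),
    IVP k ∧ ∀ x : k, 0 ≤ x ↔ (x : Ω) ∈ wcone θ P k := by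
  have hiff := mem_wcone_iff hθ hk hmax
  obtain ⟨o, ho, hnn⟩ := exists_order_of_squares k (by
    intro c
    by_cases h : -(c : Ω) ∈ wcone θ P k
    · exact Or.inr ((hiff (-c)).1 h)
    · exact Or.inl (isSquare_of_neg_notMem hθ hk hmax c h)) (by
    intro a b ha hb
    exact (hiff _).1 (add_mem ((hiff a).2 ha) ((hiff b).2 hb))) (by
    intro h
    exact hk ((hiff (-1)).2 h))
  refine ⟨o, ho, ?_, fun x => (hnn x).trans (hiff x).symm⟩
  intro q a b hab ha hb
  obtain ⟨f, hf, hfq, hfs⟩ := exists_irreducible_factor a b q (mul_neg_of_neg_of_pos ha hb)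
  obtain ⟨α, hα⟩ := IsAlgClosed.exists_aeval_eq_zero Ω f
    (Polynomial.degree_pos_of_irreducible hf).ne'
  obtain ⟨k', hkk', hαk', hrep⟩ := exists_simple_ext k α hf.ne_zero hα
  have hform : ∀ z ∈ wcone θ P k', ∃ l : List (Polynomial k),
      z = Polynomial.aeval α (l.map fun h => h * h).sum := by
    intro z hz
    induction hz using AddSubmonoid.closure_induction with
    | zero => exact ⟨[], by simp⟩
    | add x y _ _ hx hy =>
      obtain ⟨l, rfl⟩ := hx
      obtain ⟨l', rfl⟩ := hy
      exact ⟨l ++ l', by simp⟩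
    | mem x hx =>
      obtain ⟨t, ht, y, hy, rfl⟩ := hx
      obtain ⟨h, rfl⟩ := hrep y hy
      obtain ⟨s, hs⟩ := (hiff ⟨θ t, hθ t⟩).1 (image_mem_wcone ht)
      have hs : θ t = (s : Ω) * s := congrArg Subtype.val hs
      refine ⟨[Polynomial.C s * h], ?_⟩
      simp only [List.map_cons, List.map_nil, List.sum_cons, List.sum_nil, add_zero, map_mul,
        Polynomial.aeval_C, Subfield.algebraMap_ofSubfield, Subfield.subtype_apply, hs]
      ring
  have hαk : α ∈ k := by
    refine hmax k' hkk' (fun h1 => ?_) hαk'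
    obtain ⟨l, hl⟩ := hform _ h1
    refine not_dvd_one_add_sumSq a b _ f rfl hfs l ?_
    have hmin : minpoly k α ∣ 1 + (l.map fun h => h * h).sum := by
      refine minpoly.dvd k α ?_
      rw [map_add, ← hl]
      simp
    refine dvd_trans ?_ hmin
    exact (minpoly.irreducible (isAlgebraic_iff_isIntegral.1 ⟨f, hf.ne_zero, hα⟩)).dvd_symm hf
      (minpoly.dvd k α hα)
  have hroot : f.eval ⟨α, hαk⟩ = 0 := by
    apply Subtype.ext
    have h1 := Polynomial.aeval_algebraMap_apply Ω (⟨α, hαk⟩ : k) f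
    change Polynomial.aeval α f = _ at h1
    rw [hα] at h1
    exact h1.symm
  obtain ⟨w, hw⟩ := Polynomial.dvd_iff_isRoot.2 hroot
  have hwu : IsUnit w := (hf.isUnit_or_isUnit hw).resolve_left (Polynomial.not_isUnit_X_sub_C _)
  obtain ⟨c, -, rfl⟩ := Polynomial.isUnit_iff.1 hwu
  have hlt : (a - ⟨α, hαk⟩) * (b - ⟨α, hαk⟩) < 0 := by
    by_contra hcon
    push Not at hcon
    rw [hw] at hfs
    simp only [Polynomial.eval_mul, Polynomial.eval_sub, Polynomial.eval_X, Polynomial.eval_C]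
      at hfs
    nlinarith [mul_nonneg hcon (mul_self_nonneg c)]
  refine ⟨⟨α, hαk⟩, ?_, ?_, ?_⟩
  · by_contra hcon
    push Not at hcon
    nlinarith [mul_nonneg (sub_nonneg.2 hcon) (sub_nonneg.2 (hcon.trans hab.le))]
  · by_contra hcon
    push Not at hcon
    nlinarith [mul_nonneg (sub_nonneg.2 hcon) (sub_nonneg.2 (hab.le.trans hcon))]
  · exact Polynomial.eval_eq_zero_of_dvd_of_eval_eq_zero hfq hroot

end Maximal

end RealClosure

/-! ### Real closed points of preorderings -/

section RealPoints

universe v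

/-- Every proper preordering of a commutative ring is nonnegative under some homomorphism to a
real closed field (a field with the intermediate value property). -/
theorem exists_realClosed_point {B : Type v} [CommRing B] (T : Subsemiring B)
    (hT : ∀ x, x * x ∈ T) (hT1 : -1 ∉ T) :
    ∃ (R : Type v) (_ : Field R) (_ : LinearOrder R) (_ : IsStrictOrderedRing R) (_ : IVP R)
      (θ : B →+* R), ∀ t ∈ T, 0 ≤ θ t := by
  obtain ⟨P, hTP, hP1, hmax⟩ := exists_maximal_preordering T hT hT1
  have hP : ∀ x, x * x ∈ P := fun x => hTP (hT x)
  let I : Ideal B := supp hP hP1 hmax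
  have hI : I.IsPrime := supp_isPrime hP hP1 hmax
  let F := FractionRing (B ⧸ I)
  let Ω := AlgebraicClosure F
  let θF : B →+* F := (algebraMap (B ⧸ I) F).comp (Ideal.Quotient.mk I)
  let θ : B →+* Ω := (algebraMap F Ω).comp θF
  have hθF0 : ∀ b, θF b = 0 ↔ b ∈ I := by
    intro b
    rw [← Ideal.Quotient.eq_zero_iff_mem]
    exact map_eq_zero_iff _ (IsFractionRing.injective (B ⧸ I) F)
  have hθ0 : ∀ b, θ b = 0 ↔ b ∈ I := fun b => by
    rw [← hθF0]
    exact map_eq_zero_iff _ (algebraMap F Ω).injective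
  let k₀ : Subfield Ω := (algebraMap F Ω).fieldRange
  have hθk₀ : ∀ b, θ b ∈ k₀ := fun b => ⟨θF b, rfl⟩
  have hclear : ∀ z ∈ wcone θ P k₀, ∃ b, θ b ≠ 0 ∧ ∃ t ∈ P, z * (θ b * θ b) = θ t := by
    intro z hz
    induction hz using AddSubmonoid.closure_induction with
    | zero => exact ⟨1, by simp, 0, P.zero_mem, by simp⟩
    | add x y _ _ hx hy =>
      obtain ⟨b, hb, t, ht, h1⟩ := hx
      obtain ⟨c, hc, s, hs, h2⟩ := hy
      refine ⟨b * c, by rw [map_mul]; exact mul_ne_zero hb hc, t * (c * c) + s * (b * b),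
        P.add_mem (P.mul_mem ht (hP c)) (P.mul_mem hs (hP b)), ?_⟩
      simp only [map_mul, map_add]
      linear_combination (θ c * θ c) * h1 + (θ b * θ b) * h2
    | mem x hx =>
      obtain ⟨t, ht, y, ⟨w, rfl⟩, rfl⟩ := hx
      obtain ⟨r, s, hs, rfl⟩ := IsFractionRing.div_surjective (A := B ⧸ I) w
      obtain ⟨b, rfl⟩ := Ideal.Quotient.mk_surjective r
      obtain ⟨c, rfl⟩ := Ideal.Quotient.mk_surjective s
      have hc : θ c ≠ 0 := by
        rw [Ne, hθ0, ← Ideal.Quotient.eq_zero_iff_mem]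
        exact nonZeroDivisors.ne_zero hs
      refine ⟨c, hc, t * (b * b), P.mul_mem ht (hP b), ?_⟩
      have e : algebraMap F Ω (algebraMap (B ⧸ I) F (Ideal.Quotient.mk I b) /
          algebraMap (B ⧸ I) F (Ideal.Quotient.mk I c)) = θ b / θ c := by
        rw [map_div₀]
        rfl
      rw [e, map_mul, map_mul]
      have e2 : θ b / θ c * θ c = θ b := div_mul_cancel₀ _ hc
      generalize θ b / θ c = x at e2
      linear_combination (θ t * (x * θ c + θ b)) * e2
  have hk₀ : -1 ∉ wcone θ P k₀ := by
    intro h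
    obtain ⟨b, hb, t, ht, h1⟩ := hclear _ h
    have h2 : θ (t + b * b) = 0 := by
      rw [map_add, map_mul]
      linear_combination -h1
    have h3 : -(t + b * b) ∈ P := ((hθ0 _).1 h2).2
    have h4 : b * b ∈ I := by
      refine ⟨hP b, ?_⟩
      have : -(b * b) = -(t + b * b) + t := by ring
      rw [this]
      exact P.add_mem h3 ht
    exact hb ((hθ0 b).2 ((hI.mem_or_mem h4).elim id id))
  obtain ⟨k, hk₀k, hk, hkmax⟩ := exists_maximal_subfield k₀ hk₀
  have hθk : ∀ b, θ b ∈ k := fun b => hk₀k (hθk₀ b)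
  obtain ⟨o, ho, hivp, hnn⟩ := exists_realClosed_order hθk hk hkmax
  refine ⟨k, inferInstance, o, ho, hivp, θ.codRestrict k hθk, fun t ht => ?_⟩
  exact (hnn _).2 (image_mem_wcone (hTP ht))

end RealPoints

/-! ### The generated preordering is a semiring -/

section Generated

variable {E : Type*} [CommRing E] {m : ℕ}

lemma mul_prod_mem_genPreordering (g : Fin m → E) {s : E} (hs : IsSumSq s) (ν : Fin m → Bool) :
    s * ∏ j, (if ν j then g j else 1) ∈ genPreordering g := by
  classical
  refine ⟨Pi.single ν s, fun μ => ?_, ?_⟩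
  · by_cases h : μ = ν
    · subst h; simpa using hs
    · simp [h]
  · rw [Finset.sum_eq_single ν]
    · simp
    · intro μ _ hμ
      simp [hμ]
    · simp

lemma add_mem_genPreordering (g : Fin m → E) {x y : E} (hx : x ∈ genPreordering g)
    (hy : y ∈ genPreordering g) : x + y ∈ genPreordering g := by
  obtain ⟨σ, hσ, rfl⟩ := hx
  obtain ⟨τ, hτ, rfl⟩ := hy
  refine ⟨fun ν => σ ν + τ ν, fun ν => (hσ ν).add (hτ ν), ?_⟩
  rw [← Finset.sum_add_distrib]
  simp only [add_mul]

lemma zero_mem_genPreordering (g : Fin m → E) : (0 : E) ∈ genPreordering g :=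
  ⟨0, fun _ => IsSumSq.zero, by simp⟩

lemma sum_mem_genPreordering (g : Fin m → E) {ι : Type*} (s : Finset ι) (f : ι → E)
    (hf : ∀ i ∈ s, f i ∈ genPreordering g) : ∑ i ∈ s, f i ∈ genPreordering g :=
  Finset.sum_induction f (· ∈ genPreordering g) (fun _ _ => add_mem_genPreordering g)
    (zero_mem_genPreordering g) hf

lemma mul_mem_genPreordering (g : Fin m → E) {x y : E} (hx : x ∈ genPreordering g)
    (hy : y ∈ genPreordering g) : x * y ∈ genPreordering g := by
  obtain ⟨σ, hσ, rfl⟩ := hx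
  obtain ⟨τ, hτ, rfl⟩ := hy
  rw [Finset.sum_mul_sum]
  refine sum_mem_genPreordering g _ _ fun ν _ => sum_mem_genPreordering g _ _ fun μ _ => ?_
  -- the repeated factors of a product of two monomials in the `gⱼ` form a square
  have key : (∏ j, (if ν j then g j else 1)) * ∏ j, (if μ j then g j else 1) =
      (∏ j, (if ν j && μ j then g j else 1)) * (∏ j, (if ν j && μ j then g j else 1)) *
        ∏ j, (if xor (ν j) (μ j) then g j else 1) := by
    simp only [← Finset.prod_mul_distrib]
    refine Finset.prod_congr rfl fun j _ => ?_
    cases ν j <;> cases μ j <;> simp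
  have e : σ ν * (∏ j, (if ν j then g j else 1)) * (τ μ * ∏ j, (if μ j then g j else 1)) =
      σ ν * τ μ * ((∏ j, (if ν j && μ j then g j else 1)) *
        (∏ j, (if ν j && μ j then g j else 1))) *
        ∏ j, (if xor (ν j) (μ j) then g j else 1) := by
    linear_combination (σ ν * τ μ) * key
  rw [e]
  exact mul_prod_mem_genPreordering g
    (((hσ ν).mul (hτ μ)).mul (IsSumSq.mul_self _)) fun j => xor (ν j) (μ j)

lemma sumSq_mem_genPreordering (g : Fin m → E) {s : E} (hs : IsSumSq s) :
    s ∈ genPreordering g := by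
  simpa using mul_prod_mem_genPreordering g hs fun _ => false

/-- `genPreordering g` as a subsemiring. -/
def preord (g : Fin m → E) : Subsemiring E where
  carrier := genPreordering g
  zero_mem' := zero_mem_genPreordering g
  one_mem' := sumSq_mem_genPreordering g (by simp)
  add_mem' := add_mem_genPreordering g
  mul_mem' := mul_mem_genPreordering g

lemma mem_preord {g : Fin m → E} {x : E} : x ∈ preord g ↔ x ∈ genPreordering g := Iff.rfl

lemma sq_mem_preord (g : Fin m → E) (x : E) : x * x ∈ preord g :=
  sumSq_mem_genPreordering g (IsSumSq.mul_self x)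

lemma gen_mem_preord (g : Fin m → E) (i : Fin m) : g i ∈ preord g := by
  classical
  have := mul_prod_mem_genPreordering g (s := 1) (by simp)
    (fun j => decide (j = i))
  simpa [mem_preord] using this

lemma preord_le {g : Fin m → E} {T : Subsemiring E} (hT : ∀ x, x * x ∈ T) (hg : ∀ i, g i ∈ T) :
    preord g ≤ T := by
  rintro x ⟨σ, hσ, rfl⟩
  refine T.sum_mem fun ν _ => T.mul_mem ?_ (T.prod_mem fun j _ => ?_)
  · have h := hσ ν
    generalize σ ν = s at h
    induction h with
    | zero => exact T.zero_mem
    | sq_add a _ ih => exact T.add_mem (hT a) ih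
  · split_ifs
    · exact hg j
    · exact T.one_mem

end Generated

/-! ### Elements bounded with respect to a preordering -/

section Bounded

variable {B : Type*} [CommRing B] [Algebra ℝ B] {T : Subsemiring B} (hT : ∀ x, x * x ∈ T)

include hT in
lemma algebraMap_mem {c : ℝ} (hc : 0 ≤ c) : algebraMap ℝ B c ∈ T := by
  rw [← Real.mul_self_sqrt hc, map_mul]
  exact hT _

include hT in
lemma const_mul_mem {c : ℝ} (hc : 0 ≤ c) {x : B} (hx : x ∈ T) : algebraMap ℝ B c * x ∈ T :=
  T.mul_mem (algebraMap_mem hT hc) hx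

include hT in
lemma mem_of_const_mul_mem {c : ℝ} (hc : 0 < c) {x : B} (hx : algebraMap ℝ B c * x ∈ T) :
    x ∈ T := by
  have := const_mul_mem hT (inv_nonneg.2 hc.le) hx
  rwa [← mul_assoc, ← map_mul, inv_mul_cancel₀ hc.ne', map_one, one_mul] at this

/-- `b` is bounded, with respect to the preordering `T`, by a constant multiple of a power
of `P`. -/
def IsBd (T : Subsemiring B) (P b : B) : Prop :=
  ∃ N : ℝ, 0 ≤ N ∧ ∃ M : ℕ, algebraMap ℝ B N * P ^ M + b ∈ T ∧ algebraMap ℝ B N * P ^ M - b ∈ T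

variable {P : B}

include hT in
lemma pow_bound (hP : P ∈ T) {C : ℝ} (hC : algebraMap ℝ B C * P - 1 ∈ T) (hC0 : 0 ≤ C)
    (i j : ℕ) : algebraMap ℝ B (C ^ j) * P ^ (i + j) - P ^ i ∈ T := by
  induction j with
  | zero => simp [T.zero_mem]
  | succ j ih =>
    have h1 := T.mul_mem (T.mul_mem (algebraMap_mem hT (pow_nonneg hC0 j)) (T.pow_mem hP (i + j)))
      hC
    have e : algebraMap ℝ B (C ^ (j + 1)) * P ^ (i + (j + 1)) - P ^ i =
        (algebraMap ℝ B (C ^ j) * P ^ (i + j) - P ^ i) +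
          algebraMap ℝ B (C ^ j) * P ^ (i + j) * (algebraMap ℝ B C * P - 1) := by
      rw [pow_succ C j, map_mul]
      ring
    rw [e]
    exact T.add_mem ih h1

include hT in
lemma IsBd.add (hP : P ∈ T) {C : ℝ} (hC : algebraMap ℝ B C * P - 1 ∈ T) (hC0 : 0 ≤ C)
    {a b : B} (ha : IsBd T P a) (hb : IsBd T P b) : IsBd T P (a + b) := by
  obtain ⟨N₁, hN₁, M₁, h1, h2⟩ := ha
  obtain ⟨N₂, hN₂, M₂, h3, h4⟩ := hb
  have k1 := const_mul_mem hT hN₁ (pow_bound hT hP hC hC0 M₁ M₂)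
  have k2 := const_mul_mem hT hN₂ (pow_bound hT hP hC hC0 M₂ M₁)
  refine ⟨N₁ * C ^ M₂ + N₂ * C ^ M₁, by positivity, M₁ + M₂, ?_, ?_⟩
  · convert T.add_mem (T.add_mem h1 k1) (T.add_mem h3 k2) using 1
    simp only [map_add, map_mul]
    ring
  · convert T.add_mem (T.add_mem h2 k1) (T.add_mem h4 k2) using 1
    simp only [map_add, map_mul]
    ring

include hT in
lemma IsBd.mul {a b : B} (ha : IsBd T P a) (hb : IsBd T P b) : IsBd T P (a * b) := by
  obtain ⟨N₁, hN₁, M₁, h1, h2⟩ := ha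
  obtain ⟨N₂, hN₂, M₂, h3, h4⟩ := hb
  refine ⟨N₁ * N₂, by positivity, M₁ + M₂, ?_, ?_⟩
  · refine mem_of_const_mul_mem hT (c := 2) two_pos ?_
    convert T.add_mem (T.mul_mem h1 h3) (T.mul_mem h2 h4) using 1
    simp only [map_ofNat, map_mul]
    ring
  · refine mem_of_const_mul_mem hT (c := 2) two_pos ?_
    convert T.add_mem (T.mul_mem h1 h4) (T.mul_mem h2 h3) using 1
    simp only [map_ofNat, map_mul]
    ring

include hT in
lemma isBd_const (c : ℝ) : IsBd T P (algebraMap ℝ B c) := by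
  refine ⟨|c|, abs_nonneg c, 0, ?_, ?_⟩
  · rw [pow_zero, mul_one, ← map_add]
    exact algebraMap_mem hT (by linarith [neg_abs_le c])
  · rw [pow_zero, mul_one, ← map_sub]
    exact algebraMap_mem hT (by linarith [le_abs_self c])

include hT in
/-- From `x² ≤ N Pᴹ - 1` it follows that `|x| ≤ N Pᴹ`, since `|x| ≤ x² + 1`. -/
lemma isBd_of_sq {N : ℝ} (hN : 0 ≤ N) {M : ℕ} {x : B}
    (h : algebraMap ℝ B N * P ^ M - 1 - x * x ∈ T) : IsBd T P x := by
  refine ⟨N, hN, M, ?_, ?_⟩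
  · convert T.add_mem h (T.add_mem (hT (x + algebraMap ℝ B (1 / 2)))
      (algebraMap_mem hT (c := 3 / 4) (by norm_num))) using 1
    have e1 : (2 : B) * algebraMap ℝ B (1 / 2) = 1 := by
      rw [← map_ofNat (algebraMap ℝ B) 2, ← map_mul]; norm_num
    have e2 : algebraMap ℝ B (1 / 2) * algebraMap ℝ B (1 / 2) + algebraMap ℝ B (3 / 4) = 1 := by
      rw [← map_mul, ← map_add]; norm_num
    linear_combination -x * e1 - e2
  · convert T.add_mem h (T.add_mem (hT (x - algebraMap ℝ B (1 / 2)))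
      (algebraMap_mem hT (c := 3 / 4) (by norm_num))) using 1
    have e1 : (2 : B) * algebraMap ℝ B (1 / 2) = 1 := by
      rw [← map_ofNat (algebraMap ℝ B) 2, ← map_mul]; norm_num
    have e2 : algebraMap ℝ B (1 / 2) * algebraMap ℝ B (1 / 2) + algebraMap ℝ B (3 / 4) = 1 := by
      rw [← map_mul, ← map_add]; norm_num
    linear_combination x * e1 - e2

/-- The subalgebra of elements bounded by constant multiples of powers of `P`. -/
def bdAlg (hT : ∀ x, x * x ∈ T) (hP : P ∈ T) {C : ℝ} (hC : algebraMap ℝ B C * P - 1 ∈ T)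
    (hC0 : 0 ≤ C) : Subalgebra ℝ B where
  carrier := {b | IsBd T P b}
  add_mem' := IsBd.add hT hP hC hC0
  mul_mem' := IsBd.mul hT
  algebraMap_mem' := isBd_const hT

/-- Elements bounded by real constants. -/
def bdd (hT : ∀ x, x * x ∈ T) : Subalgebra ℝ B :=
  bdAlg (T := T) (P := 1) hT T.one_mem (C := 1) (by simp [T.zero_mem]) zero_le_one

lemma mem_bdd {hT : ∀ x, x * x ∈ T} {b : B} : b ∈ bdd hT ↔
    ∃ N : ℝ, 0 ≤ N ∧ algebraMap ℝ B N + b ∈ T ∧ algebraMap ℝ B N - b ∈ T := by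
  change IsBd T 1 b ↔ _
  simp [IsBd]

include hT in
/-- If `T` bounds the coordinates by powers of `P` and `y²` by a constant, then it bounds every
element of the algebra generated by the coordinates and `y` by powers of `P`. -/
lemma isBd_all {n : ℕ} (π : MvPolynomial (Fin n) ℝ →ₐ[ℝ] B) (y : B)
    (hB : ∀ b, ∃ f N, b = π f * y ^ N) (hP : P ∈ T) {C : ℝ} (hC0 : 0 ≤ C)
    (hC : algebraMap ℝ B C * P - 1 - ∑ i, π (X i) * π (X i) ∈ T)
    {c : ℝ} (hc0 : 0 ≤ c) (hc : algebraMap ℝ B c - y * y ∈ T) (b : B) : IsBd T P b := by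
  have hC1 : algebraMap ℝ B C * P - 1 ∈ T := by
    convert T.add_mem hC (T.sum_mem fun i (_ : i ∈ Finset.univ) => hT (π (X i))) using 1
    ring
  have hX : ∀ i, IsBd T P (π (X i)) := by
    intro i
    refine isBd_of_sq hT (N := C) hC0 (M := 1) ?_
    convert T.add_mem hC (T.sum_mem fun j (_ : j ∈ Finset.univ.erase i) => hT (π (X j))) using 1
    rw [← Finset.add_sum_erase Finset.univ (fun j => π (X j) * π (X j)) (Finset.mem_univ i)]
    ring
  have hy : IsBd T P y := by
    refine isBd_of_sq hT (N := c + 1) (by linarith) (M := 0) ?_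
    convert hc using 1
    rw [map_add, map_one]
    ring
  let A := bdAlg hT hP hC1 hC0
  obtain ⟨f, N, rfl⟩ := hB b
  have hf : π f ∈ A := by
    induction f using MvPolynomial.induction_on with
    | C a =>
      have : π (MvPolynomial.C a) = algebraMap ℝ B a := π.commutes a
      rw [this]
      exact A.algebraMap_mem a
    | add f g hf hg => rw [map_add]; exact A.add_mem hf hg
    | mul_X f i hf => rw [map_mul]; exact A.mul_mem hf (hX i)
  exact A.mul_mem hf (A.pow_mem hy N)

end Bounded

/-! ### Positivstellensatz and growth of the coordinates -/

section Positivstellensatz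

variable {B : Type*} [CommRing B] [Algebra ℝ B] {T : Subsemiring B} (hT : ∀ x, x * x ∈ T)
  {n m : ℕ} (π : MvPolynomial (Fin n) ℝ →ₐ[ℝ] B) (g : Fin m → MvPolynomial (Fin n) ℝ)
  (hg : ∀ i, π (g i) ∈ T)

/-- If `-1` lies in the preordering `T - fT`, then `f` becomes an element of `T` after
multiplication by some `1 + t`. -/
lemma mul_mem_of_neg_one_mem {A : Type*} [CommRing A] {T : Subsemiring A}
    {hT : ∀ x, x * x ∈ T} {f : A} (h : -1 ∈ adj T hT (-f)) : ∃ t ∈ T, (1 + t) * f ∈ T := by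
  obtain ⟨a, ha, b, hb, h⟩ := mem_adj.1 h
  refine ⟨a, ha, ?_⟩
  have e : (1 + a) * f = f * f * b := by linear_combination -f * h
  rw [e]
  exact T.mul_mem (hT f) hb

include hT hg in
/-- The Positivstellensatz of Krivine and Stengle, for an algebra `B` over the polynomial ring. If
`-1 ∉ T - fT`, a real closed point of `T - fT` is moved to a real point by Artin–Lang, where
`f ≤ 0`. -/
lemma positivstellensatz (f : MvPolynomial (Fin n) ℝ) (hf : ∀ x ∈ KS g, 0 < eval x f) :
    ∃ t ∈ T, (1 + t) * π f ∈ T := by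
  classical
  by_cases h : -1 ∈ adj T hT (-π f)
  · exact mul_mem_of_neg_one_mem h
  exfalso
  obtain ⟨R, _, _, _, hR, θ, hθ⟩ := exists_realClosed_point (adj T hT (-π f))
    (fun x => le_adj (hT x)) h
  let ρ : ℝ →+* R := θ.comp (algebraMap ℝ B)
  let a : Fin n → R := fun i => θ (π (X i))
  have heval : ∀ q : MvPolynomial (Fin n) ℝ, eval₂ ρ a q = θ (π q) := by
    intro q
    have : eval₂Hom ρ a = θ.comp (π : MvPolynomial (Fin n) ℝ →+* B) := by
      refine MvPolynomial.ringHom_ext (fun r => ?_) (fun i => ?_)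
      · rw [coe_eval₂Hom, eval₂_C]
        exact congrArg θ (π.commutes r).symm
      · rw [coe_eval₂Hom, eval₂_X]
        rfl
    exact congrArg (fun F : MvPolynomial (Fin n) ℝ →+* R => F q) this
  obtain ⟨x, hx, -⟩ := artin_lang hR ρ a (insert f (Finset.univ.image g)) (fun _ => 0)
  have hxK : x ∈ KS g := by
    intro i
    have h1 := hx (g i) (by simp)
    have h2 : 0 ≤ eval₂ ρ a (g i) := by rw [heval]; exact hθ _ (le_adj (hg i))
    rw [← sign_nonneg_iff] at h2 ⊢
    rwa [h1]
  have h1 := hx f (by simp)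
  have h2 : eval₂ ρ a f ≤ 0 := by
    rw [heval]
    have := hθ _ (self_mem_adj (P := T) (hP := hT) (x := -π f))
    rw [map_neg] at this
    linarith
  have h3 := hf x hxK
  rw [← sign_eq_one_iff] at h3
  rw [h3] at h1
  have := sign_eq_one_iff.1 h1.symm
  exact absurd h2 (not_le.2 this)

include hT in
/-- The arithmetic–geometric mean inequality `vʲ ≤ a vʲ⁺¹ + C`, certified in `T`. -/
lemma amgm {v : B} (hv : v ∈ T) (j : ℕ) : ∀ a : ℝ, 0 < a → ∃ C : ℝ, 0 ≤ C ∧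
    algebraMap ℝ B a * v ^ (j + 1) + algebraMap ℝ B C - v ^ j ∈ T := by
  induction j with
  | zero =>
    intro a ha
    refine ⟨1, zero_le_one, ?_⟩
    simpa using const_mul_mem hT ha.le hv
  | succ j ih =>
    intro a ha
    obtain ⟨C, hC, h⟩ := ih a ha
    refine ⟨C / a, by positivity, ?_⟩
    have h1 := const_mul_mem hT (inv_nonneg.2 ha.le) h
    have h2 := const_mul_mem hT ha.le (T.mul_mem (T.pow_mem hv j) (hT (v - algebraMap ℝ B a⁻¹)))
    convert T.add_mem h1 h2 using 1
    have e : algebraMap ℝ B a * algebraMap ℝ B a⁻¹ = 1 := by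
      rw [← map_mul, mul_inv_cancel₀ ha.ne', map_one]
    rw [div_eq_mul_inv, map_mul]
    linear_combination (v ^ (j + 1) - algebraMap ℝ B a⁻¹ * v ^ j) * e

include hT in
/-- If a power of `v ∈ T` is bounded by a constant, then so is `v`. -/
lemma bounded_of_pow {v : B} (hv : v ∈ T) (j : ℕ) (c : ℝ) (hc0 : 0 ≤ c)
    (hc : algebraMap ℝ B c - v ^ (j + 1) ∈ T) :
    ∃ c' : ℝ, 0 ≤ c' ∧ algebraMap ℝ B c' - v ∈ T := by
  induction j generalizing c with
  | zero => exact ⟨c, hc0, by simpa using hc⟩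
  | succ j ih =>
    obtain ⟨C, hC, h⟩ := amgm hT hv (j + 1) 1 one_pos
    refine ih (c + C) (by positivity) ?_
    convert T.add_mem hc h using 1
    rw [map_add, map_one]
    ring

end Positivstellensatz

section Archimedean

variable {B : Type*} [CommRing B] [Algebra ℝ B] {T : Subsemiring B} (hT : ∀ x, x * x ∈ T)
  {n m : ℕ} (π : MvPolynomial (Fin n) ℝ →ₐ[ℝ] B) (g : Fin m → MvPolynomial (Fin n) ℝ)
  (hg : ∀ i, π (g i) ∈ T)
  (p : MvPolynomial (Fin n) ℝ) (y : B) (hpy : π p * y = 1) (hB : ∀ b, ∃ f N, b = π f * y ^ N)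
  (k : ℝ) (hk : 0 ≤ k) (hp1 : ∀ x ∈ KS g, 1 ≤ eval x p)
  (hpgrow : ∀ x ∈ KS g, ∑ i, (x i) ^ 2 ≤ k * eval x p)

include hT hg hpy hB hk hp1 hpgrow in
/-- The coordinates are bounded, with respect to `T` itself, by a polynomial in `p²`. The
Positivstellensatz gives `(1 + t) G ∈ T` for `G = κ p² - 1 - ∑ Xᵢ²`; the multiplier `t` is removed by
bounding it by a multiple of a power of `p²` with respect to the larger preordering `T + GT`, in
which the coordinates are bounded. -/
lemma growth_certificate : ∃ (κ N : ℝ) (M : ℕ), 0 < κ ∧ 0 ≤ N ∧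
    algebraMap ℝ B κ * (π p * π p * ((1 + algebraMap ℝ B N * (π p * π p) ^ M) *
      (1 + algebraMap ℝ B N * (π p * π p) ^ M))) - 1 - ∑ i, π (X i) * π (X i) ∈ T := by
  -- on `K` one has `1 + ∑ Xᵢ² ≤ p² + k p² < (k + 2) p²`
  set κ : ℝ := k + 2 with hκ
  have hκ0 : 0 < κ := by positivity
  set P : B := π p * π p with hP
  set Sq : B := ∑ i, π (X i) * π (X i) with hSq
  have hPT : P ∈ T := hT _
  have hSqT : Sq ∈ T := T.sum_mem fun i _ => hT _
  let G : MvPolynomial (Fin n) ℝ := MvPolynomial.C κ * (p * p) - 1 - ∑ i, X i * X i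
  have hπG : π G = algebraMap ℝ B κ * P - 1 - Sq := by
    simp only [G, map_sub, map_mul, map_one, map_sum, hP, hSq]
    rw [show π (MvPolynomial.C κ) = algebraMap ℝ B κ from π.commutes κ]
  obtain ⟨t, ht, hG⟩ := positivstellensatz hT π g hg G (by
    intro x hx
    have h1 := hp1 x hx
    have h2 := hpgrow x hx
    simp only [G, map_sub, map_mul, map_one, map_sum, eval_C, eval_X]
    simp only [pow_two] at h2
    nlinarith [mul_le_mul_of_nonneg_left (le_mul_of_one_le_left (zero_le_one.trans h1) h1) hk])
  rw [hπG] at hG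
  set T' := adj T hT (π G)
  have hTT' : T ≤ T' := le_adj
  have hGT' : algebraMap ℝ B κ * P - 1 - Sq ∈ T' := hπG ▸ self_mem_adj
  have hPy : P * (y * y) = 1 := by rw [hP]; linear_combination (π p * y + 1) * hpy
  obtain ⟨N, hN, M, -, hb⟩ := isBd_all (T := T') (fun x => hTT' (hT x)) π y hB (hTT' hPT) hκ0.le
    hGT' hκ0.le (c := κ) (by
      have h1 := T'.mul_mem (T'.add_mem hGT' (hTT' hSqT)) (hTT' (hT y))
      convert h1 using 1
      linear_combination -algebraMap ℝ B κ * hPy) t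
  obtain ⟨a, ha, b, hb, hab⟩ := mem_adj.1 hb
  rw [hπG] at hab
  refine ⟨κ, N / 2, M, hκ0, by positivity, ?_⟩
  set q := algebraMap ℝ B (N / 2) * P ^ M with hq
  have hq2 : algebraMap ℝ B N * P ^ M = 2 * q := by
    rw [hq, ← mul_assoc, ← map_ofNat (algebraMap ℝ B) 2, ← map_mul]
    congr 2
    ring
  rw [hq2] at hab
  have h1 : (2 * q + q * q) - t ∈ T := by
    have e : (2 * q + q * q) - t =
        (1 + t) * a + (1 + t) * (algebraMap ℝ B κ * P - 1 - Sq) * b + (q - t) * (q - t) := by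
      linear_combination (1 + t) * hab
    rw [e]
    exact T.add_mem (T.add_mem (T.mul_mem (T.add_mem T.one_mem ht) ha) (T.mul_mem hG hb)) (hT _)
  have e : algebraMap ℝ B κ * (P * ((1 + q) * (1 + q))) - 1 - Sq =
      algebraMap ℝ B κ * P * ((2 * q + q * q) - t) + (1 + t) * (algebraMap ℝ B κ * P - 1 - Sq) +
        t * (1 + Sq) := by ring
  rw [e]
  exact T.add_mem (T.add_mem (T.mul_mem (const_mul_mem hT hκ0.le hPT) h1) hG)
    (T.mul_mem ht (T.add_mem T.one_mem hSqT))

include hT hg hpy hB hk hp1 hpgrow in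
/-- Some power of `1/p²` turns any given element into one bounded by a real constant. -/
lemma exists_mul_pow_bounded : y * y ∈ bdd hT ∧ ∀ b : B, ∃ l : ℕ, b * (y * y) ^ l ∈ bdd hT := by
  obtain ⟨κ, N, M, hκ, hN, hcert⟩ := growth_certificate hT π g hg p y hpy hB k hk hp1 hpgrow
  set P : B := π p * π p with hP
  set v : B := y * y with hv
  have hvT : v ∈ T := hT y
  have hPT : P ∈ T := hT _
  have hPv : P * v = 1 := by rw [hP, hv]; linear_combination (π p * y + 1) * hpy
  have hPvM : ∀ j, P ^ j * v ^ j = 1 := fun j => by rw [← mul_pow, hPv, one_pow]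
  set P₂ : B := P * ((1 + algebraMap ℝ B N * P ^ M) * (1 + algebraMap ℝ B N * P ^ M)) with hP₂
  have hP₂v : P₂ * v ^ (2 * M + 1) = (v ^ M + algebraMap ℝ B N) * (v ^ M + algebraMap ℝ B N) := by
    have e : P₂ * v ^ (2 * M + 1) = P * v * ((v ^ M + algebraMap ℝ B N * (P ^ M * v ^ M)) *
        (v ^ M + algebraMap ℝ B N * (P ^ M * v ^ M))) := by
      rw [hP₂]
      ring
    rw [e, hPv, hPvM]
    ring
  have hP₂T : P₂ ∈ T := T.mul_mem hPT (hT _)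
  -- `v = 1/p²` is bounded
  obtain ⟨c, hc0, hc⟩ : ∃ c : ℝ, 0 ≤ c ∧ algebraMap ℝ B c - v ∈ T := by
    obtain ⟨C, hC, h⟩ := amgm hT hvT (2 * M) (1 / (4 * κ)) (by positivity)
    refine bounded_of_pow hT hvT (2 * M) (4 * κ * C + 4 * κ * N ^ 2) (by positivity) ?_
    refine mem_of_const_mul_mem hT (c := 1 / 2) (by norm_num) ?_
    have h0 : algebraMap ℝ B κ * P₂ - 1 ∈ T := by
      convert T.add_mem hcert (T.sum_mem fun i (_ : i ∈ Finset.univ) => hT (π (X i))) using 1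
      ring
    have h1 := T.mul_mem h0 (T.pow_mem hvT (2 * M + 1))
    have h2 := const_mul_mem hT hκ.le (hT (v ^ M - algebraMap ℝ B N))
    have h3 := const_mul_mem hT (c := 2 * κ) (by positivity) h
    convert T.add_mem (T.add_mem h1 h2) h3 using 1
    have e1 : algebraMap ℝ B (2 * κ) * algebraMap ℝ B (1 / (4 * κ)) = algebraMap ℝ B (1 / 2) := by
      rw [← map_mul]
      congr 1
      field_simp
      norm_num
    have e2 : algebraMap ℝ B (1 / 2) * 2 = 1 := by
      rw [← map_ofNat (algebraMap ℝ B) 2, ← map_mul]; norm_num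
    have e3 : algebraMap ℝ B (4 * κ * C + 4 * κ * N ^ 2) =
      4 * algebraMap ℝ B κ * algebraMap ℝ B C + 4 * algebraMap ℝ B κ * algebraMap ℝ B N ^ 2 := by
      simp only [map_add, map_mul, map_pow, map_ofNat]
    have e4 : algebraMap ℝ B (2 * κ) = 2 * algebraMap ℝ B κ := by rw [map_mul, map_ofNat]
    rw [e3]
    rw [e4] at e1 ⊢
    linear_combination (-algebraMap ℝ B κ) * hP₂v - v ^ (2 * M + 1) * e1 +
      (2 * algebraMap ℝ B κ * algebraMap ℝ B C + 2 * algebraMap ℝ B κ * algebraMap ℝ B N ^ 2 -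
        v ^ (2 * M + 1)) * e2
  have hvH : v ∈ bdd hT := mem_bdd.2 ⟨c, hc0, T.add_mem (algebraMap_mem hT hc0) hvT, hc⟩
  refine ⟨hvH, fun b => ?_⟩
  obtain ⟨N', hN', M', h1, h2⟩ := isBd_all hT π y hB hP₂T hκ.le hcert hc0 hc b
  refine ⟨(2 * M + 1) * M', ?_⟩
  set s : B := algebraMap ℝ B N' * (P₂ * v ^ (2 * M + 1)) ^ M' with hs
  have hsH : s ∈ bdd hT := by
    rw [hs, hP₂v]
    have h3 := (bdd hT).add_mem ((bdd hT).pow_mem hvH M) ((bdd hT).algebraMap_mem N)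
    exact (bdd hT).mul_mem ((bdd hT).algebraMap_mem N') ((bdd hT).pow_mem
      ((bdd hT).mul_mem h3 h3) M')
  obtain ⟨K, hK, -, h4⟩ := mem_bdd.1 hsH
  have hw : v ^ ((2 * M + 1) * M') ∈ T := T.pow_mem hvT _
  have hs' : s = algebraMap ℝ B N' * P₂ ^ M' * v ^ ((2 * M + 1) * M') := by
    rw [hs, mul_pow, ← pow_mul]
    ring
  refine mem_bdd.2 ⟨K, hK, ?_, ?_⟩
  · convert T.add_mem h4 (T.mul_mem h1 hw) using 1
    rw [hs']
    ring
  · convert T.add_mem h4 (T.mul_mem h2 hw) using 1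
    rw [hs']
    ring

end Archimedean

/-! ### Real homomorphisms and approximation -/

section StandardPart

variable {A : Type*} [CommRing A] [Algebra ℝ A]

/-- `x` is infinitesimal with respect to `P`. -/
def Infinitesimal (P : Subsemiring A) (x : A) : Prop :=
  ∀ ε : ℝ, 0 < ε → algebraMap ℝ A ε + x ∈ P ∧ algebraMap ℝ A ε - x ∈ P

variable {P : Subsemiring A} (hP : ∀ x, x * x ∈ P)

lemma Infinitesimal.add {x y : A} (hx : Infinitesimal P x) (hy : Infinitesimal P y) :
    Infinitesimal P (x + y) := by
  intro ε hε
  have h1 := hx (ε / 2) (half_pos hε)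
  have h2 := hy (ε / 2) (half_pos hε)
  have e : algebraMap ℝ A ε = algebraMap ℝ A (ε / 2) + algebraMap ℝ A (ε / 2) := by
    rw [← map_add, add_halves]
  constructor
  · convert P.add_mem h1.1 h2.1 using 1
    rw [e]; ring
  · convert P.add_mem h1.2 h2.2 using 1
    rw [e]; ring

include hP in
lemma Infinitesimal.mul {x b : A} (hx : Infinitesimal P x) (hb : b ∈ bdd hP) :
    Infinitesimal P (x * b) := by
  obtain ⟨N, hN, h1, h2⟩ := mem_bdd.1 hb
  intro ε hε
  have h3 := hx (ε / (N + 1)) (by positivity)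
  have hu : algebraMap ℝ A 1 ∈ P := algebraMap_mem hP zero_le_one
  have h1' : algebraMap ℝ A (N + 1) + b ∈ P := by
    convert P.add_mem h1 hu using 1
    rw [map_add]; ring
  have h2' : algebraMap ℝ A (N + 1) - b ∈ P := by
    convert P.add_mem h2 hu using 1
    rw [map_add]; ring
  have e : algebraMap ℝ A ε = algebraMap ℝ A (ε / (N + 1)) * algebraMap ℝ A (N + 1) := by
    rw [← map_mul, div_mul_cancel₀ _ (by positivity)]
  constructor
  · refine mem_of_const_mul_mem hP (c := 2) two_pos ?_
    convert P.add_mem (P.mul_mem h3.1 h1') (P.mul_mem h3.2 h2') using 1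
    rw [e, map_ofNat]; ring
  · refine mem_of_const_mul_mem hP (c := 2) two_pos ?_
    convert P.add_mem (P.mul_mem h3.1 h2') (P.mul_mem h3.2 h1') using 1
    rw [e, map_ofNat]; ring

include hP in
/-- A total archimedean preordering admits standard parts. -/
lemma exists_standard_part (htot : ∀ x, x ∈ P ∨ -x ∈ P) (hP1 : -1 ∉ P) {b : A}
    (hb : b ∈ bdd hP) : ∃ r : ℝ, Infinitesimal P (b - algebraMap ℝ A r) := by
  obtain ⟨N, hN, h1, h2⟩ := mem_bdd.1 hb
  have hneg : ∀ c : ℝ, algebraMap ℝ A c ∈ P → 0 ≤ c := by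
    intro c hc
    by_contra h
    push Not at h
    refine hP1 ?_
    refine mem_of_const_mul_mem hP (c := -c) (by linarith) ?_
    convert hc using 1
    rw [map_neg]; ring
  let S : Set ℝ := {r | algebraMap ℝ A r - b ∈ P}
  have hbdd : BddBelow S := by
    refine ⟨-N, fun r hr => ?_⟩
    have := hneg (r + N) (by
      convert P.add_mem hr h1 using 1
      rw [map_add]; ring)
    linarith
  refine ⟨sInf S, fun ε hε => ⟨?_, ?_⟩⟩
  · have : sInf S - ε ∉ S := fun h => by linarith [csInf_le hbdd h]
    convert (htot (algebraMap ℝ A (sInf S - ε) - b)).resolve_left this using 1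
    rw [map_sub]; ring
  · obtain ⟨s, hs, hlt⟩ := exists_lt_of_csInf_lt (s := S) ⟨N, h2⟩
      (show sInf S < sInf S + ε by linarith)
    convert P.add_mem hs (algebraMap_mem hP (c := sInf S + ε - s) (by linarith)) using 1
    rw [map_sub, map_add]; ring

/-- The Kadison–Dubois theorem: a proper archimedean preordering is nonnegative under some
real-valued homomorphism, namely the standard part for a maximal preordering containing it. -/
lemma exists_real_hom (T : Subsemiring A) (hT : ∀ x, x * x ∈ T) (hT1 : -1 ∉ T)
    (hbd : ∀ b, b ∈ bdd hT) : ∃ φ : A →ₐ[ℝ] ℝ, ∀ t ∈ T, 0 ≤ φ t := by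
  obtain ⟨P, hTP, hP1, hmax⟩ := exists_maximal_preordering T hT hT1
  have hP : ∀ x, x * x ∈ P := fun x => hTP (hT x)
  have htot := mem_or_neg_mem hP hP1 hmax
  have hbd : ∀ b, b ∈ bdd hP := fun b => by
    obtain ⟨N, hN, h1, h2⟩ := mem_bdd.1 (hbd b)
    exact mem_bdd.2 ⟨N, hN, hTP h1, hTP h2⟩
  have hneg : ∀ c : ℝ, algebraMap ℝ A c ∈ P → 0 ≤ c := by
    intro c hc
    by_contra h
    push Not at h
    refine hP1 ?_
    refine mem_of_const_mul_mem hP (c := -c) (by linarith) ?_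
    convert hc using 1
    rw [map_neg]; ring
  choose st hst using fun b => exists_standard_part hP htot hP1 (hbd b)
  have huniq : ∀ b (r : ℝ), Infinitesimal P (b - algebraMap ℝ A r) → st b = r := by
    have hle : ∀ b (r s : ℝ), Infinitesimal P (b - algebraMap ℝ A r) →
        Infinitesimal P (b - algebraMap ℝ A s) → r ≤ s := by
      intro b r s hr hs
      by_contra h
      push Not at h
      have h1 := (hr ((r - s) / 4) (by linarith)).1
      have h2 := (hs ((r - s) / 4) (by linarith)).2
      have := hneg ((r - s) / 4 + (r - s) / 4 - r + s) (by
        convert P.add_mem h1 h2 using 1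
        simp only [map_add, map_sub]; ring)
      linarith
    exact fun b r h => le_antisymm (hle b _ _ (hst b) h) (hle b _ _ h (hst b))
  have hzero : Infinitesimal P (0 : A) := fun ε hε => by
    have := algebraMap_mem hP hε.le
    simpa using this
  have hcon : ∀ r : ℝ, st (algebraMap ℝ A r) = r := fun r => huniq _ _ (by simpa using hzero)
  let φ : A →ₐ[ℝ] ℝ :=
    { toFun := st
      map_one' := by simpa using hcon 1
      map_zero' := by simpa using hcon 0
      map_add' := fun a b => huniq _ _ (by
        convert (hst a).add (hst b) using 1
        rw [map_add]; ring)
      map_mul' := fun a b => huniq _ _ (by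
        convert ((hst a).mul hP (hbd b)).add ((hst b).mul hP (hbd (algebraMap ℝ A (st a)))) using 1
        rw [map_mul]; ring)
      commutes' := fun r => hcon r }
  refine ⟨φ, fun t ht => ?_⟩
  by_contra h
  push Not at h
  have h1 := (hst t (-(st t) / 2) (by change st t < 0 at h; linarith)).2
  have h2 := hneg (-(st t) / 2 + st t) (by
    convert P.add_mem h1 (hTP ht) using 1
    rw [map_add]; ring)
  change st t < 0 at h
  linarith

end StandardPart

section Representation

variable {B : Type*} [CommRing B] [Algebra ℝ B] {T : Subsemiring B} (hT : ∀ x, x * x ∈ T)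

include hT in
/-- Removing a bounded denominator `1 + t` at the cost of an arbitrarily small constant. -/
lemma add_const_mem_of_mul_mem {a t : B} (ht : t ∈ T) (hta : (1 + t) * a ∈ T) {K : ℝ}
    (hK0 : 0 ≤ K) (hK : algebraMap ℝ B K - t ∈ T) {r : ℝ} (hr0 : 0 ≤ r)
    (hr : algebraMap ℝ B r + a ∈ T) {δ : ℝ} (hδ : 0 < δ) : algebraMap ℝ B δ + a ∈ T := by
  have hstep : ∀ j : ℕ, algebraMap ℝ B (r * (K / (K + 1)) ^ j) + a ∈ T := by
    intro j
    induction j with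
    | zero => simpa using hr
    | succ j ih =>
      refine mem_of_const_mul_mem hT (c := K + 1) (by positivity) ?_
      set s := r * (K / (K + 1)) ^ j with hs
      have hs0 : 0 ≤ s := by positivity
      have e : algebraMap ℝ B (K + 1) * algebraMap ℝ B (r * (K / (K + 1)) ^ (j + 1)) =
          algebraMap ℝ B s * algebraMap ℝ B K := by
        rw [← map_mul, ← map_mul, hs, pow_succ]
        congr 1
        field_simp
      convert T.add_mem (T.add_mem (T.mul_mem ih hK) hta) (const_mul_mem hT hs0 ht) using 1
      rw [mul_add, e, map_add, map_one]
      ring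
  have hlim : Filter.Tendsto (fun j : ℕ => r * (K / (K + 1)) ^ j) Filter.atTop (nhds (r * 0)) :=
    (tendsto_pow_atTop_nhds_zero_of_lt_one (by positivity)
      ((div_lt_one (by positivity)).2 (by linarith))).const_mul r
  rw [mul_zero] at hlim
  obtain ⟨j, hj⟩ := (hlim.eventually_lt_const hδ).exists
  convert T.add_mem (hstep j) (algebraMap_mem hT (sub_nonneg.2 hj.le)) using 1
  rw [map_sub]; ring

variable {n m : ℕ} (π : MvPolynomial (Fin n) ℝ →ₐ[ℝ] B) (g : Fin m → MvPolynomial (Fin n) ℝ)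
  (hg : ∀ i, π (g i) ∈ T) {v : B} (hvT : v ∈ T) (hvH : v ∈ bdd hT)
  (hpow : ∀ b : B, ∃ l : ℕ, b * v ^ l ∈ bdd hT)

include hpow in
/-- A real-valued homomorphism on the bounded elements which does not vanish at `v` comes from
a point of `ℝⁿ`. -/
lemma exists_point (φ : bdd hT →ₐ[ℝ] ℝ) (hη : φ ⟨v, hvH⟩ ≠ 0) : ∃ x : Fin n → ℝ,
    ∀ (f : MvPolynomial (Fin n) ℝ) (l : ℕ) (h : π f * v ^ l ∈ bdd hT),
      φ ⟨π f * v ^ l, h⟩ = eval x f * φ ⟨v, hvH⟩ ^ l := by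
  set η := φ ⟨v, hvH⟩ with hηdef
  choose l hl using fun i => hpow (π (X i))
  let x : Fin n → ℝ := fun i => φ ⟨_, hl i⟩ / η ^ l i
  have key : ∀ f : MvPolynomial (Fin n) ℝ, ∃ (l : ℕ) (h : π f * v ^ l ∈ bdd hT),
      φ ⟨π f * v ^ l, h⟩ = eval x f * η ^ l := by
    intro f
    induction f using MvPolynomial.induction_on with
    | C a =>
      have e : π (C a) * v ^ 0 = algebraMap ℝ B a := by
        rw [pow_zero, mul_one]; exact π.commutes a
      refine ⟨0, e ▸ (bdd hT).algebraMap_mem a, ?_⟩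
      have e2 : (⟨π (C a) * v ^ 0, e ▸ (bdd hT).algebraMap_mem a⟩ : bdd hT) =
        algebraMap ℝ (bdd hT) a := Subtype.ext e
      rw [e2, φ.commutes]
      simp
    | add f f' hf hf' =>
      obtain ⟨i, hi, e1⟩ := hf
      obtain ⟨j, hj, e2⟩ := hf'
      have e : (⟨_, hi⟩ * ⟨v, hvH⟩ ^ j + ⟨_, hj⟩ * ⟨v, hvH⟩ ^ i : bdd hT).1 =
          π (f + f') * v ^ (i + j) := by
        change π f * v ^ i * v ^ j + π f' * v ^ j * v ^ i = _
        rw [map_add]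
        ring
      refine ⟨i + j, e ▸ Subtype.property _, ?_⟩
      have e3 : (⟨π (f + f') * v ^ (i + j), e ▸ Subtype.property _⟩ : bdd hT) =
        ⟨_, hi⟩ * ⟨v, hvH⟩ ^ j + ⟨_, hj⟩ * ⟨v, hvH⟩ ^ i := Subtype.ext e.symm
      rw [e3, map_add, map_mul, map_mul, map_pow, map_pow, e1, e2, ← hηdef, map_add]
      ring
    | mul_X f i hf =>
      obtain ⟨j, hj, e1⟩ := hf
      have e : (⟨_, hj⟩ * ⟨_, hl i⟩ : bdd hT).1 = π (f * X i) * v ^ (j + l i) := by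
        change π f * v ^ j * (π (X i) * v ^ l i) = _
        rw [map_mul]
        ring
      refine ⟨j + l i, e ▸ Subtype.property _, ?_⟩
      have e3 : (⟨π (f * X i) * v ^ (j + l i), e ▸ Subtype.property _⟩ : bdd hT) =
        ⟨_, hj⟩ * ⟨_, hl i⟩ := Subtype.ext e.symm
      have e4 : φ ⟨_, hl i⟩ = x i * η ^ l i := (div_mul_cancel₀ _ (pow_ne_zero _ hη)).symm
      rw [e3, map_mul, e1, e4, map_mul, eval_X]
      ring
  refine ⟨x, fun f l h => ?_⟩
  obtain ⟨j, hj, e1⟩ := key f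
  have e2 : (⟨_, h⟩ * ⟨v, hvH⟩ ^ j : bdd hT) = ⟨_, hj⟩ * ⟨v, hvH⟩ ^ l := by
    apply Subtype.ext
    change π f * v ^ l * v ^ j = π f * v ^ j * v ^ l
    ring
  have e3 := congrArg φ e2
  rw [map_mul, map_mul, map_pow, map_pow, e1, ← hηdef] at e3
  refine mul_right_cancel₀ (pow_ne_zero j hη) ?_
  rw [e3]
  ring

include hvT hvH hg hpow in
/-- If `h ≥ 0` on `K`, then the bounded element `vᴸ⁺¹ h` lies in `T` up to an arbitrarily small constant.
The extra factor `v` makes it vanish at those real homomorphisms of the bounded elements that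
vanish at `v`; all the others come from points of `K`. -/
lemma mul_pow_add_const_mem (h : MvPolynomial (Fin n) ℝ) (hh : ∀ x ∈ KS g, 0 ≤ eval x h) {L : ℕ}
    (hL : π h * v ^ L ∈ bdd hT) {ε : ℝ} (hε : 0 < ε) :
    algebraMap ℝ B ε + v * (π h * v ^ L) ∈ T := by
  let H := bdd hT
  let TH : Subsemiring H := T.comap H.val.toRingHom
  have hTH : ∀ x, x * x ∈ TH := fun x => hT (x : B)
  let b : H := ⟨v, hvH⟩ * ⟨_, hL⟩
  let β : H := algebraMap ℝ H (ε / 2) + b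
  by_cases hneg : -1 ∈ adj TH hTH (-β)
  · obtain ⟨t, ht, htβ⟩ := mul_mem_of_neg_one_mem hneg
    have htβ' : (1 + (t : B)) * (β : B) ∈ T := htβ
    obtain ⟨K, hK0, -, hK⟩ := mem_bdd.1 t.2
    obtain ⟨r, hr0, hr, -⟩ := mem_bdd.1 β.2
    have h1 := add_const_mem_of_mul_mem hT (t := (t : B)) ht htβ' hK0 hK hr0 hr (half_pos hε)
    convert h1 using 1
    change _ = algebraMap ℝ B (ε / 2) + (algebraMap ℝ B (ε / 2) + v * (π h * v ^ L))
    rw [← add_assoc, ← map_add, add_halves]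
  · exfalso
    obtain ⟨φ, hφ⟩ := exists_real_hom (adj TH hTH (-β)) (fun x => le_adj (hTH x)) hneg (by
      intro b
      obtain ⟨N, hN, h1, h2⟩ := mem_bdd.1 b.2
      exact mem_bdd.2 ⟨N, hN, le_adj (show _ ∈ TH from h1), le_adj (show _ ∈ TH from h2)⟩)
    have hφT : ∀ t : H, (t : B) ∈ T → 0 ≤ φ t := fun t ht => hφ t (le_adj (show t ∈ TH from ht))
    have h1 : 0 ≤ φ (-β) := hφ _ self_mem_adj
    rw [map_neg, map_add, φ.commutes] at h1
    change 0 ≤ -(ε / 2 + φ b) at h1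
    have hb : φ b = φ ⟨v, hvH⟩ * φ ⟨_, hL⟩ := map_mul φ _ _
    have hη0 : 0 ≤ φ ⟨v, hvH⟩ := hφT _ hvT
    have hη : φ ⟨v, hvH⟩ ≠ 0 := by
      intro h0
      rw [h0, zero_mul] at hb
      linarith
    have hηpos : 0 < φ ⟨v, hvH⟩ := lt_of_le_of_ne hη0 hη.symm
    obtain ⟨x, hx⟩ := exists_point hT π hvH hpow φ hη
    have hxK : x ∈ KS g := by
      intro i
      obtain ⟨l, hl⟩ := hpow (π (g i))
      have h2 := hφT ⟨_, hl⟩ (T.mul_mem (hg i) (T.pow_mem hvT l))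
      rw [hx] at h2
      exact nonneg_of_mul_nonneg_left h2 (pow_pos hηpos l)
    have h3 := hh x hxK
    have h4 : 0 ≤ φ b := by
      rw [hb, hx]
      positivity
    linarith

end Representation

section Approximation

/-- Polynomials nonnegative on `K` become elements of the preordering `T` of `ℝ[X][1/p]`
after adding an arbitrarily small multiple of a fixed element; here `y` is the inverse of `p`. -/
theorem exists_approximation {B : Type*} [CommRing B] [Algebra ℝ B] {T : Subsemiring B}
    (hT : ∀ x, x * x ∈ T) {n m : ℕ} (π : MvPolynomial (Fin n) ℝ →ₐ[ℝ] B)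
    (g : Fin m → MvPolynomial (Fin n) ℝ) (hg : ∀ i, π (g i) ∈ T)
    (p : MvPolynomial (Fin n) ℝ) (y : B) (hpy : π p * y = 1) (hB : ∀ b, ∃ f N, b = π f * y ^ N)
    (k : ℝ) (hk : 0 ≤ k) (hp1 : ∀ x ∈ KS g, 1 ≤ eval x p)
    (hpgrow : ∀ x ∈ KS g, ∑ i, (x i) ^ 2 ≤ k * eval x p)
    (h : MvPolynomial (Fin n) ℝ) (hh : ∀ x ∈ KS g, 0 ≤ eval x h) :
    ∃ w : B, ∀ ε : ℝ, 0 < ε → π h + algebraMap ℝ B ε * w ∈ T := by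
  obtain ⟨hvH, hpow⟩ := exists_mul_pow_bounded hT π g hg p y hpy hB k hk hp1 hpgrow
  obtain ⟨L, hL⟩ := hpow (π h)
  refine ⟨(π p * π p) ^ (L + 1), fun ε hε => ?_⟩
  have h1 := mul_pow_add_const_mem hT π g hg (hT y) hvH hpow h hh hL hε
  convert T.mul_mem h1 (T.pow_mem (hT (π p)) (L + 1)) using 1
  have e : (y * y) ^ (L + 1) * (π p * π p) ^ (L + 1) = 1 := by
    rw [← mul_pow, show y * y * (π p * π p) = (π p * y) * (π p * y) by ring, hpy, one_mul, one_pow]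
  linear_combination -π h * e

end Approximation

/-! ### Nonnegative fractions, closedness and the topology of finitely open sets -/

section PosE

variable {n : ℕ} {D : Submonoid (MvPolynomial (Fin n) ℝ)} {K : Set (Fin n → ℝ)}

/-- `PosE D K` as a subsemiring. -/
def posSemiring (D : Submonoid (MvPolynomial (Fin n) ℝ)) (K : Set (Fin n → ℝ)) :
    Subsemiring (Localization D) where
  carrier := PosE D K
  zero_mem' := ⟨0, 1, (Localization.mk_zero 1).symm, by simp⟩
  one_mem' := ⟨1, 1, Localization.mk_one.symm, by simp⟩
  add_mem' := by
    rintro _ _ ⟨f, d, rfl, h⟩ ⟨f', d', rfl, h'⟩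
    refine ⟨_, _, Localization.add_mk _ _ _ _, fun x hx => ?_⟩
    have e : eval x (↑d * f' + ↑d' * f) * eval x ((d * d' : D) : MvPolynomial (Fin n) ℝ) =
        (eval x f * eval x d) * (eval x d') ^ 2 + (eval x f' * eval x d') * (eval x d) ^ 2 := by
      rw [Submonoid.coe_mul, map_add, map_mul, map_mul, map_mul]
      ring
    rw [e]
    exact add_nonneg (mul_nonneg (h x hx) (sq_nonneg _)) (mul_nonneg (h' x hx) (sq_nonneg _))
  mul_mem' := by
    rintro _ _ ⟨f, d, rfl, h⟩ ⟨f', d', rfl, h'⟩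
    refine ⟨_, _, Localization.mk_mul _ _ _ _, fun x hx => ?_⟩
    have e : eval x (f * f') * eval x ((d * d' : D) : MvPolynomial (Fin n) ℝ) =
        (eval x f * eval x d) * (eval x f' * eval x d') := by
      rw [Submonoid.coe_mul, map_mul, map_mul]
      ring
    rw [e]
    exact mul_nonneg (h x hx) (h' x hx)

lemma sq_mem_posSemiring (R : Localization D) : R * R ∈ posSemiring D K := by
  induction R using Localization.induction_on with
  | H z =>
    obtain ⟨f, d⟩ := z
    refine ⟨_, _, Localization.mk_mul _ _ _ _, fun x _ => ?_⟩
    rw [Submonoid.coe_mul, map_mul, map_mul]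
    exact mul_nonneg (mul_self_nonneg _) (mul_self_nonneg _)

lemma genPreordering_subset_posE {m : ℕ} (g : Fin m → MvPolynomial (Fin n) ℝ) :
    (genPreordering fun i => algebraMap (MvPolynomial (Fin n) ℝ) (Localization D) (g i)) ⊆
      PosE D (KS g) := by
  refine preord_le (T := posSemiring D (KS g)) sq_mem_posSemiring fun i => ?_
  exact ⟨g i, 1, (Localization.mk_one_eq_algebraMap _).symm, fun x hx => by simpa using hx i⟩

/-- Nonnegativity of a fraction is tested with an arbitrary representation, off the zeros of some
element of `D`. -/
lemma mk_mem_posE_iff (hD0 : (0 : MvPolynomial (Fin n) ℝ) ∉ D) (N : MvPolynomial (Fin n) ℝ)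
    (d : D) : Localization.mk N d ∈ PosE D K ↔
      ∃ e ∈ D, ∀ x ∈ K, eval x e ≠ 0 → 0 ≤ eval x N * eval x (d : MvPolynomial (Fin n) ℝ) := by
  constructor
  · rintro ⟨f, d', h, hpos⟩
    obtain ⟨c, hc⟩ := Localization.r_iff_exists.1 (Localization.mk_eq_mk_iff.1 h)
    have hc0 : (c : MvPolynomial (Fin n) ℝ) ≠ 0 := fun h0 => hD0 (h0 ▸ c.2)
    have hNf : (d' : MvPolynomial (Fin n) ℝ) * N = d * f := mul_left_cancel₀ hc0 hc
    refine ⟨d', d'.2, fun x hx hne => ?_⟩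
    have h1 := congrArg (eval x) hNf
    rw [map_mul, map_mul] at h1
    have h2 := mul_nonneg (hpos x hx) (sq_nonneg (eval x (d : MvPolynomial (Fin n) ℝ)))
    have h3 : eval x f * eval x (d' : MvPolynomial (Fin n) ℝ) *
        eval x (d : MvPolynomial (Fin n) ℝ) ^ 2 = eval x N * eval x (d : MvPolynomial (Fin n) ℝ) *
          eval x (d' : MvPolynomial (Fin n) ℝ) ^ 2 := by
      linear_combination -(eval x (d' : MvPolynomial (Fin n) ℝ) *
        eval x (d : MvPolynomial (Fin n) ℝ)) * h1
    rw [h3] at h2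
    exact nonneg_of_mul_nonneg_left h2 (by positivity)
  · rintro ⟨e, he, hpos⟩
    refine ⟨N * (e * e), d * (⟨e, he⟩ * ⟨e, he⟩), ?_, fun x hx => ?_⟩
    · refine Localization.mk_eq_mk_iff.2 (Localization.r_iff_exists.2 ⟨1, ?_⟩)
      simp only [Submonoid.coe_mul, Submonoid.coe_one]
      ring
    · simp only [Submonoid.coe_mul, map_mul]
      by_cases h0 : eval x e = 0
      · simp [h0]
      · have := hpos x hx h0
        calc (0 : ℝ) ≤ (eval x N * eval x (d : MvPolynomial (Fin n) ℝ)) *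
              (eval x e * eval x e) ^ 2 := mul_nonneg this (sq_nonneg _)
          _ = _ := by ring

/-- If every element of `D` is nonzero at some point of `K` where `q < 0`, then countably many
elements of `D` are simultaneously nonzero at such a point. An ultrafilter gives one such point
for all of `D` over an ultrapower of `ℝ`, and Artin–Lang moves it to a real point. -/
lemma exists_common_point {m : ℕ} (g : Fin m → MvPolynomial (Fin n) ℝ)
    (q : MvPolynomial (Fin n) ℝ) (hq : ∀ e ∈ D, ∃ x ∈ KS g, eval x e ≠ 0 ∧ eval x q < 0)
    (e : ℕ → MvPolynomial (Fin n) ℝ) (he : ∀ j, e j ∈ D) :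
    ∃ x ∈ KS g, eval x q < 0 ∧ ∀ j, eval x (e j) ≠ 0 := by
  classical
  let W : D → Set (Fin n → ℝ) := fun e =>
    {x | x ∈ KS g ∧ eval x (e : MvPolynomial (Fin n) ℝ) ≠ 0 ∧ eval x q < 0}
  let F : Filter (Fin n → ℝ) := ⨅ e : D, Filter.principal (W e)
  have hF : F.NeBot := by
    refine Filter.iInf_neBot_of_directed (fun d d' => ⟨d * d', ?_, ?_⟩) fun d => ?_
    · refine Filter.principal_mono.2 fun x hx => ⟨hx.1, ?_, hx.2.2⟩
      have := hx.2.1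
      rw [Submonoid.coe_mul, map_mul] at this
      exact left_ne_zero_of_mul this
    · refine Filter.principal_mono.2 fun x hx => ⟨hx.1, ?_, hx.2.2⟩
      have := hx.2.1
      rw [Submonoid.coe_mul, map_mul] at this
      exact right_ne_zero_of_mul this
    · obtain ⟨x, h1, h2, h3⟩ := hq d d.2
      exact Filter.principal_neBot_iff.2 ⟨x, h1, h2, h3⟩
  let u : Ultrafilter (Fin n → ℝ) := Ultrafilter.of F
  have hu : ∀ d : D, ∀ᶠ x in (u : Filter (Fin n → ℝ)), x ∈ W d := fun d =>
    Ultrafilter.of_le F (Filter.mem_iInf_of_mem d (Filter.mem_principal_self _))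
  let Ψ : MvPolynomial (Fin n) ℝ →+* Filter.Germ (u : Filter (Fin n → ℝ)) ℝ :=
    germHom u fun x => eval x
  have hΨ : ∀ f, eval₂ (Ψ.comp MvPolynomial.C) (fun i => Ψ (X i)) f = Ψ f := by
    intro f
    have : eval₂Hom (Ψ.comp MvPolynomial.C) (fun i => Ψ (X i)) = Ψ := by
      refine MvPolynomial.ringHom_ext (fun r => ?_) (fun i => ?_)
      · rw [coe_eval₂Hom, eval₂_C]
        rfl
      · rw [coe_eval₂Hom, eval₂_X]
    exact congrArg (fun G : MvPolynomial (Fin n) ℝ →+*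
      Filter.Germ (u : Filter (Fin n → ℝ)) ℝ => G f) this
  obtain ⟨x, hx, hxe⟩ := artin_lang ivp_germ (Ψ.comp MvPolynomial.C) (fun i => Ψ (X i))
    (insert q (Finset.univ.image g)) e
  refine ⟨x, fun i => ?_, ?_, fun j => ?_⟩
  · have h1 := hx (g i) (by simp)
    have h2 : 0 ≤ Ψ (g i) := by
      rw [germHom_apply]
      exact Filter.Germ.coe_nonneg.2 ((hu 1).mono fun z hz => hz.1 i)
    rw [hΨ] at h1
    rw [← sign_nonneg_iff] at h2 ⊢
    rwa [h1]
  · have h1 := hx q (by simp)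
    have h2 : SignType.sign (Ψ q) = -1 := by
      rw [germHom_apply, germ_sign]
      exact (hu 1).mono fun z hz => sign_neg hz.2.2
    rw [hΨ, h2] at h1
    exact sign_eq_neg_one_iff.1 h1
  · rw [Ne, hxe, hΨ]
    intro h0
    rw [germHom_apply] at h0
    have h1 := Filter.Germ.coe_eq.1 (h0.trans Filter.Germ.coe_zero.symm)
    obtain ⟨z, hz1, hz2⟩ := (h1.and (hu ⟨e j, he j⟩)).exists
    exact hz2.2.1 hz1

/-- The coefficient vectors of the elements of `PosE D (KS g)` with denominator `d` form a
closed set. Each term of a convergent sequence has its own exceptional denominator `e j`; at a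
point where none of them vanishes the inequality passes to the limit. -/
lemma isClosed_coefficients (hD0 : (0 : MvPolynomial (Fin n) ℝ) ∉ D) {m r : ℕ}
    (g : Fin m → MvPolynomial (Fin n) ℝ) (f : Fin r → MvPolynomial (Fin n) ℝ) (d : D) :
    IsClosed {c : Fin r → ℝ | Localization.mk (∑ i, MvPolynomial.C (c i) * f i) d ∈
      PosE D (KS g)} := by
  refine IsSeqClosed.isClosed fun c c₀ hc hlim => ?_
  by_contra hcon
  rw [Set.mem_ofPred_eq, mk_mem_posE_iff hD0] at hcon
  choose e heD he using fun j => (mk_mem_posE_iff hD0 _ _).1 (hc j)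
  push Not at hcon
  obtain ⟨x, hxK, hneg, hne⟩ := exists_common_point (D := D) g
    ((∑ i, MvPolynomial.C (c₀ i) * f i) * d) (fun e he => by
      obtain ⟨x, h1, h2, h3⟩ := hcon e he
      exact ⟨x, h1, h2, by rwa [map_mul]⟩) e heD
  have hcont : Filter.Tendsto (fun j => eval x (∑ i, MvPolynomial.C (c j i) * f i) *
      eval x (d : MvPolynomial (Fin n) ℝ)) Filter.atTop
      (nhds (eval x (∑ i, MvPolynomial.C (c₀ i) * f i) *
        eval x (d : MvPolynomial (Fin n) ℝ))) := by
    simp only [map_sum, map_mul, eval_C]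
    refine Filter.Tendsto.mul_const _ (tendsto_finsetSum _ fun i _ => ?_)
    exact Filter.Tendsto.mul_const _ ((tendsto_pi_nhds.1 hlim) i)
  rw [map_mul] at hneg
  exact absurd (ge_of_tendsto' hcont fun j => he j x hxK (hne j)) (not_le.2 hneg)

end PosE

section Topology

variable {n : ℕ} {D : Submonoid (MvPolynomial (Fin n) ℝ)}

/-- Closedness in the topology of finitely open sets is tested on coefficient vectors of linear
combinations. -/
lemma isClosed_finTop {E : Type*} [AddCommGroup E] [Module ℝ E] {S : Set E}
    (h : ∀ (r : ℕ) (v : Fin r → E), IsClosed {c : Fin r → ℝ | ∑ i, c i • v i ∈ S}) :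
    @IsClosed _ (finTop E) S := by
  let _ : TopologicalSpace E := finTop E
  rw [← isOpen_compl_iff]
  intro U hU
  let b := Module.finBasis ℝ U
  let _ : TopologicalSpace U := weakTop U
  have hcont : Continuous fun u : U => b.equivFun u := by
    refine continuous_pi fun i => ?_
    exact continuous_iInf_dom (i := b.coord i) continuous_induced_dom
  have hset : (Subtype.val : U → E) ⁻¹' Sᶜ =
      (fun u : U => b.equivFun u) ⁻¹' {c | ∑ i, c i • (b i : E) ∈ S}ᶜ := by
    ext u
    have hu : ∑ i, b.equivFun u i • (b i : E) = u := by
      have h1 := congrArg U.subtype (b.sum_equivFun u)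
      rw [map_sum] at h1
      exact h1
    change _ ↔ ¬ (∑ i, b.equivFun u i • (b i : E) ∈ S)
    rw [hu]
    rfl
  rw [hset]
  exact (h _ _).isOpen_compl.preimage hcont

lemma isClosed_posE (hD0 : (0 : MvPolynomial (Fin n) ℝ) ∉ D) {m : ℕ}
    (g : Fin m → MvPolynomial (Fin n) ℝ) :
    @IsClosed _ (finTop (Localization D)) (PosE D (KS g)) := by
  refine isClosed_finTop fun r v => ?_
  obtain ⟨d, hd⟩ := IsLocalization.exist_integer_multiples_of_finite D v
  choose f hf using hd
  have hrep : ∀ c : Fin r → ℝ, ∑ i, c i • v i =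
      Localization.mk (∑ i, MvPolynomial.C (c i) * f i) d := by
    intro c
    rw [Localization.mk_eq_mk', eq_comm, IsLocalization.mk'_eq_iff_eq_mul, map_sum,
      Finset.sum_mul]
    refine Finset.sum_congr rfl fun i _ => ?_
    rw [map_mul, hf, Algebra.smul_def, Algebra.smul_def,
      IsScalarTower.algebraMap_apply ℝ (MvPolynomial (Fin n) ℝ) (Localization D),
      MvPolynomial.algebraMap_eq]
    ring
  simp only [hrep]
  exact isClosed_coefficients hD0 g f d

/-- Limits along rays are limits in the topology of finitely open sets. -/
lemma mem_closure_finTop {E : Type*} [AddCommGroup E] [Module ℝ E] {S : Set E} {R q : E}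
    (h : ∀ ε : ℝ, 0 < ε → R + ε • q ∈ S) : R ∈ @closure _ (finTop E) S := by
  let _ : TopologicalSpace E := finTop E
  rw [mem_closure_iff]
  intro O hO hR
  let U : Submodule ℝ E := Submodule.span ℝ {R, q}
  have hU : FiniteDimensional ℝ U := FiniteDimensional.span_of_finite ℝ (by simp)
  have hRU : R ∈ U := Submodule.subset_span (by simp)
  have hqU : q ∈ U := Submodule.subset_span (by simp)
  let _ : TopologicalSpace U := weakTop U
  let γ : ℝ → U := fun ε => ⟨R, hRU⟩ + ε • ⟨q, hqU⟩
  have hγ : Continuous γ := by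
    refine continuous_iInf_rng.2 fun L => continuous_induced_rng.2 ?_
    have : (L ∘ γ) = fun ε => L ⟨R, hRU⟩ + ε * L ⟨q, hqU⟩ := by
      ext ε
      simp only [γ, Function.comp_apply, map_add, map_smul, smul_eq_mul]
    rw [this]
    fun_prop
  have hopen : IsOpen (γ ⁻¹' ((Subtype.val : U → E) ⁻¹' O)) := (hO U hU).preimage hγ
  have h0 : (0 : ℝ) ∈ γ ⁻¹' ((Subtype.val : U → E) ⁻¹' O) := by
    change ((γ 0 : U) : E) ∈ O
    simpa [γ] using hR
  obtain ⟨δ, hδ, hball⟩ := Metric.isOpen_iff.1 hopen 0 h0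
  have hmem : δ / 2 ∈ γ ⁻¹' ((Subtype.val : U → E) ⁻¹' O) := hball (by
    rw [Metric.mem_ball, Real.dist_eq, sub_zero, abs_of_pos (half_pos hδ)]
    linarith)
  exact ⟨R + (δ / 2) • q, hmem, h _ (half_pos hδ)⟩

/-- The approximation theorem, applied in `ℝ[X][1/p]` and carried over to the localization at `D`. -/
lemma posE_subset_closure {m : ℕ} (g : Fin m → MvPolynomial (Fin n) ℝ)
    (p : MvPolynomial (Fin n) ℝ) (hpD : p ∈ D) (k : ℕ) (hp1 : ∀ x ∈ KS g, 1 ≤ eval x p)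
    (hpgrow : ∀ x ∈ KS g, ∑ i, (x i) ^ 2 ≤ (k : ℝ) * eval x p) :
    PosE D (KS g) ⊆ @closure _ (finTop (Localization D))
      (genPreordering fun i => algebraMap (MvPolynomial (Fin n) ℝ) (Localization D) (g i)) := by
  rintro R ⟨f, d, rfl, hfd⟩
  let gE : Fin m → Localization D :=
    fun i => algebraMap (MvPolynomial (Fin n) ℝ) (Localization D) (g i)
  have hunit : IsUnit (algebraMap (MvPolynomial (Fin n) ℝ) (Localization D) p) :=
    IsLocalization.map_units (Localization D) ⟨p, hpD⟩
  let j : Localization.Away p →+* Localization D := IsLocalization.Away.lift p hunit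
  have hj : ∀ q, j (algebraMap _ _ q) = algebraMap (MvPolynomial (Fin n) ℝ) (Localization D) q :=
    fun q => IsLocalization.Away.lift_eq p hunit q
  let π : MvPolynomial (Fin n) ℝ →ₐ[ℝ] Localization.Away p :=
    IsScalarTower.toAlgHom ℝ (MvPolynomial (Fin n) ℝ) (Localization.Away p)
  let T : Subsemiring (Localization.Away p) := (preord gE).comap j
  have hT : ∀ x, x * x ∈ T := fun x => by
    change j (x * x) ∈ preord gE
    rw [map_mul]
    exact sq_mem_preord gE _
  let y : Localization.Away p := IsLocalization.Away.invSelf p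
  have hpy : π p * y = 1 := IsLocalization.Away.mul_invSelf p
  obtain ⟨w, hw⟩ := exists_approximation (T := T) hT π g (fun i => by
      change j (algebraMap _ _ (g i)) ∈ preord gE
      rw [hj]
      exact gen_mem_preord gE i) p y hpy (fun b => by
      obtain ⟨N, a, h⟩ := IsLocalization.Away.surj p b
      refine ⟨a, N, ?_⟩
      change b * π p ^ N = π a at h
      rw [← h, mul_assoc, ← mul_pow, hpy, one_pow, mul_one]) k k.cast_nonneg hp1 hpgrow
    (f * d) (fun x hx => by rw [map_mul]; exact hfd x hx)
  -- `f/d = (1/d)² f d`, and `f d` is nonnegative on `K`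
  let s : Localization D := Localization.mk 1 d
  refine mem_closure_finTop (q := s * s * j w) fun ε hε => ?_
  have h1 : j (π (f * d) + algebraMap ℝ _ ε * w) ∈ preord gE := hw ε hε
  have h2 : s * s * j (π (f * d) + algebraMap ℝ _ ε * w) ∈ preord gE :=
    (preord gE).mul_mem (sq_mem_preord gE s) h1
  have e1 : j (π (f * d)) = algebraMap (MvPolynomial (Fin n) ℝ) (Localization D) (f * d) := hj _
  have e2 : j (algebraMap ℝ _ ε) = algebraMap ℝ (Localization D) ε := by
    rw [IsScalarTower.algebraMap_apply ℝ (MvPolynomial (Fin n) ℝ) (Localization.Away p), hj,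
      ← IsScalarTower.algebraMap_apply]
  have e3 : s * s * algebraMap (MvPolynomial (Fin n) ℝ) (Localization D) (f * d) =
      Localization.mk f d := by
    rw [← Localization.mk_one_eq_algebraMap, Localization.mk_mul, Localization.mk_mul]
    refine Localization.mk_eq_mk_iff.2 (Localization.r_iff_exists.2 ⟨1, ?_⟩)
    simp only [Submonoid.coe_mul, Submonoid.coe_one]
    ring
  rw [map_add, map_mul j, e1, e2, mul_add, e3] at h2
  rw [Algebra.smul_def]
  convert mem_preord.1 h2 using 1
  ring

end Topology

end FinTopAux

/-- The closure of `T_S^E` in the topology of finitely open sets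
equals `Pos^E(K_S)`. -/
theorem finTop_closure_preordering_eq_pos
    {n m : ℕ} (D : Submonoid (MvPolynomial (Fin n) ℝ))
    (hD0 : (0 : MvPolynomial (Fin n) ℝ) ∉ D)
    (g : Fin m → MvPolynomial (Fin n) ℝ)
    (hKne : (KS g).Nonempty)
    (p : MvPolynomial (Fin n) ℝ) (hpD : p ∈ D)
    (k : ℕ) (hk : 1 ≤ k)
    (hp1 : ∀ x ∈ KS g, 1 ≤ eval x p)
    (hpgrow : ∀ x ∈ KS g, ∑ i, (x i) ^ 2 ≤ (k : ℝ) * eval x p) :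
    @closure _ (finTop (Localization D))
        (genPreordering fun i =>
          algebraMap (MvPolynomial (Fin n) ℝ) (Localization D) (g i))
      = PosE D (KS g) := by
  refine Set.Subset.antisymm ?_ (FinTopAux.posE_subset_closure g p hpD k hp1 hpgrow)
  let _ : TopologicalSpace (Localization D) := finTop (Localization D)
  exact closure_minimal (FinTopAux.genPreordering_subset_posE g)
    (FinTopAux.isClosed_posE hD0 g)

end
end

section
/- (Rational Haviland's Theorem.) Let A be a commutative unital ℝ-algebra, D ⊆ A a multiplicatively closed subset with 1 ∈ D, 𝒳 a nonempty Hausdorff topological space, and ^ : A → C(𝒳,ℝ) an ℝ-algebra homomorphism into the algebra of continuous real-valued functions on 𝒳. Assume: (1) there exists q ∈ A with q̂ ≥ 0 on 𝒳 such that 𝒳_k = {x ∈ 𝒳 : q̂(x) ≤ k} is compact for every integer k ≥ 1; (2) for every d ∈ D the zero set Z(d̂) = {x ∈ 𝒳 : d̂(x) = 0} has empty interior; (3) every open subset of 𝒳 is σ-compact (a countable union of compact sets). Then for every linear functional L : D⁻¹A → ℝ satisfying 'for all a ∈ A and d ∈ D, if â·d̂ ≥ 0 on 𝒳 then L(a/d)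 ≥ 0', there exists a positive Borel measure μ on 𝒳 such that μ(Z(d̂)) = 0 for every d ∈ D and L(a/d) = ∫_𝒳 â(x)/d̂(x) dμ(x) for all a ∈ A and d ∈ D (the integrand being defined μ-almost everywhere). -/
/-!
The functional `L` is extended, by M. Riesz' extension theorem, to a positive functional on
`D⁻¹A × C_c(X)`, where a pair `(a/d, f)` is positive when `â/d̂ + f ≥ 0` off the zero set of some
representing denominator (`exists_positive_extension`).  Constants dominate `C_c(X)`, so the
extension exists; the Riesz–Markov–Kakutani theorem then represents its restriction to `C_c(X)` by a
measure `μ` (`X` is locally compact because `{q̂ < k}` is open inside the compact `{q̂ ≤ k}`).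

A fraction `p/d²` with `p̂ ≥ 0` is approximated from below by the compactly supported functions
`fₙ = p̂ / max(d̂², 1/n) · χₙ`, where `χₙ` is `1` on `{q̂ ≤ n}` and `0` off `{q̂ < n + 1}`.
Since `0 ≤ p̂/d̂² - fₙ ≤ (1/n) (p̂/d̂⁴ + p̂ q̂/d̂²)`, positivity gives `∫ fₙ dμ → L(p/d²)`.
For `p = 1` the `fₙ` increase to `∞` on `Z(d̂)` with bounded integrals, so `μ(Z(d̂)) = 0`; in general
monotone convergence gives `∫ p̂/d̂² dμ = L(p/d²)`.  An arbitrary fraction is a combination of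
two such ones, as `a/d = ((ad + 1)² - (ad - 1)²) / (4 d²)`.
-/

open MeasureTheory Filter Topology CompactlySupported

namespace RationalHaviland

/-! ### The positive extension -/

section Extension

variable {A : Type*} [CommRing A] [Algebra ℝ A] (D : Submonoid A)
  {X : Type*} [TopologicalSpace X] (φ : A →ₐ[ℝ] C(X, ℝ))

/-- The cone of pairs `(b, f)` such that `b = a/d` for some `a`, `d` with `â/d̂ + f ≥ 0` off the
zero set of `d̂`; the inequality is multiplied by `d̂²` so that it can be required on all of `X`. -/
def positiveCone : PointedCone ℝ (Localization D × C_c(X, ℝ)) where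
  carrier := {y | ∃ (a : A) (d : D), y.1 = Localization.mk a d ∧
    ∀ x, 0 ≤ φ a x * φ (d : A) x + y.2 x * φ (d : A) x ^ 2}
  zero_mem' := ⟨0, 1, by simp [Localization.mk_zero], by simp⟩
  add_mem' := by
    rintro ⟨b, f⟩ ⟨c, g⟩ ⟨a, d, hb, h⟩ ⟨a', d', hc, h'⟩
    refine ⟨(d : A) * a' + (d' : A) * a, d * d', ?_, fun x => ?_⟩
    · simp only at hb hc
      simp [hb, hc, Localization.add_mk]
    · have h1 := mul_nonneg (sq_nonneg (φ (d' : A) x)) (h x)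
      have h2 := mul_nonneg (sq_nonneg (φ (d : A) x)) (h' x)
      simp at h1 h2 ⊢
      nlinarith
  smul_mem' := by
    rintro ⟨c, hc⟩ ⟨b, f⟩ ⟨a, d, hb, h⟩
    refine ⟨c • a, d, ?_, fun x => ?_⟩
    · simp only at hb
      change c • b = _
      rw [hb, Localization.smul_mk]
    · have h1 := mul_nonneg hc (h x)
      change 0 ≤ φ (c • a) x * φ (d : A) x + (c • f) x * φ (d : A) x ^ 2
      simp at h1 ⊢
      nlinarith

/-- The functional `Λ` is the restriction to `C_c(X)` of a positive extension of `L` to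
`D⁻¹A × C_c(X)`; the conclusion records its joint positivity with `L`. -/
theorem exists_positive_extension
    (L : Localization D →ₗ[ℝ] ℝ)
    (hL : ∀ (a : A) (d : D), (∀ x, 0 ≤ φ a x * φ (d : A) x) →
      0 ≤ L (Localization.mk a d)) :
    ∃ Λ : C_c(X, ℝ) →ₚ[ℝ] ℝ, ∀ (a : A) (d : D) (f : C_c(X, ℝ)),
      (∀ x, 0 ≤ φ a x * φ (d : A) x + f x * φ (d : A) x ^ 2) →
      0 ≤ L (Localization.mk a d) + Λ f := by
  let F : (Localization D × C_c(X, ℝ)) →ₗ.[ℝ] ℝ :=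
    ⟨Submodule.prod ⊤ ⊥, (L ∘ₗ LinearMap.fst ℝ _ _) ∘ₗ Submodule.subtype _⟩
  obtain ⟨g, hg, hpos⟩ := riesz_extension (positiveCone D φ) F (by
      rintro ⟨⟨b, f⟩, hbf⟩ ⟨a, d, hb, h⟩
      obtain rfl : f = 0 := by simpa using hbf.2
      change 0 ≤ L b
      simp only at hb
      rw [hb]
      exact hL a d fun x => by simpa using h x) (by
      rintro ⟨b, f⟩
      obtain ⟨M, hM⟩ := f.hasCompactSupport.exists_bound_of_continuous f.continuous
      refine ⟨⟨(Localization.mk (algebraMap ℝ A M) 1 - b, 0), by simp [F]⟩, ?_⟩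
      refine ⟨algebraMap ℝ A M, 1, by simp, fun x => ?_⟩
      have := neg_le_of_abs_le (hM x)
      simp
      linarith)
  refine ⟨PositiveLinearMap.mk₀ (g ∘ₗ LinearMap.inr ℝ _ _) fun f hf => ?_, fun a d f h => ?_⟩
  · exact hpos (0, f) ⟨0, 1, by simp [Localization.mk_zero], fun x => by simpa using hf x⟩
  · have h1 : g (Localization.mk a d, 0) = L (Localization.mk a d) :=
      hg ⟨(Localization.mk a d, 0), by simp [F]⟩
    have h2 := hpos (Localization.mk a d, f) ⟨a, d, rfl, h⟩
    have h3 : ((Localization.mk a d, f) : Localization D × C_c(X, ℝ))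
        = (Localization.mk a d, 0) + (0, f) := by simp
    rw [h3, map_add, h1] at h2
    exact h2

end Extension

/-! ### Truncations of a fraction -/

section Truncation

/-- The value of the `n`-th truncation of `p / t` at a point where the exhausting function has
value `q`: the denominator is kept above `1 / (n + 1)`, and the cutoff factor is `1` for
`q ≤ n + 1` and `0` for `q ≥ n + 2`. -/
noncomputable def trunc (n : ℕ) (p t q : ℝ) : ℝ :=
  p / max t (1 / ((n : ℝ) + 1)) * max 0 (min 1 ((n : ℝ) + 2 - q))

variable {p t q : ℝ}

lemma max_pos (n : ℕ) (t : ℝ) : 0 < max t (1 / ((n : ℝ) + 1)) :=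
  lt_max_of_lt_right (by positivity)

lemma cutoff_le_one (n : ℕ) (q : ℝ) : max 0 (min 1 ((n : ℝ) + 2 - q)) ≤ 1 :=
  max_le zero_le_one (min_le_left _ _)

lemma trunc_nonneg (n : ℕ) (hp : 0 ≤ p) : 0 ≤ trunc n p t q :=
  mul_nonneg (div_nonneg hp (max_pos n t).le) (le_max_left _ _)

lemma trunc_mono (hp : 0 ≤ p) : Monotone fun n => trunc n p t q := by
  intro m n hmn
  have h : (m : ℝ) ≤ n := by exact_mod_cast hmn
  have := max_pos n t
  unfold trunc
  dsimp only
  gcongr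

lemma trunc_mul_le (n : ℕ) (hp : 0 ≤ p) : trunc n p t q * t ≤ p := by
  have h0 := max_pos n t
  have h1 : p / max t (1 / ((n : ℝ) + 1)) * max 0 (min 1 ((n : ℝ) + 2 - q))
      ≤ p / max t (1 / ((n : ℝ) + 1)) :=
    mul_le_of_le_one_right (div_nonneg hp h0.le) (cutoff_le_one n q)
  calc trunc n p t q * t ≤ trunc n p t q * max t (1 / ((n : ℝ) + 1)) :=
        mul_le_mul_of_nonneg_left (le_max_left _ _) (trunc_nonneg n hp)
    _ ≤ p / max t (1 / ((n : ℝ) + 1)) * max t (1 / ((n : ℝ) + 1)) :=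
        mul_le_mul_of_nonneg_right h1 h0.le
    _ = p := div_mul_cancel₀ p h0.ne'

lemma trunc_eq (n : ℕ) (ht : 1 / ((n : ℝ) + 1) ≤ t) (hq : q ≤ n + 1) : trunc n p t q = p / t := by
  rw [trunc, max_eq_left ht, min_eq_left (by linarith), max_eq_right zero_le_one, mul_one]

lemma trunc_zero (n : ℕ) (hq : q ≤ n + 1) : trunc n 1 0 q = n + 1 := by
  have h : (0 : ℝ) ≤ 1 / ((n : ℝ) + 1) := by positivity
  rw [trunc, max_eq_right h, min_eq_left (by linarith), max_eq_right zero_le_one, mul_one,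
    one_div_one_div]

/-- The error estimate `p/t - fₙ ≤ (p/t² + p q/t) / (n + 1)`, multiplied by `t²`. -/
lemma trunc_error (n : ℕ) (hp : 0 ≤ p) (ht : 0 ≤ t) (hq : 0 ≤ q) :
    0 ≤ (1 / ((n : ℝ) + 1)) * (p + p * q * t) - p * t + trunc n p t q * t ^ 2 := by
  have hn : (0 : ℝ) < 1 / ((n : ℝ) + 1) := by positivity
  have h0 : 0 ≤ trunc n p t q * t ^ 2 := mul_nonneg (trunc_nonneg n hp) (sq_nonneg t)
  have h1 : 0 ≤ p * (1 / ((n : ℝ) + 1)) := mul_nonneg hp hn.le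
  have h2 : 0 ≤ p * (1 / ((n : ℝ) + 1)) * (q * t) := mul_nonneg h1 (mul_nonneg hq ht)
  rcases le_total t (1 / ((n : ℝ) + 1)) with h | h
  · nlinarith [mul_le_mul_of_nonneg_left h hp]
  rcases le_total q (n + 1) with h' | h'
  · rw [trunc_eq n h h']
    have ht0 : t ≠ 0 := (hn.trans_le h).ne'
    have h3 : p / t * t ^ 2 = p * t := by field_simp
    rw [h3]
    nlinarith
  · have h3 : 1 ≤ (1 / ((n : ℝ) + 1)) * q := by
      rw [one_div, inv_mul_eq_div, le_div_iff₀ (by positivity)]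
      linarith
    nlinarith [mul_le_mul_of_nonneg_left h3 (mul_nonneg hp ht)]

lemma trunc_tendsto (ht : 0 < t) : Tendsto (fun n => trunc n p t q) atTop (𝓝 (p / t)) := by
  obtain ⟨N, hN⟩ := exists_nat_one_div_lt ht
  obtain ⟨M, hM⟩ := exists_nat_ge q
  refine tendsto_const_nhds.congr' ?_
  filter_upwards [eventually_ge_atTop N, eventually_ge_atTop M] with n hn hm
  have h1 : (N : ℝ) ≤ n := by exact_mod_cast hn
  have h2 : (M : ℝ) ≤ n := by exact_mod_cast hm
  refine (trunc_eq n (le_trans ?_ hN.le) (by linarith)).symm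
  gcongr

end Truncation

section TruncationMap

variable {X : Type*} [TopologicalSpace X]

/-- The truncations of `p / t` as compactly supported functions. -/
noncomputable def truncMap (p t q : C(X, ℝ))
    (hqc : ∀ k : ℕ, 1 ≤ k → IsCompact {x : X | q x ≤ (k : ℝ)}) (n : ℕ) : C_c(X, ℝ) where
  toFun x := trunc n (p x) (t x) (q x)
  continuous_toFun := by
    unfold trunc
    refine Continuous.mul (Continuous.div (by fun_prop) (by fun_prop) fun x => ?_) (by fun_prop)
    exact (max_pos n (t x)).ne'
  hasCompactSupport' := by
    have hK := hqc (n + 2) (by omega)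
    refine hK.of_isClosed_subset isClosed_closure (closure_minimal (fun x hx => ?_)
      (isClosed_le q.continuous continuous_const))
    by_contra h
    simp only [Set.mem_ofPred_eq, not_le] at h
    push_cast at h
    apply hx
    have : min 1 ((n : ℝ) + 2 - q x) ≤ 0 := (min_le_right _ _).trans (by linarith)
    simp [trunc, max_eq_left this]

@[simp] lemma truncMap_apply (p t q : C(X, ℝ))
    (hqc : ∀ k : ℕ, 1 ≤ k → IsCompact {x : X | q x ≤ (k : ℝ)}) (n : ℕ) (x : X) :
    truncMap p t q hqc n x = trunc n (p x) (t x) (q x) := rfl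

end TruncationMap

/-! ### The representing measure -/

section Measure

variable {X : Type*} [TopologicalSpace X] [MeasurableSpace X] [BorelSpace X]
  {μ : Measure X} [IsFiniteMeasureOnCompacts μ] {p t q : C(X, ℝ)}
  (hqc : ∀ k : ℕ, 1 ≤ k → IsCompact {x : X | q x ≤ (k : ℝ)})

lemma lintegral_truncMap (hp : ∀ x, 0 ≤ p x) (n : ℕ) :
    ∫⁻ x, ENNReal.ofReal (trunc n (p x) (t x) (q x)) ∂μ
      = ENNReal.ofReal (∫ x, truncMap p t q hqc n x ∂μ) := by
  have hi : Integrable (truncMap p t q hqc n) μ :=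
    (truncMap p t q hqc n).continuous.integrable_of_hasCompactSupport
      (truncMap p t q hqc n).hasCompactSupport
  rw [ofReal_integral_eq_lintegral_ofReal hi (ae_of_all _ fun x => trunc_nonneg n (hp x))]
  rfl

lemma measurable_ofReal_trunc {p t q : C(X, ℝ)}
    (hqc : ∀ k : ℕ, 1 ≤ k → IsCompact {x : X | q x ≤ (k : ℝ)}) (n : ℕ) :
    Measurable fun x => ENNReal.ofReal (trunc n (p x) (t x) (q x)) :=
  ((truncMap p t q hqc n).continuous.measurable).ennreal_ofReal

/-- If the truncations of `1 / t` have bounded integrals, the zero set of `t` is null, because the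
truncations increase to `∞` there. -/
lemma measure_zeros {C : ℝ} (h : ∀ n, ∫ x, truncMap 1 t q hqc n x ∂μ ≤ C) :
    μ {x | t x = 0} = 0 := by
  have hm := measurable_ofReal_trunc (p := 1) (t := t) hqc
  have hfin : ∫⁻ x, ⨆ n, ENNReal.ofReal (trunc n ((1 : C(X, ℝ)) x) (t x) (q x)) ∂μ ≠ ⊤ := by
    rw [lintegral_iSup hm fun m n hmn x =>
      ENNReal.ofReal_le_ofReal (trunc_mono (by simp) hmn)]
    refine ne_top_of_le_ne_top (ENNReal.ofReal_ne_top (r := C)) (iSup_le fun n => ?_)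
    rw [lintegral_truncMap hqc (fun x => by simp) n]
    exact ENNReal.ofReal_le_ofReal (h n)
  refine measure_mono_null (fun x hx => ?_) (ae_iff.mp (ae_lt_top (.iSup hm) hfin))
  simp only [Set.mem_ofPred_eq] at hx
  simp only [Set.mem_ofPred_eq, not_lt, top_le_iff, hx, ContinuousMap.one_apply]
  refine ENNReal.eq_top_of_forall_nnreal_le fun r => ?_
  obtain ⟨N, hN⟩ := exists_nat_ge (max (r : ℝ) (q x))
  refine le_iSup_of_le N ?_
  rw [trunc_zero N (by linarith [le_max_right (r : ℝ) (q x)]), ← ENNReal.ofReal_coe_nnreal]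
  exact ENNReal.ofReal_le_ofReal (by linarith [le_max_left (r : ℝ) (q x)])

lemma integral_of_tendsto (hp : ∀ x, 0 ≤ p x) (ht : ∀ x, 0 ≤ t x) (h0 : μ {x | t x = 0} = 0)
    {l : ℝ} (hl : Tendsto (fun n => ∫ x, truncMap p t q hqc n x ∂μ) atTop (𝓝 l)) :
    Integrable (fun x => p x / t x) μ ∧ l = ∫ x, p x / t x ∂μ := by
  have hl0 : 0 ≤ l := ge_of_tendsto' hl fun n =>
    integral_nonneg fun x => trunc_nonneg n (hp x)
  have hnn : 0 ≤ᵐ[μ] fun x => p x / t x := ae_of_all _ fun x => div_nonneg (hp x) (ht x)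
  have hmeas : AEStronglyMeasurable (fun x => p x / t x) μ :=
    (p.continuous.measurable.div t.continuous.measurable).aestronglyMeasurable
  have h1 := lintegral_tendsto_of_tendsto_of_monotone (μ := μ)
    (F := fun x => ENNReal.ofReal (p x / t x))
    (fun n => (measurable_ofReal_trunc (p := p) (t := t) hqc n).aemeasurable)
    (ae_of_all _ fun x m n hmn => ENNReal.ofReal_le_ofReal (trunc_mono (hp x) hmn))
    (by
      have h0' : ∀ᵐ x ∂μ, t x ≠ 0 := by simpa [ae_iff] using h0
      filter_upwards [h0'] with x hx
      exact ENNReal.tendsto_ofReal (trunc_tendsto ((ht x).lt_of_ne' hx)))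
  simp_rw [lintegral_truncMap hqc hp] at h1
  have h2 := tendsto_nhds_unique h1 (ENNReal.tendsto_ofReal hl)
  refine ⟨⟨hmeas, ?_⟩, ?_⟩
  · rw [hasFiniteIntegral_iff_ofReal hnn, h2]
    exact ENNReal.ofReal_lt_top
  · rw [integral_eq_lintegral_of_nonneg_ae hnn hmeas, h2, ENNReal.toReal_ofReal hl0]

end Measure

end RationalHaviland

open RationalHaviland in
/-- **Rational Haviland's Theorem.** -/
theorem rational_haviland
    {A : Type*} [CommRing A] [Algebra ℝ A] (D : Submonoid A)
    {X : Type*} [TopologicalSpace X] [T2Space X] [Nonempty X]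
    [MeasurableSpace X] [BorelSpace X]
    (φ : A →ₐ[ℝ] C(X, ℝ))
    (q : A) (hq0 : ∀ x, 0 ≤ φ q x)
    (hqc : ∀ k : ℕ, 1 ≤ k → IsCompact {x : X | φ q x ≤ (k : ℝ)})
    (hZ : ∀ d ∈ D, interior {x : X | φ d x = 0} = ∅)
    (hσ : ∀ O : Set X, IsOpen O →
      ∃ K : ℕ → Set X, (∀ i, IsCompact (K i)) ∧ O = ⋃ i, K i)
    (L : Localization D →ₗ[ℝ] ℝ)
    (hL : ∀ (a : A) (d : D), (∀ x, 0 ≤ φ a x * φ (d : A) x) →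
      0 ≤ L (Localization.mk a d)) :
    ∃ μ : Measure X,
      (∀ d ∈ D, μ {x | φ d x = 0} = 0) ∧
      ∀ (a : A) (d : D),
        Integrable (fun x => φ a x / φ (d : A) x) μ ∧
        L (Localization.mk a d) = ∫ x, φ a x / φ (d : A) x ∂μ := by
  have : WeaklyLocallyCompactSpace X := ⟨fun x => by
    obtain ⟨k, hk⟩ := exists_nat_gt (φ q x)
    have hk' : φ q x < ((k + 1 : ℕ) : ℝ) := by push_cast; linarith
    refine ⟨_, hqc (k + 1) (by omega), ?_⟩
    exact mem_of_superset ((isOpen_lt (φ q).continuous continuous_const).mem_nhds hk')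
      (Set.ofPred_subset_ofPred.mpr fun _ hy => le_of_lt hy)⟩
  obtain ⟨Λ, hΛ⟩ := exists_positive_extension D φ L hL
  set μ := RealRMK.rieszMeasure Λ with hμ
  have hint : ∀ f : C_c(X, ℝ), ∫ x, f x ∂μ = Λ f := RealRMK.integral_rieszMeasure Λ
  -- The truncations of `p / d²` lie below it, so their integrals are at most `L (p / d²)`.
  have hupper : ∀ (p : A) (d : D), (∀ x, 0 ≤ φ p x) → ∀ n,
      ∫ x, truncMap (φ p) (φ ((d : A) ^ 2)) (φ q) hqc n x ∂μ ≤ L (Localization.mk p (d ^ 2)) := by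
    intro p d hp n
    have h := hΛ p (d ^ 2) (-truncMap (φ p) (φ ((d : A) ^ 2)) (φ q) hqc n) fun x => by
      have h1 := trunc_mul_le (t := φ ((d : A) ^ 2) x) (q := φ q x) n (hp x)
      have h2 := mul_nonneg (sub_nonneg.mpr h1) (sq_nonneg (φ (d : A) x))
      simp at h2 ⊢
      nlinarith
    rw [hint]
    rw [map_neg] at h
    linarith
  have hzero : ∀ d : D, μ {x | φ ((d : A) ^ 2) x = 0} = 0 := fun d =>
    measure_zeros hqc fun n => by simpa using hupper 1 d (by simp) n
  have hsq : ∀ (p : A) (d : D), (∀ x, 0 ≤ φ p x) →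
      Integrable (fun x => φ p x / φ ((d : A) ^ 2) x) μ ∧
        L (Localization.mk p (d ^ 2)) = ∫ x, φ p x / φ ((d : A) ^ 2) x ∂μ := by
    intro p d hp
    have ht : ∀ x, 0 ≤ φ ((d : A) ^ 2) x := fun x => by simpa using sq_nonneg (φ (d : A) x)
    refine integral_of_tendsto hqc hp ht (hzero d) ?_
    set c := L (Localization.mk (p + p * q * (d : A) ^ 2) (d ^ 4)) with hc
    have hlower : ∀ n : ℕ, L (Localization.mk p (d ^ 2)) - 1 / ((n : ℝ) + 1) * c ≤
        ∫ x, truncMap (φ p) (φ ((d : A) ^ 2)) (φ q) hqc n x ∂μ := by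
      intro n
      have h := hΛ ((1 / ((n : ℝ) + 1)) • (p + p * q * (d : A) ^ 2) + -(p * (d : A) ^ 2)) (d ^ 4)
        (truncMap (φ p) (φ ((d : A) ^ 2)) (φ q) hqc n) fun x => by
          have h1 := trunc_error n (hp x) (ht x) (hq0 x)
          have h2 := mul_nonneg h1 (pow_nonneg (ht x) 2)
          simp only [map_add, map_neg, map_smul, map_mul, map_pow, ContinuousMap.add_apply,
            ContinuousMap.neg_apply, ContinuousMap.smul_apply, ContinuousMap.mul_apply,
            ContinuousMap.pow_apply, smul_eq_mul, truncMap_apply, SubmonoidClass.coe_pow] at h2 ⊢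
          refine h2.trans_eq ?_
          ring
      have hfrac : Localization.mk (p * (d : A) ^ 2) (d ^ 4) = Localization.mk p (d ^ 2) := by
        rw [Localization.mk_eq_mk_iff, Localization.r_iff_exists]
        exact ⟨1, by simp; ring⟩
      rw [← Localization.add_mk_self, ← Localization.neg_mk, ← Localization.smul_mk, hfrac,
        map_add, map_neg, map_smul, smul_eq_mul, ← hc] at h
      rw [hint]
      linarith
    refine tendsto_of_tendsto_of_tendsto_of_le_of_le ?_ tendsto_const_nhds hlower (hupper p d hp)
    simpa using tendsto_const_nhds.sub
      ((tendsto_one_div_add_atTop_nhds_zero_nat (𝕜 := ℝ)).mul_const c)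
  refine ⟨μ, fun d hd => by simpa using hzero ⟨d, hd⟩, fun a d => ?_⟩
  obtain ⟨hi1, he1⟩ := hsq ((a * d + 1) ^ 2) d fun x => by simpa using sq_nonneg _
  obtain ⟨hi2, he2⟩ := hsq ((a * d - 1) ^ 2) d fun x => by simpa using sq_nonneg _
  have hfun : (fun x => φ a x / φ (d : A) x) = fun x => (1 / 4 : ℝ) *
      (φ ((a * d + 1) ^ 2) x / φ ((d : A) ^ 2) x - φ ((a * d - 1) ^ 2) x / φ ((d : A) ^ 2) x) := by
    funext x
    simp only [map_add, map_sub, map_mul, map_pow, map_one, ContinuousMap.add_apply,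
      ContinuousMap.sub_apply, ContinuousMap.mul_apply, ContinuousMap.pow_apply,
      ContinuousMap.one_apply]
    rcases eq_or_ne (φ (d : A) x) 0 with h | h
    · simp [h]
    · field_simp
      ring
  have hmk : Localization.mk a d = (1 / 4 : ℝ) • (Localization.mk ((a * d + 1) ^ 2) (d ^ 2) +
      -Localization.mk ((a * d - 1) ^ 2) (d ^ 2)) := by
    have h4 : (a * d + 1) ^ 2 + -(a * d - 1) ^ 2 = (4 : ℝ) • (a * (d : A)) := by
      rw [Algebra.smul_def, map_ofNat]
      ring
    rw [Localization.neg_mk, Localization.add_mk_self, h4, Localization.smul_mk, smul_smul]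
    norm_num
    rw [Localization.mk_eq_mk_iff, Localization.r_iff_exists]
    exact ⟨1, by simp; ring⟩
  rw [hfun]
  refine ⟨(hi1.sub hi2).const_mul _, ?_⟩
  rw [integral_const_mul, integral_sub hi1 hi2, ← he1, ← he2, hmk, map_smul, map_add, map_neg,
    smul_eq_mul]
  ring
end
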